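/- For every ε > 0 there exists δ ∈ (0,1) such that for every ε′ > 0 there exists N with the following property: for all n ≥ N, all k dividing n with k ≥ (2+ε)·log₂ n, and all m, if S is a simple graph on {1,…,n} whose connected components are exactly m paths each on at least 2 vertices and its collection of paths is δ-normal (with respect to k), then N(S) ≤ (3+ε′)·m!·2^m. -/

import Mathlib

/-- A ROD (rooted, ordered, directed) `k`-cycle factor on `{1,…,n}`: a sequence of
`n/k` directed cycles, each on exactly `k` vertices and rooted at its first entry, whose
vertex sets partition `{1,…,n}`.  Each rooted directed cycle is encoded by the list of
its `k` vertices starting from the root and following the orientation. -/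
def RODFactor (n k : ℕ) : Type :=
  {f : Fin (n / k) → Fin k → Fin n //
    Function.Bijective fun p : Fin (n / k) × Fin k => f p.1 p.2}

/-- The underlying undirected graph of the ROD factor `F` contains every edge of `S`. -/
def RODContains {n k : ℕ} (F : RODFactor n k) (S : SimpleGraph (Fin n)) : Prop :=
  ∀ u v : Fin n, S.Adj u v → ∃ (c : Fin (n / k)) (i : Fin k),
    (F.1 c i = u ∧ F.1 c ⟨((i : ℕ) + 1) % k, Nat.mod_lt _ i.pos⟩ = v) ∨
    (F.1 c i = v ∧ F.1 c ⟨((i : ℕ) + 1) % k, Nat.mod_lt _ i.pos⟩ = u)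

/-- `N(S)`: the number of ROD `k`-cycle factors containing the graph `S`. -/
noncomputable def NS {n : ℕ} (k : ℕ) (S : SimpleGraph (Fin n)) : ℕ :=
  Nat.card {F : RODFactor n k // RODContains F S}

/-- The connected component `c` of `G` is a path on at least 2 vertices. -/
def IsPathComponent {V : Type*} (G : SimpleGraph V) (c : G.ConnectedComponent) : Prop :=
  ∃ (ℓ : ℕ) (v : Fin ℓ → V), 2 ≤ ℓ ∧ Function.Injective v ∧ Set.range v = c.supp ∧
    ∀ a b : Fin ℓ, G.Adj (v a) (v b) ↔ ((a : ℕ) + 1 = b ∨ (b : ℕ) + 1 = a)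

/-- `G` has exactly `m` connected components, each a path on at least 2 vertices. -/
def PathsGraph {n : ℕ} (G : SimpleGraph (Fin n)) (m : ℕ) : Prop :=
  Nat.card G.ConnectedComponent = m ∧ ∀ c : G.ConnectedComponent, IsPathComponent G c

/-- The collection of the `m` path components of `G` is `δ`-normal with respect to `k`:
with `p_ℓ` the fraction of the `m` paths having exactly `ℓ` vertices,
`M = (1/8)·log log k`, `ε_ℓ(δ) = (ℓ⁴(2−δ)^ℓ (log k)^{1/8})⁻¹` and
`γ_ℓ(δ) = (ℓ⁴(2−δ)^ℓ)⁻¹`, we require `p₁ = 0`, `|p_ℓ − 2^{1−ℓ}| ≤ ε_ℓ(δ)` for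
`2 ≤ ℓ ≤ M`, and `p_ℓ ≤ γ_ℓ(δ)` for `ℓ ≥ M`. -/
def GDeltaNormal (k : ℕ) (δ : ℝ) {n : ℕ} (G : SimpleGraph (Fin n)) (m : ℕ) : Prop :=
  let p : ℕ → ℝ := fun ℓ =>
    (Nat.card {c : G.ConnectedComponent // c.supp.ncard = ℓ} : ℝ) / m
  p 1 = 0 ∧
  (∀ ℓ : ℕ, 2 ≤ ℓ → (ℓ : ℝ) ≤ Real.log (Real.log k) / 8 →
    |p ℓ - (2 : ℝ) ^ (1 - (ℓ : ℤ))| ≤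
      ((ℓ : ℝ) ^ 4 * (2 - δ) ^ ℓ * Real.log k ^ ((1 : ℝ) / 8))⁻¹) ∧
  (∀ ℓ : ℕ, Real.log (Real.log k) / 8 ≤ (ℓ : ℝ) →
    p ℓ ≤ ((ℓ : ℝ) ^ 4 * (2 - δ) ^ ℓ)⁻¹)

/-!
Reading a cycle factor along its rooted cycles turns the paths of `S` into a tiling of `n / k`
directed `k`-cycles. A tiling of one rooted cycle by paths is a closed walk in the graph of residual
lengths, so with `x i` marking the paths on `i + 1` vertices the tilings of a `k`-cycle are counted
by `trace (residualMatrix x ^ k)`. Hence `N(S)` is at most `2 ^ m * ∏ i, (μ i)!` times the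
coefficient of `x ^ μ` in `trace (residualMatrix x ^ k) ^ (n / k)`, where `μ i` is the number of
paths on `i + 1` vertices. For a single `n`-cycle in place of `n / k` cycles, Newton's identities
evaluate this exactly as `2 ^ m * (n / m) * m!`, and `n / m`, the mean number of vertices of a path,
tends to `∑ ℓ, ℓ * 2 ^ (1 - ℓ) = 3`.

The two coefficients are compared by Fourier inversion on a torus of moduli `p i = μ i / m`. The
traces are power sums of the reciprocal roots of `1 - ∑ i, x i * z ^ (i + 1)`. Since `p` is close to
a geometric distribution, at each point of the torus either all reciprocal roots are less than `1`
by a constant factor, and both power sums are negligible, or there is one dominant reciprocal root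
`l₁`, in which case `trace ^ (n / k)` and the trace of the `n`-th power are both `l₁ ^ n` up to a
relative error of order `n * L * ρ ^ k`, with `L` the number of vertices of the longest path. This
is small because `k ≥ (2 + ε) * logb 2 n`, any `ρ > 1 / 2` being admissible. The decay of `|l₁|` in
the phases is Gaussian, so the sum over the torus of `|l₁| ^ n` loses only a factor polynomial in
`n` against Stirling's approximation of the coefficient, and `n ^ 2 * ρ ^ k` absorbs it.
-/

open Finset

/-! ### Path tilings of a directed cycle -/

section ClosedWalks

variable {S A : Type*} [Fintype S] [DecidableEq S] [CommSemiring A] (M : Matrix S S A)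

theorem sum_walk_prod_mul (k : ℕ) (g : S → S → A) :
    ∑ r : Fin (k + 1) → S, (∏ i : Fin k, M (r i.castSucc) (r i.succ)) * g (r 0) (r (Fin.last k)) =
      ∑ a, ∑ b, (M ^ k) a b * g a b := by
  induction k generalizing g with
  | zero =>
    simp only [univ_eq_empty, prod_empty, one_mul, pow_zero, Matrix.one_apply, ite_mul, zero_mul,
      sum_ite_eq, mem_univ, if_true]
    exact Fintype.sum_equiv (Equiv.funUnique (Fin 1) S) _ _ fun _ ↦ rfl
  | succ k ih =>
    rw [← (Fin.consEquiv fun _ : Fin (k + 2) ↦ S).sum_comp, Fintype.sum_prod_type]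
    simp only [Fin.consEquiv_apply, Fin.prod_univ_succ, Fin.castSucc_zero, Fin.cons_zero,
      Fin.cons_succ, ← Fin.succ_castSucc, ← Fin.succ_last]
    refine sum_congr rfl fun a _ ↦ ?_
    calc _ = ∑ r : Fin (k + 1) → S, (∏ i : Fin k, M (r i.castSucc) (r i.succ)) *
            (M a (r 0) * g a (r (Fin.last k))) := sum_congr rfl fun r _ ↦ by ring
      _ = ∑ b, ∑ c, M a c * (M ^ k) c b * g a b := by
        rw [ih fun c b ↦ M a c * g a b, sum_comm]
        exact sum_congr rfl fun b _ ↦ sum_congr rfl fun c _ ↦ by ring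
      _ = _ := by simp only [pow_succ', Matrix.mul_apply, sum_mul]

theorem trace_pow_eq_sum_closedWalks {k : ℕ} (hk : 0 < k) :
    (M ^ k).trace = ∑ r : Fin k → S, ∏ i, M (r i) (r (finRotate k i)) := by
  obtain ⟨k, rfl⟩ := Nat.exists_eq_succ_of_ne_zero hk.ne'
  simp only [Nat.succ_eq_add_one, pow_succ, Matrix.trace, Matrix.diag_apply, Matrix.mul_apply,
    ← sum_walk_prod_mul M k fun a b ↦ M b a]
  refine sum_congr rfl fun r _ ↦ ?_
  simp only [Fin.prod_univ_castSucc, finRotate_apply, Fin.coeSucc_eq_succ, Fin.last_add_one]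

theorem trace_pow_pow_eq_sum (q : ℕ) {k : ℕ} (hk : 0 < k) :
    (M ^ k).trace ^ q = ∑ R : Fin q × Fin k → S,
      ∏ p, M (R p) (R ((Equiv.refl (Fin q)).prodCongr (finRotate k) p)) := by
  rw [trace_pow_eq_sum_closedWalks M hk, Fintype.sum_pow, ← (Equiv.curry _ _ _).symm.sum_comp]
  exact sum_congr rfl fun R _ ↦ (Fintype.prod_prod_type fun p ↦
    M (R p.1 p.2) (R p.1 (finRotate k p.2))).symm

end ClosedWalks

section ResidualMatrix

variable {A : Type*} [CommSemiring A] {L : ℕ}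

/-- The transfer matrix of residual lengths: a vertex with `a` vertices of its path still to come
is followed by one with `a - 1` of them, or, if `a = 0`, by the first vertex of a new path on
`b + 1` vertices, which has weight `x b`. -/
def residualMatrix (x : Fin L → A) : Matrix (Fin L) (Fin L) A :=
  Matrix.of fun a b ↦ if (a : ℕ) = 0 then x b else if (b : ℕ) + 1 = a then 1 else 0

/-- The generating polynomial of the rooted directed cycles on `k` vertices tiled by paths with at
most `L` vertices; the exponent of `X i` is the number of paths with `i + 1` vertices. -/
noncomputable def closedWalkPoly (L k : ℕ) : MvPolynomial (Fin L) ℕ :=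
  (residualMatrix (MvPolynomial.X : Fin L → MvPolynomial (Fin L) ℕ) ^ k).trace

variable {P : Type*} [Fintype P]

/-- A function assigning to each position the residual length of its path, when the positions,
with successor permutation `s`, are tiled by `μ i` paths on `i + 1` vertices for each `i`. -/
def IsResidualPattern (s : Equiv.Perm P) (μ : Fin L → ℕ) (R : P → Fin L) : Prop :=
  (∀ p, (R p : ℕ) = 0 ∨ (R (s p) : ℕ) + 1 = R p) ∧
    ∀ j, Nat.card {p // (R p : ℕ) = 0 ∧ R (s p) = j} = μ j

theorem IsResidualPattern.prod_residualMatrix_X {s : Equiv.Perm P} {μ : Fin L →₀ ℕ}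
    {R : P → Fin L} (hR : IsResidualPattern s μ R) :
    ∏ p, residualMatrix (MvPolynomial.X : Fin L → MvPolynomial (Fin L) ℕ) (R p) (R (s p)) =
      MvPolynomial.monomial μ 1 := by
  have entry (p : P) :
      residualMatrix (MvPolynomial.X : Fin L → MvPolynomial (Fin L) ℕ) (R p) (R (s p)) =
        ∏ j, if (R p : ℕ) = 0 ∧ R (s p) = j then MvPolynomial.X j else 1 := by
    by_cases h0 : (R p : ℕ) = 0
    · simp [residualMatrix, h0]
    · simp [residualMatrix, h0, (hR.1 p).resolve_left h0]
  have count (j : Fin L) : #{p | (R p : ℕ) = 0 ∧ R (s p) = j} = μ j := by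
    rw [← hR.2 j, Nat.card_eq_fintype_card, Fintype.card_subtype]
  simp only [entry]
  rw [prod_comm, MvPolynomial.monomial_eq, Finsupp.prod_fintype _ _ fun _ ↦ pow_zero _]
  simp [prod_ite, count]

theorem card_isResidualPattern_le_coeff [DecidableEq P] (s : Equiv.Perm P) (μ : Fin L →₀ ℕ) :
    Nat.card {R // IsResidualPattern s μ R} ≤ MvPolynomial.coeff μ
      (∑ R : P → Fin L, ∏ p, residualMatrix MvPolynomial.X (R p) (R (s p))) := by
  classical
  rw [Nat.card_eq_fintype_card, Fintype.card_subtype, card_filter, MvPolynomial.coeff_sum]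
  refine sum_le_sum fun R _ ↦ ?_
  split_ifs with hR
  · simp [hR.prod_residualMatrix_X]
  · exact Nat.zero_le _

end ResidualMatrix

section LengthProfile

variable {ι : Type*} {L : ℕ}

/-- The number of indices `c` with `len c = i + 1`, as a function of `i < L`. For a collection of
paths indexed by `ι` this records how many of them have `i + 1` vertices. -/
noncomputable def lengthProfile (L : ℕ) (len : ι → ℕ) : Fin L →₀ ℕ :=
  Finsupp.equivFunOnFinite.symm fun i ↦ Nat.card {c // len c = i + 1}

theorem lengthProfile_apply (len : ι → ℕ) (i : Fin L) :
    lengthProfile L len i = Nat.card {c // len c = i + 1} := rfl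

end LengthProfile

section Placement

variable {ι P : Type*} {L : ℕ} {len : ι → ℕ} {s : Equiv.Perm P}

/-- A placement of disjoint paths, the path `c` having `len c` vertices, onto all of `P` that sends
each step of each path forward along `s`. -/
def IsForward (s : Equiv.Perm P) (g : (Σ c, Fin (len c)) ≃ P) : Prop :=
  ∀ c (a b : Fin (len c)), (a : ℕ) + 1 = b → g ⟨c, b⟩ = s (g ⟨c, a⟩)

/-- A placement as in `IsForward`, except that each step may go forward or backward along `s`. -/
def IsUndirected (s : Equiv.Perm P) (g : (Σ c, Fin (len c)) ≃ P) : Prop :=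
  ∀ c (a b : Fin (len c)), (a : ℕ) + 1 = b →
    g ⟨c, b⟩ = s (g ⟨c, a⟩) ∨ g ⟨c, a⟩ = s (g ⟨c, b⟩)

theorem forward_of_forward_zero {ℓ : ℕ} {f : ℕ → P} (hf : Set.InjOn f (Set.Iio ℓ))
    (hstep : ∀ j, j + 1 < ℓ → f (j + 1) = s (f j) ∨ f j = s (f (j + 1)))
    (h0 : f 1 = s (f 0)) : ∀ j, j + 1 < ℓ → f (j + 1) = s (f j)
  | 0, _ => h0
  | j + 1, hj => by
    refine (hstep (j + 1) hj).resolve_right fun hback ↦ ?_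
    have hprev := forward_of_forward_zero hf hstep h0 j (by lia)
    have hjj : f j = f (j + 2) := s.injective (hprev.symm.trans hback)
    have := hf (show j < ℓ by lia) (show j + 2 < ℓ by lia) hjj
    lia

/-- Injectivity rules out a change of direction inside a path. -/
theorem IsUndirected.forward_or_backward {g : (Σ c, Fin (len c)) ≃ P} (hg : IsUndirected s g)
    (c : ι) : (∀ a b : Fin (len c), (a : ℕ) + 1 = b → g ⟨c, b⟩ = s (g ⟨c, a⟩)) ∨
      ∀ a b : Fin (len c), (a : ℕ) + 1 = b → g ⟨c, a⟩ = s (g ⟨c, b⟩) := by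
  rcases lt_or_ge 1 (len c) with hlen | hlen
  swap
  · exact Or.inl fun a b hab ↦ by lia
  let f (j : ℕ) : P := g ⟨c, ⟨min j (len c - 1), by lia⟩⟩
  have f_val (a : Fin (len c)) : f a = g ⟨c, a⟩ := by
    simp only [f, show min (a : ℕ) (len c - 1) = a by lia]
  have f_step (a b : Fin (len c)) (hab : (a : ℕ) + 1 = b) : f (a + 1) = g ⟨c, b⟩ := by
    rw [hab, f_val]
  have hf : Set.InjOn f (Set.Iio (len c)) := by
    intro i (hi : i < len c) j (hj : j < len c) hij
    have := g.injective ((f_val ⟨i, hi⟩).symm.trans (hij.trans (f_val ⟨j, hj⟩)))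
    simpa using this
  have hstep (j : ℕ) (hj : j + 1 < len c) :
      f (j + 1) = s (f j) ∨ f j = s (f (j + 1)) := by
    rw [f_step ⟨j, by lia⟩ ⟨j + 1, hj⟩ rfl, f_val ⟨j, by lia⟩]
    exact hg c _ _ rfl
  have hstep_symm (j : ℕ) (hj : j + 1 < len c) :
      f (j + 1) = s.symm (f j) ∨ f j = s.symm (f (j + 1)) := by
    rw [Equiv.eq_symm_apply, Equiv.eq_symm_apply]
    exact (hstep j hj).symm.imp Eq.symm Eq.symm
  rcases hstep 0 hlen with h0 | h0
  · refine Or.inl fun a b hab ↦ ?_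
    rw [← f_val a, ← f_step a b hab]
    exact forward_of_forward_zero hf hstep h0 a (by lia)
  · refine Or.inr fun a b hab ↦ ?_
    rw [← f_val a, ← f_step a b hab]
    refine s.symm_apply_eq.1 (forward_of_forward_zero hf hstep_symm ?_ a (by lia)).symm
    exact (s.symm_apply_eq.2 h0).symm

/-- Reverse the paths selected by `b`. -/
def reversePaths (len : ι → ℕ) (b : ι → Bool) : Equiv.Perm (Σ c, Fin (len c)) :=
  Equiv.sigmaCongrRight fun c ↦ if b c then Fin.revPerm else Equiv.refl _

theorem IsUndirected.exists_isForward_reversePaths {g : (Σ c, Fin (len c)) ≃ P}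
    (hg : IsUndirected s g) : ∃ b, IsForward s ((reversePaths len b).trans g) := by
  have hflip (c : ι) : ∃ t : Bool, ∀ a b : Fin (len c), (a : ℕ) + 1 = b →
      g ⟨c, (if t then Fin.revPerm else Equiv.refl _) b⟩ =
        s (g ⟨c, (if t then Fin.revPerm else Equiv.refl _) a⟩) := by
    rcases hg.forward_or_backward c with hc | hc
    · exact ⟨false, hc⟩
    · exact ⟨true, fun a b hab ↦ hc b.rev a.rev (by simp only [Fin.val_rev]; lia)⟩
  choose b hb using hflip
  exact ⟨b, hb⟩

theorem card_isUndirected_le [Fintype ι] [Finite P] :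
    Nat.card {g : (Σ c, Fin (len c)) ≃ P // IsUndirected s g} ≤
      2 ^ Fintype.card ι * Nat.card {g : (Σ c, Fin (len c)) ≃ P // IsForward s g} := by
  choose b hb using fun g : {g : (Σ c, Fin (len c)) ≃ P // IsUndirected s g} ↦
    g.2.exists_isForward_reversePaths
  have hinj : Function.Injective fun g ↦
      ((b g, ⟨_, hb g⟩) : (ι → Bool) × {g : (Σ c, Fin (len c)) ≃ P // IsForward s g}) := by
    intro g h hgh
    simp only [Prod.mk.injEq, Subtype.mk.injEq] at hgh
    obtain ⟨hbool, htrans⟩ := hgh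
    rw [hbool] at htrans
    exact Subtype.ext (Equiv.ext fun p ↦ by
      simpa using congr($htrans ((reversePaths len (b h)).symm p)))
  refine (Nat.card_le_card_of_injective _ hinj).trans_eq ?_
  simp only [Nat.card_prod, Nat.card_fun, Nat.card_eq_fintype_card, Fintype.card_bool]

/-- The number of vertices following the position `p` on its path. -/
def residualLength (hL : ∀ c, len c ≤ L) (g : (Σ c, Fin (len c)) ≃ P) (p : P) : Fin L :=
  Fin.castLE (hL (g.symm p).1) (g.symm p).2.rev

theorem residualLength_apply (hL : ∀ c, len c ≤ L) (g : (Σ c, Fin (len c)) ≃ P) (c : ι)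
    (a : Fin (len c)) : (residualLength hL g (g ⟨c, a⟩) : ℕ) = len c - (a + 1) := by
  rw [residualLength, Fin.val_castLE, Equiv.symm_apply_apply, Fin.val_rev]

theorem IsForward.residualLength_step {g : (Σ c, Fin (len c)) ≃ P} (hg : IsForward s g)
    (hL : ∀ c, len c ≤ L) (p : P) :
    (residualLength hL g p : ℕ) = 0 ∨
      (residualLength hL g (s p) : ℕ) + 1 = residualLength hL g p := by
  obtain ⟨⟨c, a⟩, rfl⟩ := g.surjective p
  by_cases ha : (a : ℕ) + 1 < len c
  · right
    rw [← hg c a ⟨a + 1, ha⟩ rfl, residualLength_apply, residualLength_apply]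
    lia
  · left
    rw [residualLength_apply]
    lia

theorem IsForward.residualLength_eq_zero_iff [∀ c, NeZero (len c)] {g : (Σ c, Fin (len c)) ≃ P}
    (hg : IsForward s g) (hL : ∀ c, len c ≤ L) (p : P) :
    (residualLength hL g p : ℕ) = 0 ↔ ∃ c, s p = g ⟨c, 0⟩ := by
  constructor
  · intro hp
    obtain ⟨⟨c, a⟩, ha⟩ := g.surjective (s p)
    rcases eq_or_ne a 0 with rfl | ha0
    · exact ⟨c, ha.symm⟩
    have ha0' : (a : ℕ) ≠ 0 := mt Fin.val_eq_zero_iff.1 ha0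
    have hprev := hg c ⟨a - 1, by lia⟩ a (by simp only; lia)
    rw [← s.injective (hprev.symm.trans ha), residualLength_apply] at hp
    simp only at hp
    lia
  · rintro ⟨c, hc⟩
    obtain ⟨⟨d, a⟩, rfl⟩ := g.surjective p
    rw [residualLength_apply]
    by_contra hlast
    have hnext := hg d a ⟨a + 1, by lia⟩ rfl
    obtain ⟨rfl, h0⟩ := Sigma.mk.inj (g.injective (hnext.trans hc))
    simpa using congrArg Fin.val (eq_of_heq h0)

theorem IsForward.residualLength_eq_zero_and_iff [∀ c, NeZero (len c)] {g : (Σ c, Fin (len c)) ≃ P}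
    (hg : IsForward s g) (hL : ∀ c, len c ≤ L) (j : Fin L) (p : P) :
    (residualLength hL g p : ℕ) = 0 ∧ residualLength hL g (s p) = j ↔
      ∃ c, len c = j + 1 ∧ s p = g ⟨c, 0⟩ := by
  have hstart (c : ι) (hc : s p = g ⟨c, 0⟩) : residualLength hL g (s p) = j ↔ len c = j + 1 := by
    have := NeZero.pos (len c)
    rw [Fin.ext_iff, hc, residualLength_apply, Fin.val_zero]
    lia
  rw [hg.residualLength_eq_zero_iff hL]
  constructor
  · rintro ⟨⟨c, hc⟩, hj⟩
    exact ⟨c, (hstart c hc).1 hj, hc⟩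
  · rintro ⟨c, hlen, hc⟩
    exact ⟨⟨c, hc⟩, (hstart c hc).2 hlen⟩

theorem IsForward.isResidualPattern [∀ c, NeZero (len c)] {g : (Σ c, Fin (len c)) ≃ P}
    (hg : IsForward s g) (hL : ∀ c, len c ≤ L) :
    IsResidualPattern s (lengthProfile L len) (residualLength hL g) := by
  refine ⟨hg.residualLength_step hL, fun j ↦ ?_⟩
  simp only [hg.residualLength_eq_zero_and_iff hL, lengthProfile_apply]
  refine (Nat.card_congr (Equiv.ofBijective
    (fun c : {c // len c = j + 1} ↦ ⟨s.symm (g ⟨c, 0⟩), c, c.2, by simp⟩) ⟨?_, ?_⟩)).symm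
  · intro c d hcd
    simp only [Subtype.mk.injEq, EmbeddingLike.apply_eq_iff_eq, Sigma.mk.injEq] at hcd
    exact Subtype.ext hcd.1
  · rintro ⟨p, c, hlen, hc⟩
    exact ⟨⟨c, hlen⟩, Subtype.ext (s.symm_apply_eq.2 hc.symm)⟩

theorem IsForward.ext [∀ c, NeZero (len c)] {g h : (Σ c, Fin (len c)) ≃ P} (hg : IsForward s g)
    (hh : IsForward s h) (hstart : ∀ c, g ⟨c, 0⟩ = h ⟨c, 0⟩) : g = h := by
  refine Equiv.ext ?_
  rintro ⟨c, a, ha⟩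
  induction a with
  | zero => exact hstart c
  | succ a ih =>
    rw [hg c ⟨a, by lia⟩ ⟨a + 1, ha⟩ rfl, hh c ⟨a, by lia⟩ ⟨a + 1, ha⟩ rfl, ih]

variable [Finite ι] [Finite P] [∀ c, NeZero (len c)]

/-- A forward placement is determined by its residual lengths together with, for each length, a
matching of the paths of that length with the positions where such paths start. -/
theorem card_isForward_residualLength_eq_le (hL : ∀ c, len c ≤ L) {R : P → Fin L}
    (hR : IsResidualPattern s (lengthProfile L len) R) :
    Nat.card {g : (Σ c, Fin (len c)) ≃ P // IsForward s g ∧ residualLength hL g = R} ≤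
      ∏ i, (lengthProfile L len i).factorial := by
  classical
  let start (g : {g : (Σ c, Fin (len c)) ≃ P // IsForward s g ∧ residualLength hL g = R})
      (j : Fin L) :
      {c // len c = j + 1} ↪ {p // (R p : ℕ) = 0 ∧ R (s p) = j} :=
    ⟨fun c ↦ ⟨s.symm (g.1 ⟨c, 0⟩), by
      have hc := (g.2.1.residualLength_eq_zero_and_iff hL j (s.symm (g.1 ⟨c, 0⟩))).2
        ⟨c, c.2, s.apply_symm_apply _⟩
      rwa [g.2.2] at hc⟩, fun c d hcd ↦ by
      simp only [Subtype.mk.injEq, EmbeddingLike.apply_eq_iff_eq, Sigma.mk.injEq] at hcd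
      exact Subtype.ext hcd.1⟩
  have hinj : Function.Injective start := fun g h hgh ↦ by
    refine Subtype.ext (g.2.1.ext h.2.1 fun c ↦ ?_)
    have hpos := NeZero.pos (len c)
    have hc : len c - 1 < L := by have := hL c; lia
    have hlen : len c = (⟨len c - 1, hc⟩ : Fin L) + 1 := by simp only; lia
    exact s.symm.injective congr(($hgh ⟨len c - 1, hc⟩ ⟨c, hlen⟩).1)
  refine (Nat.card_le_card_of_injective start hinj).trans_eq ?_
  rw [Nat.card_pi]
  refine prod_congr rfl fun j _ ↦ ?_
  have := Fintype.ofFinite ι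
  have := Fintype.ofFinite P
  rw [Nat.card_eq_fintype_card, Fintype.card_embedding_eq, ← Nat.card_eq_fintype_card,
    ← Nat.card_eq_fintype_card, hR.2 j, ← lengthProfile_apply, Nat.descFactorial_self]

theorem card_isForward_le (hL : ∀ c, len c ≤ L) :
    Nat.card {g : (Σ c, Fin (len c)) ≃ P // IsForward s g} ≤
      (∏ i, (lengthProfile L len i).factorial) *
        Nat.card {R // IsResidualPattern s (lengthProfile L len) R} := by
  classical
  have := Fintype.ofFinite P
  have := Fintype.ofFinite ι
  rw [Nat.card_eq_fintype_card, Nat.card_eq_fintype_card, Fintype.card_subtype,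
    Fintype.card_subtype]
  refine card_le_mul_card_image_of_maps_to (f := residualLength hL)
    (fun g hg ↦ mem_filter.2 ⟨mem_univ _, (mem_filter.1 hg).2.isResidualPattern hL⟩) _
    fun R hR ↦ ?_
  rw [filter_filter, ← Fintype.card_subtype, ← Nat.card_eq_fintype_card]
  exact card_isForward_residualLength_eq_le hL (mem_filter.1 hR).2

end Placement

section RODFactor

theorem IsPathComponent.exists_path {V : Type*} {G : SimpleGraph V} {c : G.ConnectedComponent}
    (hc : IsPathComponent G c) : 2 ≤ c.supp.ncard ∧ ∃ v : Fin c.supp.ncard → V,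
      Function.Injective v ∧ Set.range v = c.supp ∧
        ∀ a b : Fin c.supp.ncard, (a : ℕ) + 1 = b → G.Adj (v a) (v b) := by
  obtain ⟨ℓ, v, hℓ, hinj, hrange, hadj⟩ := hc
  have hcard : c.supp.ncard = ℓ := by
    rw [← hrange, ← Set.image_univ, Set.ncard_image_of_injective _ hinj, Set.ncard_univ,
      Nat.card_eq_fintype_card, Fintype.card_fin]
  rw [hcard]
  exact ⟨hℓ, v, hinj, hrange, fun a b hab ↦ (hadj a b).2 (Or.inl hab)⟩

theorem exists_componentEquiv {V : Type*} {G : SimpleGraph V} (hG : ∀ c, IsPathComponent G c) :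
    ∃ e : (Σ c : G.ConnectedComponent, Fin c.supp.ncard) ≃ V,
      ∀ c (a b : Fin c.supp.ncard), (a : ℕ) + 1 = b → G.Adj (e ⟨c, a⟩) (e ⟨c, b⟩) := by
  choose v hinj hrange hadj using fun c ↦ (hG c).exists_path.2
  have hmem (c) (a : Fin c.supp.ncard) : G.connectedComponentMk (v c a) = c := by
    have hv : v c a ∈ c.supp := hrange c ▸ Set.mem_range_self a
    exact hv
  refine ⟨Equiv.ofBijective (fun y ↦ v y.1 y.2) ⟨?_, fun x ↦ ?_⟩, hadj⟩
  · rintro ⟨c, a⟩ ⟨d, b⟩ (hab : v c a = v d b)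
    obtain rfl : c = d := by rw [← hmem c a, hab, hmem]
    rw [hinj c hab]
  · have hx : x ∈ (G.connectedComponentMk x).supp := rfl
    rw [← hrange] at hx
    obtain ⟨a, ha⟩ := hx
    exact ⟨⟨_, a⟩, ha⟩

/-- The successor of a position in a sequence of `q` directed `k`-cycles. -/
def cycleSucc (q k : ℕ) : Equiv.Perm (Fin q × Fin k) :=
  (Equiv.refl _).prodCongr (finRotate k)

theorem cycleSucc_apply {q k : ℕ} (c : Fin q) (i : Fin k) :
    cycleSucc q k (c, i) = (c, ⟨(i + 1) % k, Nat.mod_lt _ i.pos⟩) := by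
  have := i.neZero
  refine Prod.ext rfl (Fin.ext ?_)
  simp only [cycleSucc, Equiv.prodCongr_apply, Prod.map_apply, finRotate_apply, Fin.val_add,
    Fin.val_one', Nat.add_mod_mod]

variable {n k : ℕ} {S : SimpleGraph (Fin n)}

theorem NS_le_card_isUndirected (hS : ∀ c, IsPathComponent S c) :
    NS k S ≤ Nat.card {g : (Σ c : S.ConnectedComponent, Fin c.supp.ncard) ≃
      Fin (n / k) × Fin k // IsUndirected (cycleSucc (n / k) k) g} := by
  obtain ⟨e, he⟩ := exists_componentEquiv hS
  let pos (F : RODFactor n k) : Fin (n / k) × Fin k ≃ Fin n := Equiv.ofBijective _ F.2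
  have hstep (F : RODFactor n k) {u v : Fin n} {c : Fin (n / k)} {i : Fin k} (hu : F.1 c i = u)
      (hv : F.1 c ⟨(i + 1) % k, Nat.mod_lt _ i.pos⟩ = v) :
      (pos F).symm v = cycleSucc (n / k) k ((pos F).symm u) := by
    have hpu : (pos F).symm u = (c, i) := (pos F).symm_apply_eq.2 hu.symm
    rw [hpu, cycleSucc_apply]
    exact (pos F).symm_apply_eq.2 hv.symm
  refine Nat.card_le_card_of_injective (fun F : {F : RODFactor n k // RODContains F S} ↦
    ⟨e.trans (pos F.1).symm, fun c a b hab ↦ ?_⟩) fun F G hFG ↦ ?_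
  · obtain ⟨d, i, ⟨hu, hv⟩ | ⟨hv, hu⟩⟩ := F.2 _ _ (he c a b hab)
    exacts [Or.inl (hstep F.1 hu hv), Or.inr (hstep F.1 hv hu)]
  · have hsymm : (pos F.1).symm = (pos G.1).symm := Equiv.ext fun x ↦ by
      simpa using congr(($hFG).1 (e.symm x))
    have hpos : pos F.1 = pos G.1 := Equiv.symm_bijective.injective hsymm
    exact Subtype.ext (Subtype.ext (funext fun c ↦ funext fun i ↦ congr($hpos (c, i))))

/-- The number of connected components of `S` with `i + 1` vertices, as a function of `i < L`. -/
noncomputable def componentProfile (L : ℕ) (S : SimpleGraph (Fin n)) : Fin L →₀ ℕ :=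
  lengthProfile L fun c : S.ConnectedComponent ↦ c.supp.ncard

theorem NS_le_coeff_closedWalkPoly_pow {m L : ℕ} (hk : 0 < k) (hS : PathsGraph S m)
    (hL : ∀ c : S.ConnectedComponent, c.supp.ncard ≤ L) :
    NS k S ≤ 2 ^ m * ((∏ i, (componentProfile L S i).factorial) *
      MvPolynomial.coeff (componentProfile L S) (closedWalkPoly L k ^ (n / k))) := by
  have := Fintype.ofFinite S.ConnectedComponent
  have (c : S.ConnectedComponent) : NeZero c.supp.ncard :=
    ⟨by have := (hS.2 c).exists_path.1; lia⟩
  rw [closedWalkPoly, trace_pow_pow_eq_sum _ _ hk, ← hS.1, Nat.card_eq_fintype_card]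
  calc NS k S ≤ _ := NS_le_card_isUndirected hS.2
    _ ≤ _ := card_isUndirected_le
    _ ≤ _ := Nat.mul_le_mul_left _ ((card_isForward_le hL).trans
      (Nat.mul_le_mul_left _ (card_isResidualPattern_le_coeff _ _)))

end RODFactor

/-! ### Newton's identities -/

section NewtonIdentity

variable {A : Type*} [CommSemiring A] {L : ℕ} (x : Fin L → A)

theorem residualMatrix_mul_apply_of_val_eq_zero (N : Matrix (Fin L) (Fin L) A) {a : Fin L}
    (ha : (a : ℕ) = 0) (b : Fin L) : (residualMatrix x * N) a b = ∑ c, x c * N c b := by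
  simp [Matrix.mul_apply, residualMatrix, ha]

theorem residualMatrix_mul_apply_of_val_eq_add_one (N : Matrix (Fin L) (Fin L) A) {a c : Fin L}
    (hac : (c : ℕ) + 1 = a) (b : Fin L) : (residualMatrix x * N) a b = N c b := by
  rw [Matrix.mul_apply, sum_eq_single c]
  · simp [residualMatrix, ← hac]
  · intro d _ hd
    have hd' : (d : ℕ) + 1 ≠ a := fun h ↦ hd (Fin.ext (by lia))
    simp [residualMatrix, hd', show (a : ℕ) ≠ 0 by lia]
  · simp

theorem residualMatrix_pow_add_apply {t : ℕ} {a c : Fin L} (hac : (c : ℕ) + t = a) (j : ℕ)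
    (b : Fin L) : (residualMatrix x ^ (j + t)) a b = (residualMatrix x ^ j) c b := by
  induction t generalizing a with
  | zero => rw [add_zero, Fin.ext (show (a : ℕ) = c by lia)]
  | succ t ih =>
    rw [← add_assoc, pow_succ',
      residualMatrix_mul_apply_of_val_eq_add_one x _ (c := ⟨c + t, by lia⟩) (by simp; lia)]
    exact ih rfl

theorem residualMatrix_pow_apply_of_le {j : ℕ} {a : Fin L} (hj : j ≤ a) (b : Fin L) :
    (residualMatrix x ^ j) a b = if (b : ℕ) + j = a then 1 else 0 := by
  have hshift := residualMatrix_pow_add_apply x (t := j) (a := a) (c := ⟨a - j, by lia⟩)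
    (by simp only; lia) 0 b
  rw [zero_add] at hshift
  rw [hshift, pow_zero, Matrix.one_apply]
  exact if_congr (by rw [Fin.ext_iff]; simp only; lia) rfl rfl

theorem residualMatrix_pow_apply_of_ge [NeZero L] {j : ℕ} {a : Fin L} (hj : (a : ℕ) ≤ j)
    (b : Fin L) : (residualMatrix x ^ j) a b = (residualMatrix x ^ (j - a)) 0 b := by
  rw [← residualMatrix_pow_add_apply x (t := a) (a := a) (c := 0) (by simp) (j - a) b,
    Nat.sub_add_cancel hj]

theorem residualMatrix_pow_diag [NeZero L] {j : ℕ} (hj : 0 < j) (a : Fin L) :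
    (residualMatrix x ^ j) a a =
      if (a : ℕ) ≤ j then (residualMatrix x ^ (j - a)) 0 a else 0 := by
  split_ifs with ha
  · exact residualMatrix_pow_apply_of_ge x ha a
  · rw [residualMatrix_pow_apply_of_le x (by lia), if_neg (by lia)]

theorem sum_residualMatrix_pow_sub_apply (k : ℕ) (c : Fin L) :
    (∑ a : Fin L, if (a : ℕ) ≤ k then (residualMatrix x ^ (k - a)) c a else 0) =
      if (c : ℕ) < k then (residualMatrix x ^ (k - c)).trace
      else if (c : ℕ) = k then (k + 1 : A) else 0 := by
  have := c.neZero
  have entry {a : Fin L} (ha : k - a ≤ c) (hak : (a : ℕ) ≤ k) :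
      (residualMatrix x ^ (k - a)) c a = if (c : ℕ) = k then 1 else 0 := by
    rw [residualMatrix_pow_apply_of_le x ha]
    exact if_congr (by lia) rfl rfl
  split_ifs with hck hck'
  · refine sum_congr rfl fun a _ ↦ ?_
    rw [Matrix.diag_apply, residualMatrix_pow_diag x (by lia)]
    rcases le_or_gt ((c : ℕ) + a) k with h | h
    · rw [if_pos (by lia), if_pos (by lia), residualMatrix_pow_apply_of_ge x (by lia),
        Nat.sub_right_comm]
    · rw [if_neg (show ¬(a : ℕ) ≤ k - c by lia)]
      split_ifs with hak
      · rw [entry (by lia) hak, if_neg (by lia)]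
      · rfl
  · have hone (a : Fin L) :
        (if (a : ℕ) ≤ k then (residualMatrix x ^ (k - a)) c a else 0) =
          if a ≤ c then (1 : A) else 0 := by
      have hiff : a ≤ c ↔ (a : ℕ) ≤ k := by rw [Fin.le_def, hck']
      simp only [hiff]
      split_ifs with hak
      exacts [(entry (by lia) hak).trans (if_pos hck'), rfl]
    simp only [hone, sum_boole]
    rw [show ({a | a ≤ c} : Finset (Fin L)) = Iic c by ext; simp, Fin.card_Iic, hck']
    push_cast
    rfl
  · refine sum_eq_zero fun a _ ↦ ?_
    split_ifs with hak
    exacts [(entry (by lia) hak).trans (if_neg hck'), rfl]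

/-- Cut a closed walk at the first vertex of the path through its root. -/
theorem trace_residualMatrix_pow_succ (k : ℕ) :
    (residualMatrix x ^ (k + 1)).trace =
      ∑ i : Fin L, x i * if (i : ℕ) < k then (residualMatrix x ^ (k - i)).trace
        else if (i : ℕ) = k then (k + 1 : A) else 0 := by
  have diag (a : Fin L) : (residualMatrix x ^ (k + 1)) a a =
      ∑ c, x c * if (a : ℕ) ≤ k then (residualMatrix x ^ (k - a)) c a else 0 := by
    have := a.neZero
    rw [residualMatrix_pow_diag x k.succ_pos]
    rcases le_or_gt (a : ℕ) k with h | h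
    · rw [if_pos (by lia), Nat.succ_sub h, pow_succ',
        residualMatrix_mul_apply_of_val_eq_zero x _ (Fin.val_zero _)]
      simp only [if_pos h]
    · simp only [if_neg h.not_ge, mul_zero, sum_const_zero, ite_eq_right_iff]
      intro ha
      rw [show k + 1 - a = 0 by lia, pow_zero, Matrix.one_apply_ne]
      exact fun h0 ↦ by have := congrArg Fin.val h0; simp at this; lia
  simp only [Matrix.trace, Matrix.diag_apply, diag]
  rw [sum_comm]
  simp only [← mul_sum, sum_residualMatrix_pow_sub_apply]
  rfl

end NewtonIdentity

section PathTilingCount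

open MvPolynomial

variable {L : ℕ}

theorem coeff_X_mul_mul_prod_factorial (μ : Fin L →₀ ℕ) (i : Fin L) (f : MvPolynomial (Fin L) ℕ) :
    coeff μ (X i * f) * ∏ j, (μ j).factorial = μ i *
      (coeff (μ - Finsupp.single i 1) f *
        ∏ j, ((μ - Finsupp.single i 1 : Fin L →₀ ℕ) j).factorial) := by
  rw [coeff_X_mul']
  by_cases hi : μ i = 0
  · simp [hi]
  have herase : ∏ j ∈ univ.erase i, ((μ - Finsupp.single i 1 : Fin L →₀ ℕ) j).factorial =
      ∏ j ∈ univ.erase i, (μ j).factorial :=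
    prod_congr rfl fun j hj ↦ by simp [(ne_of_mem_erase hj).symm]
  rw [if_pos (by simpa using hi), ← mul_prod_erase _ _ (mem_univ i),
    ← mul_prod_erase (a := i) _ _ (mem_univ i), herase, Finsupp.coe_tsub, Pi.sub_apply,
    Finsupp.single_eq_same, ← Nat.mul_factorial_pred hi]
  ring

/-- The total number of vertices of a collection of paths, `μ i` of which have `i + 1` vertices. -/
noncomputable def vertexCount : (Fin L →₀ ℕ) →+ ℕ :=
  Finsupp.weight fun i : Fin L ↦ (i : ℕ) + 1

theorem vertexCount_eq_sum (μ : Fin L →₀ ℕ) : vertexCount μ = ∑ i, μ i * ((i : ℕ) + 1) := by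
  simp [vertexCount, Finsupp.weight_apply, Finsupp.sum_fintype]

theorem vertexCount_sub_single {μ : Fin L →₀ ℕ} {i : Fin L} (hi : μ i ≠ 0) :
    vertexCount (μ - Finsupp.single i 1) + ((i : ℕ) + 1) = vertexCount μ := by
  have hsplit : μ - Finsupp.single i 1 + Finsupp.single i 1 = μ :=
    tsub_add_cancel_of_le (Finsupp.single_le_iff.2 (Nat.one_le_iff_ne_zero.2 hi))
  conv_rhs => rw [← hsplit, map_add]
  simp [vertexCount, Finsupp.weight_single]

theorem degree_sub_single {μ : Fin L →₀ ℕ} {i : Fin L} (hi : μ i ≠ 0) :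
    (μ - Finsupp.single i 1).degree + 1 = μ.degree := by
  have hsplit : μ - Finsupp.single i 1 + Finsupp.single i 1 = μ :=
    tsub_add_cancel_of_le (Finsupp.single_le_iff.2 (Nat.one_le_iff_ne_zero.2 hi))
  conv_rhs => rw [← hsplit, map_add, Finsupp.degree_single]

theorem sum_mul_sub_eq_degree_sub_one_mul {μ : Fin L →₀ ℕ} {k : ℕ}
    (hk : vertexCount μ = k + 1) : ∑ i, μ i * (k - i) = (μ.degree - 1) * (k + 1) := by
  have hsum : ∑ i, μ i * (k - i) + vertexCount μ = μ.degree * (k + 1) := by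
    rw [vertexCount_eq_sum, Finsupp.degree_eq_sum, sum_mul, ← sum_add_distrib]
    refine sum_congr rfl fun i _ ↦ ?_
    by_cases hi : μ i = 0
    · simp [hi]
    · have := vertexCount_sub_single hi
      rw [← mul_add]
      congr 1
      lia
  rw [tsub_mul, one_mul, ← hsum, hk, Nat.add_sub_cancel]

theorem coeff_closedWalkPoly_succ_mul_prod_factorial (μ : Fin L →₀ ℕ) (k : ℕ) :
    coeff μ (closedWalkPoly L (k + 1)) * ∏ i, (μ i).factorial =
      ∑ i, μ i * (coeff (μ - Finsupp.single i 1) (if (i : ℕ) < k then closedWalkPoly L (k - i)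
          else if (i : ℕ) = k then k + 1 else 0) *
        ∏ j, ((μ - Finsupp.single i 1 : Fin L →₀ ℕ) j).factorial) := by
  simp only [← coeff_X_mul_mul_prod_factorial, ← sum_mul, ← coeff_sum]
  rw [closedWalkPoly, trace_residualMatrix_pow_succ]
  rfl

theorem coeff_closedWalkPoly_of_degree_eq_one {μ : Fin L →₀ ℕ} (hμ : μ.degree = 1) :
    coeff μ (closedWalkPoly L (vertexCount μ)) * ∏ i, (μ i).factorial = vertexCount μ := by
  obtain ⟨c, hc⟩ : ∃ c, μ c ≠ 0 := by
    by_contra! h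
    simp [show μ = 0 from Finsupp.ext h] at hμ
  have hsub : μ - Finsupp.single c 1 = 0 :=
    (Finsupp.degree_eq_zero_iff _).1 (by have := degree_sub_single hc; lia)
  obtain rfl : μ = Finsupp.single c 1 := le_antisymm (tsub_eq_zero_iff_le.1 hsub)
    (Finsupp.single_le_iff.2 (Nat.one_le_iff_ne_zero.2 hc))
  have hcount : vertexCount (Finsupp.single c 1) = c + 1 := by
    simpa [hsub] using (vertexCount_sub_single hc).symm
  rw [hcount, coeff_closedWalkPoly_succ_mul_prod_factorial, sum_eq_single c]
  · have hcoeff : coeff 0 ((c : ℕ) : MvPolynomial (Fin L) ℕ) = c := by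
      rw [← C_eq_coe_nat, coeff_zero_C, Nat.cast_id]
    simp [hcoeff]
  · intro i _ hi
    simp [Finsupp.single_eq_of_ne hi]
  · simp

/-- Newton's identities for `trace (residualMatrix x ^ k)` give a recursion on the number of paths,
which is solved by `k * (r - 1)!` for `r` paths. -/
theorem coeff_closedWalkPoly_vertexCount {μ : Fin L →₀ ℕ} (hμ : μ ≠ 0) :
    coeff μ (closedWalkPoly L (vertexCount μ)) * ∏ i, (μ i).factorial =
      vertexCount μ * (μ.degree - 1).factorial := by
  induction hd : μ.degree using Nat.strong_induction_on generalizing μ with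
  | _ d ih =>
  have hd0 : d ≠ 0 := hd ▸ (Finsupp.degree_eq_zero_iff μ).not.2 hμ
  obtain rfl | ⟨r, rfl⟩ : d = 1 ∨ ∃ r, d = r + 2 := by
    rcases d with _ | _ | r
    exacts [absurd rfl hd0, Or.inl rfl, Or.inr ⟨r, rfl⟩]
  · simpa using coeff_closedWalkPoly_of_degree_eq_one hd
  obtain ⟨k, hk⟩ : ∃ k, vertexCount μ = k + 1 := by
    obtain ⟨i, hi⟩ := Finsupp.ne_iff.1 hμ
    exact ⟨_, (vertexCount_sub_single hi).symm⟩
  have hterm (i : Fin L) (hi : μ i ≠ 0) :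
      coeff (μ - Finsupp.single i 1) (if (i : ℕ) < k then closedWalkPoly L (k - i)
          else if (i : ℕ) = k then k + 1 else 0) *
        ∏ j, ((μ - Finsupp.single i 1 : Fin L →₀ ℕ) j).factorial = (k - i) * r.factorial := by
    have hdeg := degree_sub_single hi
    have hcount := vertexCount_sub_single hi
    have hne : μ - Finsupp.single i 1 ≠ 0 := fun h ↦ by simp [h] at hdeg; lia
    obtain ⟨j, hj⟩ := Finsupp.ne_iff.1 hne
    have hpos := vertexCount_sub_single hj
    rw [if_pos (by lia), show k - i = vertexCount (μ - Finsupp.single i 1) by lia,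
      ih (r + 1) (by lia) hne (by lia), Nat.add_sub_cancel]
  calc _ = ∑ i, μ i * (k - i) * r.factorial := by
        rw [hk, coeff_closedWalkPoly_succ_mul_prod_factorial]
        refine sum_congr rfl fun i _ ↦ ?_
        by_cases hi : μ i = 0
        · simp [hi]
        · rw [hterm i hi, mul_assoc]
    _ = vertexCount μ * (r + 1).factorial := by
        rw [← sum_mul, sum_mul_sub_eq_degree_sub_one_mul hk, hd, hk, Nat.factorial_succ,
          show r + 2 - 1 = r + 1 from rfl]
        ring

end PathTilingCount

/-! ### Reciprocal roots and Fourier inversion -/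

section ReciprocalRoots

section CommRing

variable {A : Type*} [CommRing A] {L : ℕ}

/-- `Λ` is the multiset of reciprocals of the roots of `1 - ∑ i, x i * X ^ (i + 1)`, that is, of
the nonzero eigenvalues of `residualMatrix x`. -/
def IsReciprocalRoots (x : Fin L → A) (Λ : Multiset A) : Prop :=
  (Λ.map fun l ↦ (1 - Polynomial.C l * Polynomial.X : Polynomial A)).prod =
    1 - ∑ i, Polynomial.C (x i) * Polynomial.X ^ ((i : ℕ) + 1)

theorem IsReciprocalRoots.prod_one_sub_mul {x : Fin L → A} {Λ : Multiset A}
    (h : IsReciprocalRoots x Λ) (z : A) :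
    (Λ.map fun l ↦ 1 - l * z).prod = 1 - ∑ i, x i * z ^ ((i : ℕ) + 1) := by
  have heval := congrArg (Polynomial.eval z) h
  rw [Polynomial.eval_multiset_prod, Multiset.map_map] at heval
  simpa [Polynomial.eval_finsetSum, Function.comp_def] using heval

open PowerSeries

theorem one_sub_C_mul_X_mul_mk_pow (l : A) :
    (1 - C l * X) * PowerSeries.mk (fun k ↦ l ^ (k + 1)) = C l := by
  ext (_ | k)
  · simp [mul_assoc, sub_mul]
  · simp [mul_assoc, sub_mul, coeff_succ_X_mul, ← pow_succ']

theorem derivative_prod_one_sub_C_mul_X (Λ : Multiset A) :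
    derivative A (Λ.map fun l ↦ (1 - C l * X : PowerSeries A)).prod =
      -((Λ.map fun l ↦ (1 - C l * X : PowerSeries A)).prod *
        PowerSeries.mk fun k ↦ (Λ.map (· ^ (k + 1))).sum) := by
  induction Λ using Multiset.induction_on with
  | empty => ext; simp
  | cons l Λ ih =>
    have hfactor : derivative A (1 - C l * X : PowerSeries A) = -C l := by
      simp [derivative_C]
    have hmk : PowerSeries.mk (fun k ↦ ((l ::ₘ Λ).map (· ^ (k + 1))).sum) =
        PowerSeries.mk (fun k ↦ l ^ (k + 1)) +
          PowerSeries.mk fun k ↦ (Λ.map (· ^ (k + 1))).sum := by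
      ext; simp
    rw [hmk, Multiset.map_cons, Multiset.prod_cons, Derivation.leibniz, ih, hfactor, smul_eq_mul,
      smul_eq_mul]
    linear_combination (Λ.map fun l ↦ (1 - C l * X : PowerSeries A)).prod *
      one_sub_C_mul_X_mul_mk_pow l

theorem IsReciprocalRoots.sum_pow_succ {x : Fin L → A} {Λ : Multiset A}
    (h : IsReciprocalRoots x Λ) (k : ℕ) :
    (Λ.map (· ^ (k + 1))).sum = ∑ i : Fin L, x i *
      if (i : ℕ) < k then (Λ.map (· ^ (k - i))).sum
      else if (i : ℕ) = k then (k + 1 : A) else 0 := by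
  set S := PowerSeries.mk fun k ↦ (Λ.map (· ^ (k + 1))).sum with hS
  set F : PowerSeries A := ∑ i, C (x i) * X ^ ((i : ℕ) + 1) with hF
  have hprod : (Λ.map fun l ↦ (1 - C l * X : PowerSeries A)).prod = 1 - F := by
    have hcoe := congrArg Polynomial.coeToPowerSeries.ringHom h
    rw [map_multiset_prod, Multiset.map_map] at hcoe
    simpa only [Function.comp_def, map_sub, map_one, map_mul, map_sum, map_pow,
      Polynomial.coeToPowerSeries.ringHom_apply, Polynomial.coe_C, Polynomial.coe_X] using hcoe
  have hnewton : S = derivative A F + F * S := by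
    have hderiv := derivative_prod_one_sub_C_mul_X Λ
    rw [hprod, map_sub, ← hS, Derivation.map_one_eq_zero] at hderiv
    linear_combination hderiv
  have hcoeff := congrArg (coeff k) hnewton
  rw [hS, coeff_mk, map_add, coeff_derivative, hF, sum_mul, map_sum, map_sum, sum_mul,
    ← sum_add_distrib] at hcoeff
  rw [hcoeff]
  refine sum_congr rfl fun i _ ↦ ?_
  rw [mul_assoc (C (x i)), coeff_C_mul, coeff_C_mul, coeff_X_pow, coeff_X_pow_mul', coeff_mk]
  rcases lt_trichotomy (i : ℕ) k with hik | hik | hik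
  · rw [if_neg (by lia), if_pos hik, if_pos (by lia), show k - (i + 1) + 1 = k - i by lia]
    ring
  · simp [hik]
  · simp [hik.ne, hik.ne', hik.not_gt]

theorem IsReciprocalRoots.trace_residualMatrix_pow {x : Fin L → A} {Λ : Multiset A}
    (h : IsReciprocalRoots x Λ) {k : ℕ} (hk : 0 < k) :
    (residualMatrix x ^ k).trace = (Λ.map (· ^ k)).sum := by
  induction k using Nat.strong_induction_on with
  | _ k ih =>
  obtain ⟨k, rfl⟩ := Nat.exists_eq_add_one_of_ne_zero hk.ne'
  rw [trace_residualMatrix_pow_succ, h.sum_pow_succ]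
  refine sum_congr rfl fun i _ ↦ ?_
  split_ifs with hi
  exacts [by rw [ih (k - i) (by lia) (by lia)], rfl, rfl]

end CommRing

open Polynomial in
theorem exists_isReciprocalRoots {K : Type*} [Field K] [IsAlgClosed K] {L : ℕ} (x : Fin L → K) :
    ∃ Λ, IsReciprocalRoots x Λ ∧ Λ.card ≤ L := by
  set f : K[X] := 1 - ∑ i, C (x i) * X ^ ((i : ℕ) + 1) with hf
  have hf0 : f.coeff 0 = 1 := by simp [hf]
  have hsplits := IsAlgClosed.splits f
  have hdeg : f.natDegree ≤ L := by
    refine (Polynomial.natDegree_sub_le _ _).trans (max_le (by simp) ?_)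
    refine Polynomial.natDegree_sum_le_of_forall_le _ _ fun i _ ↦ ?_
    exact (Polynomial.natDegree_C_mul_X_pow_le _ _).trans i.2
  refine ⟨f.roots.map (·⁻¹), ?_, ?_⟩
  · have hfactor : f = C (f.leadingCoeff * (f.roots.map (-·)).prod) *
        (f.roots.map fun a ↦ 1 - C a⁻¹ * X).prod := by
      conv_lhs => rw [hsplits.eq_prod_roots]
      rw [C_mul, mul_assoc, map_multiset_prod, Multiset.map_map, ← Multiset.prod_map_mul]
      congr 2
      refine Multiset.map_congr rfl fun a ha ↦ ?_
      have ha0 : a ≠ 0 := by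
        rintro rfl
        rw [mem_roots', IsRoot.def, ← coeff_zero_eq_eval_zero, hf0] at ha
        exact one_ne_zero ha.2
      have hinv : C a * C a⁻¹ = (1 : K[X]) := by rw [← C_mul, mul_inv_cancel₀ ha0, C_1]
      simp only [Function.comp_apply, C_neg]
      linear_combination -X * hinv
    have hconst : (1 : K) = f.leadingCoeff * (f.roots.map (-·)).prod := by
      have hcoeff := congrArg (coeff · 0) hfactor
      simpa [hf0, coeff_zero_eq_eval_zero, eval_multiset_prod] using hcoeff
    rw [IsReciprocalRoots, Multiset.map_map, ← hf]
    conv_rhs => rw [hfactor, ← hconst, C_1, one_mul]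
    rfl
  · rw [Multiset.card_map]
    exact (Polynomial.card_roots' f).trans hdeg

end ReciprocalRoots

section TorusGrid

open MvPolynomial

/-- The point with moduli `|p i|` and arguments `ψ i` (when `p` is nonnegative). -/
noncomputable def polarPoint {σ : Type*} (p ψ : σ → ℝ) (i : σ) : ℂ :=
  p i * Complex.exp (ψ i * Complex.I)

/-- The arguments of a point of the grid of `Q`-th roots of unity in a torus. -/
noncomputable def gridAngle {σ : Type*} {Q : ℕ} (θ : σ → Fin Q) (i : σ) : ℝ :=
  2 * Real.pi * (θ i : ℕ) / Q

variable {σ : Type*} [Fintype σ] [DecidableEq σ] {Q : ℕ}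

theorem sum_pow_mul_inv_pow_pow {K : Type*} [Field K] {ω : K} (hω : IsPrimitiveRoot ω Q)
    {a b : ℕ} (ha : a < Q) (hb : b < Q) :
    ∑ t : Fin Q, (ω ^ a * ω⁻¹ ^ b) ^ (t : ℕ) = if a = b then (Q : K) else 0 := by
  have hω0 : ω ≠ 0 := hω.ne_zero (by lia)
  split_ifs with hab
  · simp [hab, hω0]
  have hne : ω ^ a * ω⁻¹ ^ b ≠ 1 := fun h ↦ hab <| hω.pow_inj ha hb <| by
    rwa [inv_pow, mul_inv_eq_one₀ (pow_ne_zero _ hω0)] at h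
  have hgeom := geom_sum_mul (ω ^ a * ω⁻¹ ^ b) Q
  rw [mul_pow, pow_right_comm, hω.pow_eq_one, pow_right_comm, hω.inv.pow_eq_one, one_pow, one_pow,
    one_mul, sub_self] at hgeom
  rw [Fin.sum_univ_eq_sum_range fun t ↦ (ω ^ a * ω⁻¹ ^ b) ^ t]
  exact (mul_eq_zero.1 hgeom).resolve_right (sub_ne_zero.2 hne)

theorem sum_torusGrid_mul_eval {K : Type*} [Field K] {ω : K} (hω : IsPrimitiveRoot ω Q)
    {f : MvPolynomial σ K} {μ : σ →₀ ℕ} (hμ : ∀ i, μ i < Q) (hf : ∀ s ∈ f.support, ∀ i, s i < Q)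
    (p : σ → K) :
    ∑ θ : σ → Fin Q, (∏ i, (ω⁻¹ ^ μ i) ^ (θ i : ℕ)) * eval (fun i ↦ p i * ω ^ (θ i : ℕ)) f =
      (Q : K) ^ Fintype.card σ * (coeff μ f * ∏ i, p i ^ μ i) := by
  have hexpand (θ : σ → Fin Q) :
      (∏ i, (ω⁻¹ ^ μ i) ^ (θ i : ℕ)) * eval (fun i ↦ p i * ω ^ (θ i : ℕ)) f =
        ∑ s ∈ f.support, coeff s f * (∏ i, p i ^ s i) *
          ∏ i, (ω ^ s i * ω⁻¹ ^ μ i) ^ (θ i : ℕ) := by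
    rw [eval_eq', mul_sum]
    refine sum_congr rfl fun s _ ↦ ?_
    simp only [mul_pow, prod_mul_distrib, pow_right_comm ω _ (s _)]
    ring
  have horth (s : σ →₀ ℕ) (hs : s ∈ f.support) :
      ∑ θ : σ → Fin Q, ∏ i, (ω ^ s i * ω⁻¹ ^ μ i) ^ (θ i : ℕ) =
        if s = μ then (Q : K) ^ Fintype.card σ else 0 := by
    rw [← Fintype.piFinset_univ, ← prod_univ_sum (fun _ ↦ univ) fun i (t : Fin Q) ↦
      (ω ^ s i * ω⁻¹ ^ μ i) ^ (t : ℕ)]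
    simp only [sum_pow_mul_inv_pow_pow hω (hf s hs _) (hμ _), prod_ite_zero, mem_univ,
      forall_const, ← DFunLike.ext_iff, prod_const, card_univ]
  simp only [hexpand]
  rw [sum_comm]
  calc _ = ∑ s ∈ f.support, if s = μ then
        (Q : K) ^ Fintype.card σ * (coeff μ f * ∏ i, p i ^ μ i) else 0 := by
        refine sum_congr rfl fun s hs ↦ ?_
        rw [← mul_sum, horth s hs]
        split_ifs with h
        · rw [h, mul_comm]
        · rw [mul_zero]
    _ = _ := by
        rw [sum_ite_eq']
        split_ifs with h
        · rfl
        · rw [notMem_support_iff.1 h, zero_mul, mul_zero]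

theorem pow_mul_norm_coeff_mul_prod_le {f : MvPolynomial σ ℂ} (hf : f.totalDegree < Q)
    (μ : σ →₀ ℕ) (p : σ → ℝ) :
    (Q : ℝ) ^ Fintype.card σ * (‖coeff μ f‖ * ∏ i, |p i| ^ μ i) ≤
      ∑ θ : σ → Fin Q, ‖eval (polarPoint p (gridAngle θ)) f‖ := by
  by_cases hμ : μ ∈ f.support
  swap
  · rw [notMem_support_iff.1 hμ, norm_zero, zero_mul, mul_zero]
    positivity
  have hlt (s : σ →₀ ℕ) (hs : s ∈ f.support) (i : σ) : s i < Q :=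
    calc s i ≤ s.degree := Finsupp.le_degree i s
      _ ≤ f.totalDegree := le_totalDegree hs
      _ < Q := hf
  have hQ : Q ≠ 0 := by lia
  set ω := Complex.exp (2 * Real.pi * Complex.I / Q) with hω
  have hprim : IsPrimitiveRoot ω Q := Complex.isPrimitiveRoot_exp Q hQ
  have hpoint (θ : σ → Fin Q) : polarPoint p (gridAngle θ) = fun i ↦ p i * ω ^ (θ i : ℕ) := by
    funext i
    rw [polarPoint, gridAngle, hω, ← Complex.exp_nat_mul]
    congr 2
    push_cast
    ring
  have hnorm := congrArg (‖·‖) (sum_torusGrid_mul_eval hprim (hlt μ hμ) hlt fun i ↦ (p i : ℂ))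
  simp only [norm_mul, norm_pow, norm_prod, Complex.norm_natCast, Complex.norm_real,
    Real.norm_eq_abs] at hnorm
  rw [← hnorm]
  refine (norm_sum_le _ _).trans_eq (sum_congr rfl fun θ _ ↦ ?_)
  simp [hpoint, hprim.norm'_eq_one hQ]

end TorusGrid

section ClosedWalkPoly

open MvPolynomial

variable {L : ℕ}

theorem aeval_closedWalkPoly {A : Type*} [CommSemiring A] (y : Fin L → A) (k : ℕ) :
    aeval y (closedWalkPoly L k) = (residualMatrix y ^ k).trace := by
  have hmap : (aeval y : MvPolynomial (Fin L) ℕ →ₐ[ℕ] A).mapMatrix (residualMatrix X) =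
      residualMatrix y := by
    ext a b
    simp only [residualMatrix, AlgHom.mapMatrix_apply, Matrix.map_apply, Matrix.of_apply]
    split_ifs <;> simp
  rw [closedWalkPoly, AddMonoidHom.map_trace, ← hmap, ← map_pow]
  rfl

theorem totalDegree_closedWalkPoly_le {k : ℕ} (hk : 0 < k) :
    (closedWalkPoly L k).totalDegree ≤ k := by
  rw [closedWalkPoly, trace_pow_eq_sum_closedWalks _ hk]
  refine totalDegree_finsetSum_le fun r _ ↦ (totalDegree_finsetProd _ _).trans ?_
  refine (sum_le_card_nsmul _ _ 1 fun i _ ↦ ?_).trans (by simp)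
  simp only [residualMatrix, Matrix.of_apply]
  split_ifs <;> simp

end ClosedWalkPoly

/-! ### Near-geometric profiles -/

section Growth

theorem exists_pow_mul_pow_le (d : ℕ) {R R₁ : ℝ} (hR : 0 ≤ R) (h : R < R₁) :
    ∃ K > 0, ∀ j : ℕ, (j : ℝ) ^ d * R ^ j ≤ K * R₁ ^ j := by
  have hR₁ : 0 < R₁ := hR.trans_lt h
  obtain ⟨K, hK⟩ := (tendsto_pow_const_mul_const_pow_of_lt_one d (div_nonneg hR hR₁.le)
    ((div_lt_one hR₁).2 h)).bddAbove_range
  refine ⟨max K 1, by positivity, fun j ↦ ?_⟩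
  have hj : (j : ℝ) ^ d * (R / R₁) ^ j ≤ K := hK ⟨j, rfl⟩
  rw [div_pow, ← mul_div_assoc, div_le_iff₀ (by positivity)] at hj
  exact hj.trans (by gcongr; exact le_max_left _ _)

theorem exists_mul_pow_le_sq_add {R R₁ : ℝ} (hR : 1 ≤ R) (h : R < R₁) {κ : ℝ} (hκ : 0 < κ) :
    ∃ B > 0, ∀ (j : ℕ) (a : ℝ), 0 ≤ a → a ≤ 2 → a * R ^ j ≤ B * a ^ 2 + κ * R₁ ^ j := by
  have hR₀ : 0 < R := by linarith
  have hR₁ : 0 < R₁ := hR₀.trans h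
  obtain ⟨N, hN⟩ := Filter.eventually_atTop.1 ((tendsto_pow_atTop_nhds_zero_of_lt_one
    (by positivity) ((div_lt_one hR₁).2 h)).eventually (ge_mem_nhds (half_pos hκ)))
  refine ⟨R ^ (2 * N) / κ, by positivity, fun j a ha ha2 ↦ ?_⟩
  rcases le_or_gt N j with hj | hj
  · have hsmall := hN j hj
    rw [div_pow, div_le_iff₀ (by positivity)] at hsmall
    have hpos : 0 ≤ R ^ (2 * N) / κ * a ^ 2 := by positivity
    nlinarith [mul_le_mul_of_nonneg_right ha2 (pow_nonneg hR₀.le j)]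
  · have hRj : R ^ j ≤ R ^ N := pow_le_pow_right₀ hR hj.le
    have hone : 1 ≤ R₁ ^ j := one_le_pow₀ (hR.trans h.le)
    have hamgm : a * R ^ N ≤ R ^ (2 * N) / κ * a ^ 2 + κ := by
      have hsq : R ^ (2 * N) / κ * a ^ 2 + κ - a * R ^ N =
          ((R ^ N * a - κ / 2) ^ 2 + 3 / 4 * κ ^ 2) / κ := by
        field_simp; ring
      have : 0 ≤ ((R ^ N * a - κ / 2) ^ 2 + 3 / 4 * κ ^ 2) / κ := by positivity
      linarith
    calc a * R ^ j ≤ a * R ^ N := by gcongr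
      _ ≤ R ^ (2 * N) / κ * a ^ 2 + κ := hamgm
      _ ≤ R ^ (2 * N) / κ * a ^ 2 + κ * R₁ ^ j := by
        gcongr; exact le_mul_of_one_le_right hκ.le hone

theorem pow_sub_one_le_log_mul {r : ℝ} (hr : 0 < r) (j : ℕ) :
    r ^ j - 1 ≤ Real.log r * (j * r ^ j) := by
  have hlog := Real.one_sub_inv_le_log_of_pos (pow_pos hr j)
  rw [Real.log_pow] at hlog
  have hmul := mul_le_mul_of_nonneg_right hlog (pow_pos hr j).le
  rw [sub_mul, inv_mul_cancel₀ (pow_pos hr j).ne'] at hmul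
  linarith

end Growth

section NearGeometric

/-- The limiting frequency `2 ^ (1 - ℓ)` of paths with `ℓ = i + 1 ≥ 2` vertices. -/
noncomputable def geometricWeight (i : ℕ) : ℝ :=
  if i = 0 then 0 else (1 / 2) ^ i

theorem geometricWeight_nonneg (i : ℕ) : 0 ≤ geometricWeight i := by
  unfold geometricWeight
  split_ifs <;> positivity

theorem geometricWeight_le (i : ℕ) : geometricWeight i ≤ (1 / 2) ^ i := by
  unfold geometricWeight
  split_ifs
  exacts [by positivity, le_rfl]

theorem hasSum_geometricWeight_mul_geom_sum {z : ℂ} (hz : ‖z‖ < 2) :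
    HasSum (fun i ↦ (geometricWeight i : ℂ) * ∑ a ∈ range (i + 1), z ^ a)
      ((2 + z) / (2 - z)) := by
  have hz2 : ‖z / 2‖ < 1 := by rw [norm_div, Complex.norm_ofNat]; linarith
  have hhalf : ‖(1 / 2 : ℂ)‖ < 1 := by norm_num
  have hcauchy := hasSum_sum_range_mul_of_summable_norm
    (summable_norm_geometric_of_norm_lt_one hz2) (summable_norm_geometric_of_norm_lt_one hhalf)
  rw [tsum_geometric_of_norm_lt_one hz2, tsum_geometric_of_norm_lt_one hhalf] at hcauchy
  have hzero : HasSum (fun i : ℕ ↦ if i = 0 then (1 : ℂ) else 0) 1 := hasSum_ite_eq 0 1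
  have hne : 2 - z ≠ 0 := by
    rw [sub_ne_zero]
    rintro rfl
    simp at hz
  have hterm (i : ℕ) : (geometricWeight i : ℂ) * ∑ a ∈ range (i + 1), z ^ a =
      ∑ a ∈ range (i + 1), (z / 2) ^ a * (1 / 2) ^ (i - a) - if i = 0 then 1 else 0 := by
    have hfactor : ∑ a ∈ range (i + 1), (z / 2) ^ a * (1 / 2) ^ (i - a) =
        (1 / 2 : ℂ) ^ i * ∑ a ∈ range (i + 1), z ^ a := by
      rw [mul_sum]
      refine sum_congr rfl fun a ha ↦ ?_
      rw [← Nat.add_sub_of_le (Nat.lt_succ_iff.1 (mem_range.1 ha)), Nat.add_sub_cancel_left]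
      ring
    rw [hfactor]
    rcases eq_or_ne i 0 with rfl | hi
    · simp [geometricWeight]
    · simp [geometricWeight, hi]
  have hvalue : (2 + z) / (2 - z) = (1 - z / 2)⁻¹ * (1 - 1 / 2)⁻¹ - 1 := by
    rw [show 1 - z / 2 = (2 - z) / 2 by ring, inv_div]
    field_simp
    ring
  rw [hvalue, funext hterm]
  exact hcauchy.sub hzero

/-- `p` is a probability vector supported on `{0, …, L - 1}` at distance at most `τ` from
`geometricWeight` in the `ℓ¹` norm weighted by `r ^ (i + 1)`. The partial sums are taken over all
of `ℕ`, so that `τ` also bounds the mass of `geometricWeight` beyond `L`. -/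
structure IsNearGeometric (L : ℕ) (p : ℕ → ℝ) (r τ : ℝ) : Prop where
  nonneg : ∀ i, 0 ≤ p i
  eq_zero : ∀ i, L ≤ i → p i = 0
  sum_eq_one : ∑ i : Fin L, p i = 1
  dist_le : ∀ N, ∑ i ∈ range N, |p i - geometricWeight i| * r ^ (i + 1) ≤ τ

theorem sum_geometricWeight_mul_pow_le {r : ℝ} (hr₀ : 0 ≤ r) (hr : r < 2) (N : ℕ) :
    ∑ i ∈ range N, geometricWeight i * r ^ (i + 1) ≤ 2 * r / (2 - r) := by
  have hr2 : r / 2 < 1 := by linarith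
  calc ∑ i ∈ range N, geometricWeight i * r ^ (i + 1)
      ≤ ∑ i ∈ range N, r * (r / 2) ^ i := by
        refine sum_le_sum fun i _ ↦ (mul_le_mul_of_nonneg_right (geometricWeight_le i)
          (by positivity)).trans_eq ?_
        ring
    _ ≤ ∑' i, r * (r / 2) ^ i :=
        ((summable_geometric_of_lt_one (by positivity) hr2).mul_left r).sum_le_tsum _
          fun i _ ↦ by positivity
    _ = 2 * r / (2 - r) := by
        rw [tsum_mul_left, tsum_geometric_of_lt_one (by positivity) hr2,
          show 1 - r / 2 = (2 - r) / 2 by ring, inv_div]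
        ring

variable {L : ℕ} {p : ℕ → ℝ} {r R τ : ℝ}

theorem IsNearGeometric.sum_mul_pow_le (hp : IsNearGeometric L p r τ) (hr₀ : 0 ≤ r)
    (hr : r < 2) : ∑ i : Fin L, p i * r ^ ((i : ℕ) + 1) ≤ τ + 2 * r / (2 - r) := by
  rw [Fin.sum_univ_eq_sum_range fun i ↦ p i * r ^ (i + 1)]
  refine le_trans ?_ (add_le_add (hp.dist_le L) (sum_geometricWeight_mul_pow_le hr₀ hr L))
  rw [← sum_add_distrib]
  refine sum_le_sum fun i _ ↦ ?_
  rw [← add_mul]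
  gcongr
  linarith [le_abs_self (p i - geometricWeight i)]

theorem norm_geom_sum_le {z : ℂ} (hR : 1 ≤ R) (hz : ‖z‖ ≤ R) (i : ℕ) :
    ‖∑ a ∈ range (i + 1), z ^ a‖ ≤ ((i + 1 : ℕ) : ℝ) * R ^ (i + 1) := by
  refine (norm_sum_le _ _).trans ((sum_le_card_nsmul _ _ (R ^ (i + 1)) fun a ha ↦ ?_).trans ?_)
  · rw [norm_pow]
    exact (pow_le_pow_left₀ (norm_nonneg _) hz a).trans
      (pow_le_pow_right₀ hR (mem_range.1 ha).le)
  · simp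

theorem IsNearGeometric.norm_sum_mul_geom_sum_sub_le {K : ℝ} (hp : IsNearGeometric L p r τ)
    (hK₀ : 0 ≤ K) (hK : ∀ j : ℕ, (j : ℝ) * R ^ j ≤ K * r ^ j) (hR : 1 ≤ R) (hR2 : R < 2)
    {z : ℂ} (hz : ‖z‖ ≤ R) :
    ‖∑ i : Fin L, (p i : ℂ) * ∑ a ∈ range ((i : ℕ) + 1), z ^ a - (2 + z) / (2 - z)‖ ≤ K * τ := by
  rw [Fin.sum_univ_eq_sum_range fun i ↦ (p i : ℂ) * ∑ a ∈ range (i + 1), z ^ a]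
  set D : ℕ → ℂ := fun N ↦ ∑ i ∈ range N, (p i : ℂ) * ∑ a ∈ range (i + 1), z ^ a with hD
  have hlim := (hasSum_geometricWeight_mul_geom_sum (hz.trans_lt hR2)).tendsto_sum_nat
  refine le_of_tendsto ((tendsto_const_nhds (x := D L)).sub hlim).norm
    (Filter.eventually_atTop.2 ⟨L, fun N hN ↦ ?_⟩)
  have hDN : D L = D N := sum_subset (range_subset_range.2 hN) fun i _ hi ↦ by
    rw [hp.eq_zero i (not_lt.1 (mem_range.not.1 hi)), Complex.ofReal_zero, zero_mul]
  rw [hDN, hD, ← sum_sub_distrib]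
  calc _ ≤ ∑ i ∈ range N, K * (|p i - geometricWeight i| * r ^ (i + 1)) := by
        refine (norm_sum_le _ _).trans (sum_le_sum fun i _ ↦ ?_)
        rw [← sub_mul, ← Complex.ofReal_sub, norm_mul, Complex.norm_real, Real.norm_eq_abs,
          mul_left_comm]
        gcongr
        exact (norm_geom_sum_le hR hz i).trans (hK (i + 1))
    _ ≤ K * τ := by
        rw [← mul_sum]
        gcongr
        exact hp.dist_le N

theorem quarter_le_norm_two_add_div_two_sub (hR2 : R < 2) {z : ℂ} (hz : ‖z‖ ≤ R) :
    (2 - R) / 4 ≤ ‖(2 + z) / (2 - z)‖ := by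
  have hnum : 2 - R ≤ ‖2 + z‖ := by
    have := norm_sub_norm_le (2 : ℂ) (-z)
    rw [norm_neg, sub_neg_eq_add, Complex.norm_ofNat] at this
    linarith
  have hsub : 2 - R ≤ ‖2 - z‖ := by
    have := norm_sub_norm_le (2 : ℂ) z
    rw [Complex.norm_ofNat] at this
    linarith
  have hden : ‖2 - z‖ ≤ 4 := by
    have := norm_sub_le (2 : ℂ) z
    rw [Complex.norm_ofNat] at this
    linarith
  rw [norm_div]
  exact div_le_div₀ (norm_nonneg _) hnum (by linarith) hden

theorem IsNearGeometric.sum_mul_geom_sum_ne_zero {K σ : ℝ} (hp : IsNearGeometric L p r τ)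
    (hK₀ : 0 ≤ K) (hK : ∀ j : ℕ, (j : ℝ) * R ^ j ≤ K * r ^ j) (hR : 1 ≤ R) (hR2 : R < 2)
    {y : Fin L → ℂ}
    (hy : ∑ i : Fin L, ‖y i - p i‖ * (((i : ℕ) + 1 : ℕ) * R ^ ((i : ℕ) + 1)) ≤ σ)
    (hσ : K * τ + σ < (2 - R) / 4) {z : ℂ} (hz : ‖z‖ ≤ R) :
    ∑ i, y i * ∑ a ∈ range ((i : ℕ) + 1), z ^ a ≠ 0 := by
  intro hzero
  have hdiff : ‖∑ i : Fin L, (p i : ℂ) * ∑ a ∈ range ((i : ℕ) + 1), z ^ a‖ ≤ σ := by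
    rw [← sub_zero (∑ i : Fin L, _), ← hzero, norm_sub_rev, ← sum_sub_distrib]
    refine (norm_sum_le _ _).trans (le_trans (sum_le_sum fun i _ ↦ ?_) hy)
    rw [← sub_mul, norm_mul]
    gcongr
    exact norm_geom_sum_le hR hz i
  have href := hp.norm_sum_mul_geom_sum_sub_le hK₀ hK hR hR2 hz
  have hlow := quarter_le_norm_two_add_div_two_sub hR2 hz
  have htri := norm_sub_norm_le ((2 + z) / (2 - z))
    (∑ i : Fin L, (p i : ℂ) * ∑ a ∈ range ((i : ℕ) + 1), z ^ a)
  rw [norm_sub_rev] at htri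
  linarith

end NearGeometric

section Perturbation

variable {R R₁ : ℝ}

theorem exists_sum_mul_pow_sub_one_le (hR : 0 < R) (hRR : R < R₁) {M : ℝ} (hM : 0 < M) :
    ∃ K > 0, ∃ c > 0, ∀ (L : ℕ) (p : Fin L → ℝ), (∀ i, 0 ≤ p i) →
      ∑ i, p i * R₁ ^ ((i : ℕ) + 1) ≤ M → ∀ r, 1 ≤ r → r ≤ 1 + c →
        ∑ i, p i * ((((i : ℕ) + 1 : ℕ) : ℝ) * (r ^ ((i : ℕ) + 1) - 1) * R ^ ((i : ℕ) + 1)) ≤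
          K * (r - 1) := by
  obtain ⟨R₂, hRR₂, hR₂R₁⟩ := exists_between hRR
  obtain ⟨K, hK₀, hK⟩ := exists_pow_mul_pow_le 2 (hR.trans hRR₂).le hR₂R₁
  refine ⟨K * M, by positivity, R₂ / R - 1, by rw [gt_iff_lt, sub_pos, one_lt_div hR]; exact hRR₂,
    fun L p hp hpM r hr hrc ↦ ?_⟩
  have hrR : r * R ≤ R₂ := by rw [← le_div_iff₀ hR]; linarith
  have hterm (j : ℕ) : (j : ℝ) * (r ^ j - 1) * R ^ j ≤ (r - 1) * (K * R₁ ^ j) :=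
    calc (j : ℝ) * (r ^ j - 1) * R ^ j ≤ j * ((r - 1) * (j * r ^ j)) * R ^ j := by
          gcongr
          refine (pow_sub_one_le_log_mul (by linarith) j).trans ?_
          gcongr
          exact Real.log_le_sub_one_of_pos (by linarith)
      _ = (r - 1) * ((j : ℝ) ^ 2 * (r * R) ^ j) := by rw [mul_pow]; ring
      _ ≤ (r - 1) * (K * R₁ ^ j) := by
          refine mul_le_mul_of_nonneg_left (le_trans ?_ (hK j)) (by linarith)
          gcongr
  calc _ ≤ ∑ i, (r - 1) * K * (p i * R₁ ^ ((i : ℕ) + 1)) :=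
        sum_le_sum fun i _ ↦ (mul_le_mul_of_nonneg_left (hterm (i + 1)) (hp i)).trans_eq (by ring)
    _ ≤ (r - 1) * K * M := by
        rw [← mul_sum]
        exact mul_le_mul_of_nonneg_left hpM (mul_nonneg (by linarith) hK₀.le)
    _ = K * M * (r - 1) := by ring

theorem norm_sub_one_sq_of_norm_eq_one {u : ℂ} (hu : ‖u‖ = 1) :
    ‖u - 1‖ ^ 2 = 2 * (1 - u.re) := by
  rw [← Complex.normSq_eq_norm_sq, Complex.normSq_sub, Complex.normSq_eq_norm_sq, hu]
  simp only [map_one, mul_one]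
  ring

variable {L : ℕ} {p : Fin L → ℝ} {u : Fin L → ℂ} {r : ℝ}

theorem one_le_of_sum_mul_pow_eq_one (hp : ∀ i, 0 ≤ p i) (hp1 : ∑ i, p i = 1)
    (hu : ∀ i, ‖u i‖ = 1) (hr : 0 < r)
    (hone : ∑ i, (p i : ℂ) * u i * (r : ℂ) ^ ((i : ℕ) + 1) = 1) : 1 ≤ r := by
  by_contra! hlt
  have hle : ‖∑ i, (p i : ℂ) * u i * (r : ℂ) ^ ((i : ℕ) + 1)‖ ≤ ∑ i, p i * r := by
    refine (norm_sum_le _ _).trans (sum_le_sum fun i _ ↦ ?_)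
    rw [norm_mul, norm_mul, hu, norm_pow, Complex.norm_of_nonneg (hp i),
      Complex.norm_of_nonneg hr.le, mul_one]
    exact mul_le_mul_of_nonneg_left (pow_le_of_le_one hr.le hlt.le (by lia)) (hp i)
  rw [hone, ← sum_mul, hp1, norm_one] at hle
  linarith

theorem sum_mul_one_sub_re_le (hp : ∀ i, 0 ≤ p i) (hp1 : ∑ i, p i = 1) (hu : ∀ i, ‖u i‖ = 1)
    (hr : 1 ≤ r) (hone : ∑ i, (p i : ℂ) * u i * (r : ℂ) ^ ((i : ℕ) + 1) = 1) :
    ∑ i, p i * (1 - (u i).re) ≤ ∑ i, p i * (r ^ ((i : ℕ) + 1) - 1) := by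
  have hre : ∑ i, p i * r ^ ((i : ℕ) + 1) * (u i).re = ∑ i, p i := by
    have := congrArg Complex.re hone
    rw [Complex.re_sum, Complex.one_re] at this
    rw [hp1, ← this]
    refine sum_congr rfl fun i _ ↦ ?_
    rw [mul_right_comm (p i : ℂ), ← Complex.ofReal_pow, ← Complex.ofReal_mul,
      Complex.re_ofReal_mul]
  calc ∑ i, p i * (1 - (u i).re) ≤ ∑ i, p i * r ^ ((i : ℕ) + 1) * (1 - (u i).re) := by
        refine sum_le_sum fun i _ ↦ mul_le_mul_of_nonneg_right ?_ ?_
        · exact le_mul_of_one_le_right (hp i) (one_le_pow₀ hr)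
        · linarith [(Complex.re_le_norm (u i)).trans (hu i).le]
    _ = ∑ i, p i * (r ^ ((i : ℕ) + 1) - 1) := by
        simp only [mul_sub, mul_one, sum_sub_distrib, hre]

theorem sum_mul_pow_sub_one_le_of_one_le (hp : ∀ i, 0 ≤ p i) (hR : 1 ≤ R) (hr : 1 ≤ r) :
    ∑ i, p i * (r ^ ((i : ℕ) + 1) - 1) ≤
      ∑ i, p i * ((((i : ℕ) + 1 : ℕ) : ℝ) * (r ^ ((i : ℕ) + 1) - 1) * R ^ ((i : ℕ) + 1)) := by
  refine sum_le_sum fun i _ ↦ mul_le_mul_of_nonneg_left ?_ (hp i)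
  have hpow : 0 ≤ r ^ ((i : ℕ) + 1) - 1 := sub_nonneg.2 (one_le_pow₀ hr)
  calc r ^ ((i : ℕ) + 1) - 1 ≤ (((i : ℕ) + 1 : ℕ) : ℝ) * (r ^ ((i : ℕ) + 1) - 1) :=
        le_mul_of_one_le_left hpow (by exact_mod_cast Nat.le_add_left 1 i)
    _ ≤ _ := le_mul_of_one_le_right (by positivity) (one_le_pow₀ hR)

theorem norm_mul_mul_pow_sub_le {q : ℝ} (hq : 0 ≤ q) {v : ℂ} (hv : ‖v‖ = 1) (hr : 1 ≤ r)
    (j : ℕ) : ‖q * v * (r : ℂ) ^ j - q‖ ≤ q * ((r ^ j - 1) + ‖v - 1‖) := by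
  have hsplit : q * v * (r : ℂ) ^ j - q = q * (v * ((r ^ j - 1 : ℝ) : ℂ) + (v - 1)) := by
    push_cast; ring
  rw [hsplit, norm_mul, Complex.norm_of_nonneg hq]
  refine mul_le_mul_of_nonneg_left ((norm_add_le _ _).trans_eq ?_) hq
  rw [norm_mul, hv, one_mul, Complex.norm_of_nonneg (sub_nonneg.2 (one_le_pow₀ hr))]

theorem exists_sum_mul_norm_sub_one_le (hR : 1 < R) (hRR : R < R₁) {M η : ℝ} (hM : 0 < M)
    (hη : 0 < η) : ∃ K > 0, ∀ (L : ℕ) (p : Fin L → ℝ) (u : Fin L → ℂ), (∀ i, 0 ≤ p i) →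
      (∀ i, ‖u i‖ = 1) → ∑ i, p i * R₁ ^ ((i : ℕ) + 1) ≤ M →
        ∑ i, p i * (‖u i - 1‖ * (((i : ℕ) + 1 : ℕ) * R ^ ((i : ℕ) + 1))) ≤
          K * ∑ i, p i * (1 - (u i).re) + η := by
  obtain ⟨R₂, hRR₂, hR₂R₁⟩ := exists_between hRR
  obtain ⟨K, hK₀, hK⟩ := exists_pow_mul_pow_le 1 (by linarith : 0 ≤ R) hRR₂
  obtain ⟨B, hB₀, hB⟩ := exists_mul_pow_le_sq_add (by linarith : 1 ≤ R₂) hR₂R₁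
    (κ := η / (K * M)) (by positivity)
  refine ⟨2 * (K * B), by positivity, fun L p u hp hu hpM ↦ ?_⟩
  have hterm (i : Fin L) : ‖u i - 1‖ * (((i : ℕ) + 1 : ℕ) * R ^ ((i : ℕ) + 1)) ≤
      2 * (K * B) * (1 - (u i).re) + η / M * R₁ ^ ((i : ℕ) + 1) := by
    have hle2 : ‖u i - 1‖ ≤ 2 := (norm_sub_le _ _).trans_eq (by rw [hu, norm_one]; norm_num)
    calc ‖u i - 1‖ * (((i : ℕ) + 1 : ℕ) * R ^ ((i : ℕ) + 1))
        ≤ ‖u i - 1‖ * (K * R₂ ^ ((i : ℕ) + 1)) := by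
          refine mul_le_mul_of_nonneg_left ?_ (norm_nonneg _)
          simpa only [pow_one] using hK (i + 1)
      _ = K * (‖u i - 1‖ * R₂ ^ ((i : ℕ) + 1)) := by ring
      _ ≤ K * (B * ‖u i - 1‖ ^ 2 + η / (K * M) * R₁ ^ ((i : ℕ) + 1)) := by
          gcongr
          exact hB _ _ (norm_nonneg _) hle2
      _ = _ := by
          rw [norm_sub_one_sq_of_norm_eq_one (hu i)]
          field_simp
  calc _ ≤ ∑ i, (2 * (K * B) * (p i * (1 - (u i).re)) +
          η / M * (p i * R₁ ^ ((i : ℕ) + 1))) :=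
        sum_le_sum fun i _ ↦ (mul_le_mul_of_nonneg_left (hterm i) (hp i)).trans_eq (by ring)
    _ ≤ 2 * (K * B) * ∑ i, p i * (1 - (u i).re) + η / M * M := by
        rw [sum_add_distrib, ← mul_sum, ← mul_sum]
        gcongr
    _ = _ := by rw [div_mul_cancel₀ _ hM.ne']

theorem exists_sum_norm_sub_le (hR : 1 < R) (hRR : R < R₁) {M η : ℝ} (hM : 0 < M) (hη : 0 < η) :
    ∃ c > 0, ∀ (L : ℕ) (p : Fin L → ℝ) (u : Fin L → ℂ) (r : ℝ), (∀ i, 0 ≤ p i) →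
      ∑ i, p i = 1 → (∀ i, ‖u i‖ = 1) → ∑ i, p i * R₁ ^ ((i : ℕ) + 1) ≤ M →
      1 ≤ r → r ≤ 1 + c → ∑ i, (p i : ℂ) * u i * (r : ℂ) ^ ((i : ℕ) + 1) = 1 →
        ∑ i, ‖(p i : ℂ) * u i * (r : ℂ) ^ ((i : ℕ) + 1) - p i‖ *
          (((i : ℕ) + 1 : ℕ) * R ^ ((i : ℕ) + 1)) ≤ η ∧
        ∑ i, p i * ((((i : ℕ) + 1 : ℕ) : ℝ) * (r ^ ((i : ℕ) + 1) - 1) * R ^ ((i : ℕ) + 1)) ≤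
          η := by
  obtain ⟨K, hK₀, c₀, hc₀, hK⟩ := exists_sum_mul_pow_sub_one_le (by linarith : 0 < R) hRR hM
  obtain ⟨B, hB₀, hB⟩ := exists_sum_mul_norm_sub_one_le hR hRR hM (half_pos hη)
  refine ⟨min c₀ (η / (2 * ((1 + B) * K))), by positivity,
    fun L p u r hp hp1 hu hpM hr hrc hone ↦ ?_⟩
  have hexcess := hK L p hp hpM r hr (hrc.trans (by gcongr; exact min_le_left _ _))
  set Y := ∑ i, p i * ((((i : ℕ) + 1 : ℕ) : ℝ) * (r ^ ((i : ℕ) + 1) - 1) * R ^ ((i : ℕ) + 1))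
  have hre := (sum_mul_one_sub_re_le hp hp1 hu hr hone).trans
    (sum_mul_pow_sub_one_le_of_one_le hp hR.le hr)
  have hY : (1 + B) * Y ≤ η / 2 := by
    have hrc' : r - 1 ≤ η / (2 * ((1 + B) * K)) := by
      linarith [min_le_right c₀ (η / (2 * ((1 + B) * K)))]
    calc (1 + B) * Y ≤ (1 + B) * (K * (η / (2 * ((1 + B) * K)))) := by
          gcongr
          exact hexcess.trans (by gcongr)
      _ = η / 2 := by field_simp
  have hY₀ : 0 ≤ Y := sum_nonneg fun i _ ↦ mul_nonneg (hp i) (mul_nonneg (mul_nonneg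
    (by positivity) (sub_nonneg.2 (one_le_pow₀ hr))) (by positivity))
  refine ⟨?_, by nlinarith⟩
  calc _ ≤ Y + ∑ i, p i * (‖u i - 1‖ * (((i : ℕ) + 1 : ℕ) * R ^ ((i : ℕ) + 1))) := by
        rw [← sum_add_distrib]
        refine sum_le_sum fun i _ ↦ ?_
        refine (mul_le_mul_of_nonneg_right (norm_mul_mul_pow_sub_le (hp i) (hu i) hr _)
          (by positivity)).trans_eq ?_
        ring
    _ ≤ Y + (B * ∑ i, p i * (1 - (u i).re) + η / 2) := by gcongr; exact hB L p u hp hu hpM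
    _ ≤ Y + (B * Y + η / 2) := by gcongr
    _ ≤ η := by linarith

theorem sum_mul_one_sub_re_le_log_mul (hp : ∀ i, 0 ≤ p i) (hp1 : ∑ i, p i = 1)
    (hu : ∀ i, ‖u i‖ = 1) (hr : 1 ≤ r) (hR : 1 ≤ R)
    (hone : ∑ i, (p i : ℂ) * u i * (r : ℂ) ^ ((i : ℕ) + 1) = 1)
    (hexcess : ∑ i, p i * ((((i : ℕ) + 1 : ℕ) : ℝ) * (r ^ ((i : ℕ) + 1) - 1) *
      R ^ ((i : ℕ) + 1)) ≤ 1 / 10) :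
    0.9 * ∑ i, p i * (1 - (u i).re) ≤ Real.log r * ∑ i : Fin L, p i * ((i : ℕ) + 1) := by
  set Y := ∑ i, p i * ((((i : ℕ) + 1 : ℕ) : ℝ) * (r ^ ((i : ℕ) + 1) - 1) * R ^ ((i : ℕ) + 1))
  have hmean : 1 ≤ ∑ i : Fin L, p i * ((i : ℕ) + 1) := by
    rw [← hp1]
    refine sum_le_sum fun i _ ↦ le_mul_of_one_le_right (hp i) ?_
    linarith [(Nat.cast_nonneg i : (0 : ℝ) ≤ (i : ℕ))]
  have hlog : ∑ i, p i * (r ^ ((i : ℕ) + 1) - 1) ≤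
      Real.log r * (∑ i : Fin L, p i * ((i : ℕ) + 1) + Y) := by
    rw [← sum_add_distrib, mul_sum]
    refine sum_le_sum fun i _ ↦ ?_
    have hpow := pow_sub_one_le_log_mul (by linarith : 0 < r) ((i : ℕ) + 1)
    have hR1 : (((i : ℕ) + 1 : ℕ) : ℝ) * (r ^ ((i : ℕ) + 1) - 1) ≤
        (((i : ℕ) + 1 : ℕ) : ℝ) * (r ^ ((i : ℕ) + 1) - 1) * R ^ ((i : ℕ) + 1) :=
      le_mul_of_one_le_right (mul_nonneg (by positivity) (sub_nonneg.2 (one_le_pow₀ hr)))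
        (one_le_pow₀ hR)
    have hbound := hpow.trans (mul_le_mul_of_nonneg_left
      (by linarith : _ ≤ (((i : ℕ) + 1 : ℕ) : ℝ) + (((i : ℕ) + 1 : ℕ) : ℝ) *
        (r ^ ((i : ℕ) + 1) - 1) * R ^ ((i : ℕ) + 1)) (Real.log_nonneg hr))
    refine (mul_le_mul_of_nonneg_left hbound (hp i)).trans_eq ?_
    push_cast
    ring
  have hlog₀ := Real.log_nonneg hr
  have hre := sum_mul_one_sub_re_le hp hp1 hu hr hone
  nlinarith [mul_le_mul_of_nonneg_left hexcess hlog₀, mul_le_mul_of_nonneg_left hmean hlog₀]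

end Perturbation

section Dichotomy

section CommRing

variable {A : Type*} [CommRing A] {L : ℕ}

theorem IsReciprocalRoots.map_mul {x : Fin L → A} {Λ : Multiset A} (h : IsReciprocalRoots x Λ)
    (w : A) : IsReciprocalRoots (fun i ↦ x i * w ^ ((i : ℕ) + 1)) (Λ.map (· * w)) := by
  have hcomp := congrArg (fun f ↦ f.comp (Polynomial.C w * Polynomial.X)) h
  simp only [Polynomial.multiset_prod_comp, Multiset.map_map, Function.comp_def,
    Polynomial.sub_comp, Polynomial.one_comp, Polynomial.mul_comp, Polynomial.C_comp,
    Polynomial.X_comp, Polynomial.sum_comp, Polynomial.pow_comp] at hcomp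
  simpa only [IsReciprocalRoots, Multiset.map_map, Function.comp_def, Polynomial.C_mul,
    Polynomial.C_pow, mul_assoc, mul_pow] using hcomp

theorem IsReciprocalRoots.prod_one_sub_mul_of_cons_one [IsDomain A] {y : Fin L → A}
    {Λ : Multiset A} (h : IsReciprocalRoots y (1 ::ₘ Λ)) (z : A) :
    (Λ.map fun l ↦ 1 - l * z).prod = ∑ i, y i * ∑ a ∈ range ((i : ℕ) + 1), z ^ a := by
  have hsum : ∑ i, y i = 1 := by
    have hone := h.prod_one_sub_mul 1
    simp only [Multiset.map_cons, Multiset.prod_cons, mul_one, sub_self, zero_mul,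
      one_pow] at hone
    exact (sub_eq_zero.1 hone.symm).symm
  have hfactor : (1 - Polynomial.X) *
      ∑ i, Polynomial.C (y i) * ∑ a ∈ range ((i : ℕ) + 1), Polynomial.X ^ a =
        1 - ∑ i, Polynomial.C (y i) * Polynomial.X ^ ((i : ℕ) + 1) := by
    have hC : (1 : Polynomial A) = ∑ i, Polynomial.C (y i) := by rw [← map_sum, hsum, map_one]
    conv_rhs => rw [hC]
    rw [mul_sum, ← sum_sub_distrib]
    refine sum_congr rfl fun i _ ↦ ?_
    rw [mul_left_comm, mul_neg_geom_sum]
    ring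
  have hne : (1 - Polynomial.X : Polynomial A) ≠ 0 := by
    rw [← neg_sub, neg_ne_zero, ← map_one Polynomial.C]
    exact Polynomial.X_sub_C_ne_zero 1
  rw [IsReciprocalRoots, ← hfactor, Multiset.map_cons, Multiset.prod_cons, map_one,
    one_mul] at h
  have heval := congrArg (Polynomial.eval z) (mul_left_cancel₀ hne h)
  rw [Polynomial.eval_multiset_prod, Multiset.map_map] at heval
  simpa [Polynomial.eval_finsetSum, Function.comp_def] using heval

end CommRing

theorem IsReciprocalRoots.sum_mul_inv_pow {K : Type*} [Field K] {L : ℕ} {x : Fin L → K}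
    {Λ : Multiset K} (h : IsReciprocalRoots x Λ) {l : K} (hl : l ∈ Λ) (hl₀ : l ≠ 0) :
    ∑ i, x i * l⁻¹ ^ ((i : ℕ) + 1) = 1 := by
  have hroot := h.prod_one_sub_mul l⁻¹
  rw [Multiset.prod_eq_zero (Multiset.mem_map.2 ⟨l, hl, by
    rw [mul_inv_cancel₀ hl₀, sub_self]⟩)] at hroot
  exact (sub_eq_zero.1 hroot.symm).symm

theorem IsReciprocalRoots.norm_le_of_sum_mul_geom_sum_ne_zero {L : ℕ} {x : Fin L → ℂ}
    {Λ : Multiset ℂ} (h : IsReciprocalRoots x Λ) {l₁ : ℂ} (hl₁ : l₁ ∈ Λ) (hl₁₀ : l₁ ≠ 0)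
    (hl₁₁ : ‖l₁‖ ≤ 1) {R : ℝ} (hR : 0 < R)
    (hne : ∀ z : ℂ, ‖z‖ ≤ R → ∑ i, x i * l₁⁻¹ ^ ((i : ℕ) + 1) *
      ∑ a ∈ range ((i : ℕ) + 1), z ^ a ≠ 0) :
    ∀ l ∈ Λ.erase l₁, ‖l‖ ≤ 1 / R := by
  intro l hl
  by_contra! hlt
  have hl₀ : l ≠ 0 := norm_pos_iff.1 ((one_div_pos.2 hR).trans hlt)
  have hscaled := h.map_mul l₁⁻¹
  rw [← Multiset.cons_erase hl₁, Multiset.map_cons, mul_inv_cancel₀ hl₁₀] at hscaled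
  refine hne (l₁ / l) ?_ ?_
  · rw [norm_div, div_le_iff₀ (norm_pos_iff.2 hl₀)]
    rw [div_lt_iff₀ hR] at hlt
    linarith
  · rw [← hscaled.prod_one_sub_mul_of_cons_one]
    refine Multiset.prod_eq_zero (Multiset.mem_map.2 ⟨l * l₁⁻¹, Multiset.mem_map_of_mem _ hl, ?_⟩)
    field_simp
    exact sub_self 1

theorem polarPoint_mul_inv_pow {L : ℕ} (p ψ : Fin L → ℝ) (l : ℂ) (i : Fin L) :
    polarPoint p ψ i * l⁻¹ ^ ((i : ℕ) + 1) =
      p i * Complex.exp ((ψ i - ((i : ℕ) + 1) * l.arg : ℝ) * Complex.I) *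
        ((‖l‖⁻¹ : ℝ) : ℂ) ^ ((i : ℕ) + 1) := by
  have hinv : l⁻¹ = ((‖l‖⁻¹ : ℝ) : ℂ) * Complex.exp (-(l.arg * Complex.I)) := by
    conv_lhs => rw [← Complex.norm_mul_exp_arg_mul_I l, mul_inv, ← Complex.exp_neg]
    rw [Complex.ofReal_inv]
  rw [polarPoint, hinv, mul_pow, ← Complex.exp_nat_mul,
    mul_comm (((‖l‖⁻¹ : ℝ) : ℂ) ^ ((i : ℕ) + 1)), mul_assoc (p i : ℂ), ← mul_assoc (Complex.exp _),
    ← Complex.exp_add, ← mul_assoc]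
  congr 3
  push_cast
  ring

/-- The weighted distance of the phases `ψ i` from the arithmetic progression `(i + 1) φ`. -/
noncomputable def phaseDefect {L : ℕ} (p ψ : Fin L → ℝ) (φ : ℝ) : ℝ :=
  ∑ i, p i * (1 - Real.cos (ψ i - ((i : ℕ) + 1) * φ))

theorem IsReciprocalRoots.sum_mul_cexp_mul_inv_norm_pow {L : ℕ} {p ψ : Fin L → ℝ} {Λ : Multiset ℂ}
    (hΛ : IsReciprocalRoots (polarPoint p ψ) Λ) {l : ℂ} (hl : l ∈ Λ) (hl₀ : l ≠ 0) :
    ∑ i : Fin L, (p i : ℂ) * Complex.exp ((ψ i - ((i : ℕ) + 1) * l.arg : ℝ) * Complex.I) *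
      ((‖l‖⁻¹ : ℝ) : ℂ) ^ ((i : ℕ) + 1) = 1 := by
  simpa only [polarPoint_mul_inv_pow] using hΛ.sum_mul_inv_pow hl hl₀

theorem exists_isolated_reciprocalRoot {R R₁ : ℝ} (hR : 1 < R) (hRR : R < R₁) (hR₁ : R₁ < 2) :
    ∃ c > 0, ∃ τ > 0, ∀ (L : ℕ) (p : ℕ → ℝ), IsNearGeometric L p R₁ τ →
      ∀ (ψ : Fin L → ℝ) (Λ : Multiset ℂ), IsReciprocalRoots (polarPoint (fun i ↦ p i) ψ) Λ →
        ∀ l₁ ∈ Λ, 1 / (1 + c) ≤ ‖l₁‖ → (∀ l ∈ Λ.erase l₁, ‖l‖ ≤ 1 / R) ∧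
          Real.log ‖l₁‖ * ∑ i : Fin L, p i * ((i : ℕ) + 1) ≤
            -(0.9 * phaseDefect (fun i ↦ p i) ψ l₁.arg) := by
  obtain ⟨K, hK₀, hK⟩ := exists_pow_mul_pow_le 1 (by linarith : 0 ≤ R) hRR
  simp only [pow_one] at hK
  have hM : 0 < 1 + 2 * R₁ / (2 - R₁) := by
    have := div_pos (by linarith : 0 < 2 * R₁) (sub_pos.2 hR₁)
    linarith
  have hgap : 0 < (2 - R) / 16 := by linarith
  obtain ⟨c, hc₀, hc⟩ := exists_sum_norm_sub_le hR hRR hM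
    (lt_min (by norm_num : (0 : ℝ) < 1 / 10) hgap)
  refine ⟨c, hc₀, min 1 ((2 - R) / 16 / K), by positivity, fun L p hp ψ Λ hΛ l₁ hl₁ hl₁c ↦ ?_⟩
  have hl₁pos : 0 < ‖l₁‖ := (by positivity : 0 < 1 / (1 + c)).trans_le hl₁c
  have hone := hΛ.sum_mul_cexp_mul_inv_norm_pow hl₁ (norm_pos_iff.1 hl₁pos)
  set u : Fin L → ℂ := fun i ↦
    Complex.exp ((ψ i - ((i : ℕ) + 1) * l₁.arg : ℝ) * Complex.I)
  have hu (i) : ‖u i‖ = 1 := Complex.norm_exp_ofReal_mul_I _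
  have hr := one_le_of_sum_mul_pow_eq_one (fun i ↦ hp.nonneg i) hp.sum_eq_one hu
    (inv_pos.2 hl₁pos) hone
  have hrc : ‖l₁‖⁻¹ ≤ 1 + c := inv_le_of_inv_le₀ (by positivity) (by rwa [← one_div])
  have hmoment := (hp.sum_mul_pow_le (by linarith) hR₁).trans
    (by gcongr; exact min_le_left _ _ : _ ≤ 1 + 2 * R₁ / (2 - R₁))
  obtain ⟨hdev, hexcess⟩ := hc L (fun i ↦ p i) u _ (fun i ↦ hp.nonneg i) hp.sum_eq_one hu
    hmoment hr hrc hone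
  constructor
  · refine hΛ.norm_le_of_sum_mul_geom_sum_ne_zero hl₁ (norm_pos_iff.1 hl₁pos)
      ((one_le_inv₀ hl₁pos).1 hr) (by linarith) fun z hz ↦ ?_
    simp only [polarPoint_mul_inv_pow]
    refine hp.sum_mul_geom_sum_ne_zero hK₀.le hK hR.le (by linarith)
      (hdev.trans (min_le_right _ _)) ?_ hz
    have := (le_div_iff₀' hK₀).1 (min_le_right 1 ((2 - R) / 16 / K))
    linarith
  · have hlog := sum_mul_one_sub_re_le_log_mul (fun i ↦ hp.nonneg i) hp.sum_eq_one hu hr hR.le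
      hone (hexcess.trans (min_le_left _ _))
    simp only [u, Complex.exp_ofReal_mul_I_re, Real.log_inv] at hlog
    rw [phaseDefect]
    linarith

/-- For all phases `ψ`, the reciprocal roots of `1 - ∑ p i * exp (I * ψ i) * z ^ (i + 1)` either all
lie in the disc of radius `r₁`, or all but one lie in the disc of radius `r₂` and the modulus of the
exceptional one is controlled by the phase defect. -/
def SpectralDichotomy {L : ℕ} (p : Fin L → ℝ) (r₁ r₂ : ℝ) : Prop :=
  ∀ (ψ : Fin L → ℝ) (Λ : Multiset ℂ), IsReciprocalRoots (polarPoint p ψ) Λ →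
    (∀ l ∈ Λ, ‖l‖ ≤ r₁) ∨ ∃ l₁ ∈ Λ, r₁ ≤ ‖l₁‖ ∧ (∀ l ∈ Λ.erase l₁, ‖l‖ ≤ r₂) ∧
      ∃ φ, Real.log ‖l₁‖ * ∑ i, p i * ((i : ℕ) + 1) ≤ -(0.9 * phaseDefect p ψ φ)

theorem exists_spectralDichotomy {r ρ : ℝ} (hr : r < 2) (hρ : 1 < r * ρ) (hρ₀ : 0 < ρ)
    (hρ₁ : ρ < 1) : ∃ a, 0 < a ∧ a < 1 ∧ ∃ τ > 0, ∀ (L : ℕ) (p : ℕ → ℝ), IsNearGeometric L p r τ →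
      SpectralDichotomy (fun i : Fin L ↦ p i) (a ^ 2) (ρ * a ^ 2) := by
  obtain ⟨R, hρR, hRr⟩ := exists_between ((div_lt_iff₀ hρ₀).2 hρ)
  have hR : 1 < R := ((one_lt_div hρ₀).2 hρ₁).trans hρR
  have hRρ : 1 < R * ρ := (div_lt_iff₀ hρ₀).1 hρR
  obtain ⟨c, hc, τ, hτ, h⟩ := exists_isolated_reciprocalRoot hR hRr hr
  set c' := min c (R * ρ - 1)
  have hc'₀ : 0 < c' := lt_min hc (sub_pos.2 hRρ)
  have hsq : (√(1 / (1 + c'))) ^ 2 = 1 / (1 + c') := Real.sq_sqrt (by positivity)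
  have hle : 1 / R ≤ ρ * (1 / (1 + c')) := by
    rw [mul_one_div, div_le_div_iff₀ (by linarith) (by positivity)]
    linarith [min_le_right c (R * ρ - 1)]
  refine ⟨√(1 / (1 + c')), by positivity, ?_, τ, hτ, fun L p hp ψ Λ hΛ ↦ ?_⟩
  · rw [Real.sqrt_lt' one_pos, one_pow, div_lt_one (by positivity)]
    linarith
  rw [hsq]
  by_cases hsmall : ∀ l ∈ Λ, ‖l‖ ≤ 1 / (1 + c')
  · exact Or.inl hsmall
  push Not at hsmall
  obtain ⟨l₁, hl₁, hlarge⟩ := hsmall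
  obtain ⟨hrest, hlog⟩ := h L p hp ψ Λ hΛ l₁ hl₁
    ((one_div_le_one_div_of_le (by positivity) (by gcongr; exact min_le_left _ _)).trans hlarge.le)
  exact Or.inr ⟨l₁, hl₁, hlarge.le, fun l hl ↦ (hrest l hl).trans hle, l₁.arg, hlog⟩

end Dichotomy

/-! ### Gaussian sums on the torus -/

section CircleSum

theorem sum_range_exp_neg_mul_sq_le {a : ℝ} (ha : 0 < a) (H : ℕ) :
    ∑ i ∈ range H, Real.exp (-a * (i : ℝ) ^ 2) ≤ 1 + √(Real.pi / a) / 2 := by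
  rcases H with _ | H
  · simp only [range_zero, sum_empty]
    positivity
  have hanti : AntitoneOn (fun x : ℝ ↦ Real.exp (-a * x ^ 2)) (Set.Icc 0 (0 + (H : ℝ))) := by
    intro x hx y _ hxy
    have hsq : x ^ 2 ≤ y ^ 2 := pow_le_pow_left₀ hx.1 hxy 2
    exact Real.exp_le_exp.2 (by nlinarith)
  have hintegral := hanti.sum_le_integral
  simp only [zero_add] at hintegral
  rw [sum_range_succ', add_comm]
  gcongr
  · simp
  refine hintegral.trans ?_
  rw [← integral_gaussian_Ioi, intervalIntegral.integral_of_le (by positivity)]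
  exact MeasureTheory.setIntegral_mono_set (integrable_exp_neg_mul_sq ha).integrableOn
    (.of_forall fun x ↦ (Real.exp_pos _).le) (.of_forall fun x hx ↦ hx.1)

theorem periodic_sum_range_add {G : ℝ → ℝ} {Q : ℕ} (hG : Function.Periodic G Q) :
    Function.Periodic (fun x ↦ ∑ j ∈ range Q, G (j + x)) 1 := by
  intro x
  have hfirst := sum_range_succ' (fun j : ℕ ↦ G (j + x)) Q
  rw [sum_range_succ, add_comm (Q : ℝ) x, hG x, Nat.cast_zero, zero_add] at hfirst
  refine Eq.trans ?_ (add_right_cancel hfirst).symm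
  refine sum_congr rfl fun j _ ↦ congrArg G ?_
  push_cast
  ring

theorem exp_neg_mul_one_sub_cos_le {b H y t : ℝ} (hb : 0 ≤ b) (hH : 0 < H) (ht : 0 ≤ t)
    (hty : t ≤ |y|) (hyH : |y| ≤ H) :
    Real.exp (-(b * (1 - Real.cos (Real.pi * y / H)))) ≤
      Real.exp (-(2 * b / H ^ 2) * t ^ 2) := by
  have hcos := Real.cos_le_one_sub_mul_cos_sq (x := Real.pi * y / H) <| by
    rw [abs_div, abs_mul, abs_of_pos Real.pi_pos, abs_of_pos hH, div_le_iff₀ hH]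
    exact mul_le_mul_of_nonneg_left hyH Real.pi_pos.le
  have hquad : 2 / Real.pi ^ 2 * (Real.pi * y / H) ^ 2 = 2 * y ^ 2 / H ^ 2 := by
    field_simp
  have hsq : 2 * t ^ 2 / H ^ 2 ≤ 2 * y ^ 2 / H ^ 2 := by
    rw [← sq_abs y]
    gcongr
  rw [Real.exp_le_exp,
    show -(2 * b / H ^ 2) * t ^ 2 = -(b * (2 * t ^ 2 / H ^ 2)) by ring]
  exact neg_le_neg (mul_le_mul_of_nonneg_left (by linarith) hb)

theorem sum_range_exp_neg_mul_one_sub_cos_centred_le {b β : ℝ} (hb : 0 ≤ b) {H : ℕ} (hH : 0 < H)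
    (hβ₀ : 0 ≤ β) (hβ₁ : β ≤ 1) :
    ∑ j ∈ range (2 * H), Real.exp (-(b * (1 - Real.cos (Real.pi * (j + (β - H)) / H)))) ≤
      2 * ∑ i ∈ range H, Real.exp (-(2 * b / (H : ℝ) ^ 2) * (i : ℝ) ^ 2) := by
  have hH' : (0 : ℝ) < H := by exact_mod_cast hH
  rw [two_mul, two_mul, sum_range_add]
  refine add_le_add ?_ (sum_le_sum fun j hj ↦ ?_)
  · rw [← sum_range_reflect fun i : ℕ ↦ Real.exp (-(2 * b / (H : ℝ) ^ 2) * (i : ℝ) ^ 2)]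
    refine sum_le_sum fun j hj ↦ ?_
    have hj' : (j : ℝ) + 1 ≤ H := by exact_mod_cast mem_range.1 hj
    have habs : |j + (β - H)| = H - j - β := by
      rw [abs_of_nonpos (by linarith)]
      ring
    have hsub : ((H - 1 - j : ℕ) : ℝ) = H - 1 - j := by
      rw [Nat.sub_sub, Nat.cast_sub (by have := mem_range.1 hj; lia)]
      push_cast
      ring
    exact exp_neg_mul_one_sub_cos_le hb hH' (by positivity) (by linarith)
      (by linarith [(Nat.cast_nonneg j : (0 : ℝ) ≤ j)])
  · have hj' : (j : ℝ) + 1 ≤ H := by exact_mod_cast mem_range.1 hj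
    have habs : |(H + j : ℕ) + (β - H)| = j + β := by
      rw [abs_of_nonneg] <;> push_cast <;> linarith [(Nat.cast_nonneg j : (0 : ℝ) ≤ j)]
    exact exp_neg_mul_one_sub_cos_le hb hH' (by positivity) (by linarith) (by linarith)

theorem sum_range_exp_neg_mul_one_sub_cos_le {b : ℝ} (hb : 0 < b) {H : ℕ} (hH : 0 < H) (α : ℝ) :
    ∑ j ∈ range (2 * H), Real.exp (-(b * (1 - Real.cos (Real.pi * j / H - α)))) ≤
      2 + H * √(Real.pi / (2 * b)) := by
  have hH' : (0 : ℝ) < H := by exact_mod_cast hH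
  set G : ℝ → ℝ := fun x ↦ Real.exp (-(b * (1 - Real.cos (Real.pi * x / H)))) with hG
  have hperiod : Function.Periodic G (2 * H : ℕ) := fun x ↦ by
    have hshift : Real.pi * (x + (2 * H : ℕ)) / H = Real.pi * x / H + 2 * Real.pi := by
      push_cast
      field_simp
    simp only [hG, hshift, Real.cos_add_two_pi]
  set x := -(α * H / Real.pi) with hx
  have hcentre : ∑ j ∈ range (2 * H), Real.exp (-(b * (1 - Real.cos (Real.pi * j / H - α)))) =
      ∑ j ∈ range (2 * H), G (j + (Int.fract x - H)) := by
    have hmove := (periodic_sum_range_add hperiod).sub_zsmul_eq (x := x) (⌊x⌋ + H)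
    rw [show Int.fract x - H = x - (⌊x⌋ + H : ℤ) • (1 : ℝ) by
      rw [Int.fract, zsmul_one]; push_cast; ring, hmove]
    refine sum_congr rfl fun j _ ↦ ?_
    simp only [hG]
    congr 5
    rw [hx]
    field_simp
    ring
  have hgauss := sum_range_exp_neg_mul_sq_le (by positivity : 0 < 2 * b / (H : ℝ) ^ 2) H
  rw [show Real.pi / (2 * b / (H : ℝ) ^ 2) = (H : ℝ) ^ 2 * (Real.pi / (2 * b)) by field_simp,
    Real.sqrt_mul (by positivity), Real.sqrt_sq hH'.le] at hgauss
  have hcentred := sum_range_exp_neg_mul_one_sub_cos_centred_le hb.le hH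
    (Int.fract_nonneg x) (Int.fract_lt_one x).le
  rw [hcentre]
  linarith

end CircleSum

section TorusSum

theorem sqrt_mul_pow_le_factorial (m : ℕ) : √m * (m / Real.exp 1) ^ m ≤ m.factorial := by
  refine le_trans ?_ (Stirling.le_factorial_stirling m)
  gcongr
  nlinarith [Real.pi_gt_three, (Nat.cast_nonneg m : (0 : ℝ) ≤ m)]

theorem factorial_le_exp_one_mul_sqrt_mul_pow {m : ℕ} (hm : m ≠ 0) :
    (m.factorial : ℝ) ≤ Real.exp 1 * √m * (m / Real.exp 1) ^ m := by
  obtain ⟨j, rfl⟩ := Nat.exists_eq_succ_of_ne_zero hm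
  have hstirling := Stirling.stirlingSeq'_antitone (Nat.zero_le j)
  simp only [Function.comp_apply, Nat.succ_eq_add_one, zero_add, Stirling.stirlingSeq_one]
    at hstirling
  rw [Stirling.stirlingSeq, div_le_iff₀ (by positivity)] at hstirling
  refine hstirling.trans_eq ?_
  rw [Nat.succ_eq_add_one, Real.sqrt_mul zero_le_two]
  field_simp

theorem factorial_mul_sum_exp_neg_mul_one_sub_cos_le {μ n : ℕ} (hμ : μ ≤ n) (hn : 0 < n) (α : ℝ) :
    μ.factorial * ∑ j : Fin (200 * n), Real.exp (-(0.8 * (μ * (1 -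
      Real.cos (2 * Real.pi * (j : ℕ) / (200 * n : ℕ) - α))))) ≤
        1.95 * (200 * n) * (μ / Real.exp 1) ^ μ := by
  have hn' : (1 : ℝ) ≤ n := by exact_mod_cast hn
  rcases eq_or_ne μ 0 with rfl | hμ₀
  · norm_num
    linarith
  have hμn : (μ : ℝ) ≤ n := by exact_mod_cast hμ
  have hcircle : ∑ j : Fin (200 * n), Real.exp (-(0.8 * (μ * (1 -
      Real.cos (2 * Real.pi * (j : ℕ) / (200 * n : ℕ) - α))))) ≤
        2 + (100 * n) * √(Real.pi / (2 * (0.8 * μ))) := by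
    have hangle (j : ℕ) :
        Real.pi * j / (100 * n : ℕ) = 2 * Real.pi * j / (200 * n : ℕ) := by
      push_cast
      field_simp
      ring
    have h := sum_range_exp_neg_mul_one_sub_cos_le (by positivity : 0 < 0.8 * (μ : ℝ))
      (by lia : 0 < 100 * n) α
    rw [← mul_assoc, sum_range] at h
    simp only [hangle, mul_assoc (0.8 : ℝ)] at h
    exact_mod_cast h
  have hsqrt : √μ * √(Real.pi / (2 * (0.8 * μ))) ≤ 1.402 := by
    rw [← Real.sqrt_mul (by positivity), Real.sqrt_le_left (by norm_num),
      show (μ : ℝ) * (Real.pi / (2 * (0.8 * μ))) = Real.pi / 1.6 by field_simp; norm_num,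
      div_le_iff₀ (by norm_num)]
    linarith [Real.pi_lt_d4]
  have hsqrt_le : √(μ : ℝ) ≤ n := (Real.sqrt_le_left (by linarith)).2 (by nlinarith)
  calc _ ≤ Real.exp 1 * √μ * (μ / Real.exp 1) ^ μ *
          (2 + (100 * n) * √(Real.pi / (2 * (0.8 * μ)))) := by
        gcongr
        exact factorial_le_exp_one_mul_sqrt_mul_pow hμ₀
    _ = Real.exp 1 * (2 * √μ + 100 * n * (√μ * √(Real.pi / (2 * (0.8 * μ))))) *
          (μ / Real.exp 1) ^ μ := by ring
    _ ≤ 2.7183 * (2 * n + 100 * n * 1.402) * (μ / Real.exp 1) ^ μ := by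
        gcongr
        exact (Real.exp_one_lt_d9.trans (by norm_num)).le
    _ ≤ 1.95 * (200 * n) * (μ / Real.exp 1) ^ μ := by
        gcongr ?_ * _
        linarith

theorem prod_factorial_mul_sum_exp_neg_phaseDefect_le {L n : ℕ} {μ : Fin L → ℕ}
    (hμ : ∀ i, μ i ≤ n) (hn : 0 < n) (φ : ℝ) :
    (∏ i, (μ i).factorial : ℝ) * ∑ θ : Fin L → Fin (200 * n),
        Real.exp (-(0.8 * phaseDefect (fun i ↦ μ i) (gridAngle θ) φ)) ≤
      (1.95 * (200 * n)) ^ L * ∏ i, (μ i / Real.exp 1) ^ μ i := by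
  have hprod : ∑ θ : Fin L → Fin (200 * n),
      Real.exp (-(0.8 * phaseDefect (fun i ↦ μ i) (gridAngle θ) φ)) =
        ∏ i : Fin L, ∑ j : Fin (200 * n), Real.exp (-(0.8 * (μ i * (1 -
          Real.cos (2 * Real.pi * (j : ℕ) / (200 * n : ℕ) - ((i : ℕ) + 1) * φ))))) := by
    simp only [prod_univ_sum, Fintype.piFinset_univ, ← Real.exp_sum, phaseDefect, gridAngle,
      mul_sum, sum_neg_distrib]
  rw [hprod, ← prod_mul_distrib]
  calc _ ≤ ∏ i : Fin L, (1.95 * (200 * n)) * (μ i / Real.exp 1) ^ μ i :=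
        prod_le_prod (fun i _ ↦ by positivity) fun i _ ↦
          factorial_mul_sum_exp_neg_mul_one_sub_cos_le (hμ i) hn _
    _ = _ := by rw [prod_mul_distrib, prod_const, Finset.card_univ, Fintype.card_fin]

theorem prod_factorial_le {L n : ℕ} {μ : Fin L → ℕ} (hμ : ∀ i, μ i ≤ n) (hn : 0 < n) :
    (∏ i, (μ i).factorial : ℝ) ≤ (Real.exp 1 * √n) ^ L * ∏ i, (μ i / Real.exp 1) ^ μ i := by
  have hbase : 1 ≤ Real.exp 1 * √n := by
    have := Real.one_le_sqrt.2 (by exact_mod_cast hn : (1 : ℝ) ≤ n)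
    nlinarith [Real.add_one_le_exp (1 : ℝ)]
  calc _ ≤ ∏ i, (Real.exp 1 * √n) * (μ i / Real.exp 1) ^ μ i := by
        refine prod_le_prod (fun i _ ↦ by positivity) fun i _ ↦ ?_
        rcases eq_or_ne (μ i) 0 with h | h
        · simpa [h] using hbase
        · refine (factorial_le_exp_one_mul_sqrt_mul_pow h).trans ?_
          gcongr
          exact_mod_cast hμ i
    _ = _ := by rw [prod_mul_distrib, prod_const, Finset.card_univ, Fintype.card_fin]

end TorusSum

section PhaseCover

variable {L : ℕ}

theorem one_sub_cos_eq_two_mul_sin_sq (x : ℝ) : 1 - Real.cos x = 2 * Real.sin (x / 2) ^ 2 := by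
  rw [Real.sin_sq_eq_half_sub, mul_div_cancel₀ x two_ne_zero]
  ring

theorem one_sub_cos_add_le (x d : ℝ) :
    0.8 * (1 - Real.cos (x + d)) ≤ 0.9 * (1 - Real.cos x) + 3.6 * d ^ 2 := by
  rw [one_sub_cos_eq_two_mul_sin_sq, one_sub_cos_eq_two_mul_sin_sq]
  have hsin : |Real.sin ((x + d) / 2)| ≤ |Real.sin (x / 2)| + |d / 2| := by
    rw [add_div, Real.sin_add]
    refine (abs_add_le _ _).trans (add_le_add ?_ ?_) <;> rw [abs_mul]
    · exact mul_le_of_le_one_right (abs_nonneg _) (Real.abs_cos_le_one _)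
    · exact (mul_le_of_le_one_left (abs_nonneg _) (Real.abs_cos_le_one _)).trans Real.abs_sin_le_abs
  have hsq := pow_le_pow_left₀ (abs_nonneg _) hsin 2
  rw [← sq_abs (Real.sin (x / 2)), ← sq_abs (Real.sin ((x + d) / 2)),
    show d ^ 2 = 4 * |d / 2| ^ 2 by rw [sq_abs]; ring]
  nlinarith [sq_nonneg (|Real.sin (x / 2)| - 8 * |d / 2|)]

theorem exists_fin_abs_sub_le {G : ℕ} (hG : 0 < G) (φ : ℝ) :
    ∃ (g : Fin G) (N : ℤ), |2 * Real.pi * (g : ℕ) / G + N * (2 * Real.pi) - φ| ≤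
      2 * Real.pi / G := by
  have hG' : (0 : ℝ) < G := by exact_mod_cast hG
  have hfract := Int.fract_nonneg (φ / (2 * Real.pi))
  set y := Int.fract (φ / (2 * Real.pi)) with hy
  have hlt : ⌊y * G⌋₊ < G := by
    rw [Nat.floor_lt (by positivity)]
    exact mul_lt_of_lt_one_left hG' (Int.fract_lt_one _)
  refine ⟨⟨_, hlt⟩, ⌊φ / (2 * Real.pi)⌋, ?_⟩
  have hφ : φ = 2 * Real.pi * (⌊φ / (2 * Real.pi)⌋ + y) := by
    rw [hy, Int.floor_add_fract]
    field_simp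
  have hfloor := Nat.floor_le (a := y * G) (by positivity)
  have hceil := Nat.lt_floor_add_one (y * G)
  have hdiff : 2 * Real.pi * (⌊y * G⌋₊ : ℕ) / G + ⌊φ / (2 * Real.pi)⌋ * (2 * Real.pi) - φ =
      -(2 * Real.pi / G * (y * G - ⌊y * G⌋₊)) := by
    nth_rw 2 [hφ]
    field_simp
    ring
  rw [hdiff, abs_neg, abs_of_nonneg (mul_nonneg (by positivity) (by linarith))]
  exact mul_le_of_le_one_right (by positivity) (by linarith)

theorem phaseDefect_le_of_abs_sub_le {p : Fin L → ℝ} (hp : ∀ i, 0 ≤ p i) (ψ : Fin L → ℝ)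
    {φ φ' d : ℝ} {N : ℤ} (hφ : |φ' + N * (2 * Real.pi) - φ| ≤ d) :
    0.8 * phaseDefect p ψ φ' ≤
      0.9 * phaseDefect p ψ φ + 3.6 * d ^ 2 * ∑ i, p i * ((i : ℕ) + 1) ^ 2 := by
  simp only [phaseDefect, mul_sum, ← sum_add_distrib]
  refine sum_le_sum fun i _ ↦ ?_
  have hcos : Real.cos (ψ i - ((i : ℕ) + 1) * φ') =
      Real.cos (ψ i - ((i : ℕ) + 1) * φ +
        -(((i : ℕ) + 1) * (φ' + N * (2 * Real.pi) - φ))) := by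
    rw [← Real.cos_sub_int_mul_two_pi _ (((i : ℕ) + 1) * N)]
    congr 1
    push_cast
    ring
  have hshift := one_sub_cos_add_le (ψ i - ((i : ℕ) + 1) * φ)
    (-(((i : ℕ) + 1) * (φ' + N * (2 * Real.pi) - φ)))
  rw [← hcos, neg_sq, mul_pow, ← sq_abs (φ' + N * (2 * Real.pi) - φ)] at hshift
  have hd : ((i : ℕ) + 1 : ℝ) ^ 2 * |φ' + N * (2 * Real.pi) - φ| ^ 2 ≤
      ((i : ℕ) + 1 : ℝ) ^ 2 * d ^ 2 := by gcongr
  linarith [mul_le_mul_of_nonneg_left hshift (hp i), mul_le_mul_of_nonneg_left hd (hp i)]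

theorem exp_neg_phaseDefect_le_sum {p : Fin L → ℝ} (hp : ∀ i, 0 ≤ p i) {T : ℝ} {G : ℕ}
    (hG : 0 < G) (hT : ∑ i : Fin L, p i * ((i : ℕ) + 1) ^ 2 ≤ T * G ^ 2) (ψ : Fin L → ℝ) (φ : ℝ) :
    Real.exp (-(0.9 * phaseDefect p ψ φ)) ≤ ∑ g : Fin G,
      Real.exp (144 * T) * Real.exp (-(0.8 * phaseDefect p ψ (2 * Real.pi * (g : ℕ) / G))) := by
  obtain ⟨g, N, hg⟩ := exists_fin_abs_sub_le hG φ
  have hT₀ : 0 ≤ T := nonneg_of_mul_nonneg_left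
    ((sum_nonneg fun i _ ↦ mul_nonneg (hp i) (by positivity)).trans hT) (by positivity)
  have herror : 3.6 * (2 * Real.pi / G) ^ 2 * ∑ i : Fin L, p i * ((i : ℕ) + 1) ^ 2 ≤ 144 * T :=
    calc _ ≤ 3.6 * (2 * Real.pi / G) ^ 2 * (T * G ^ 2) := by gcongr
      _ = 14.4 * Real.pi ^ 2 * T := by
        field_simp
        ring
      _ ≤ 144 * T := by
        gcongr
        nlinarith [Real.pi_lt_d4, Real.pi_pos]
  refine le_trans ?_ (single_le_sum (f := fun g : Fin G ↦ Real.exp (144 * T) *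
    Real.exp (-(0.8 * phaseDefect p ψ (2 * Real.pi * (g : ℕ) / G))))
    (fun _ _ ↦ by positivity) (mem_univ g))
  rw [← Real.exp_add, Real.exp_le_exp]
  linarith [phaseDefect_le_of_abs_sub_le hp ψ hg]

end PhaseCover

section FourierComparison

open MvPolynomial

variable {L n : ℕ} {A B T : ℝ} {G : ℕ}

theorem prod_factorial_mul_sum_gridAngle_le {μ : Fin L → ℕ} (hμ : ∀ i, μ i ≤ n) (hn : 0 < n)
    (hA : 0 ≤ A) (hB : 0 ≤ B) (hG : 0 < G)
    (hT : ∑ i : Fin L, (μ i : ℝ) * ((i : ℕ) + 1) ^ 2 ≤ T * G ^ 2) {h : (Fin L → ℝ) → ℝ}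
    (hh : ∀ ψ, h ψ ≤ B ∨ ∃ φ, h ψ ≤ A * Real.exp (-(0.9 * phaseDefect (fun i ↦ μ i) ψ φ))) :
    (∏ i, (μ i).factorial : ℝ) * ∑ θ : Fin L → Fin (200 * n), h (gridAngle θ) ≤
      (200 * n) ^ L * (B * (Real.exp 1 * √n) ^ L + A * Real.exp (144 * T) * G * 1.95 ^ L) *
        ∏ i, (μ i / Real.exp 1) ^ μ i := by
  set D : (Fin L → Fin (200 * n)) → ℝ → ℝ :=
    fun θ φ ↦ Real.exp (-(0.8 * phaseDefect (fun i ↦ μ i) (gridAngle θ) φ))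
  have hpoint (θ : Fin L → Fin (200 * n)) : h (gridAngle θ) ≤
      B + A * ∑ g : Fin G, Real.exp (144 * T) * D θ (2 * Real.pi * (g : ℕ) / G) := by
    rcases hh (gridAngle θ) with hfar | ⟨φ, hnear⟩
    · exact hfar.trans (le_add_of_nonneg_right (by positivity))
    · refine (hnear.trans (mul_le_mul_of_nonneg_left ?_ hA)).trans (le_add_of_nonneg_left hB)
      exact exp_neg_phaseDefect_le_sum (fun i ↦ by positivity) hG hT _ _
  calc _ ≤ (∏ i, (μ i).factorial : ℝ) * ∑ θ : Fin L → Fin (200 * n),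
          (B + A * ∑ g : Fin G, Real.exp (144 * T) * D θ (2 * Real.pi * (g : ℕ) / G)) := by
        gcongr with θ
        exact hpoint θ
    _ = (200 * n) ^ L * B * ∏ i, ((μ i).factorial : ℝ) + A * Real.exp (144 * T) *
          ∑ g : Fin G, (∏ i, ((μ i).factorial : ℝ)) * ∑ θ, D θ (2 * Real.pi * (g : ℕ) / G) := by
        simp only [sum_add_distrib, ← mul_sum]
        rw [sum_comm, sum_const, Finset.card_univ, Fintype.card_pi_const, Fintype.card_fin]
        simp only [nsmul_eq_mul, Nat.cast_pow, Nat.cast_mul, Nat.cast_ofNat]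
        ring
    _ ≤ (200 * n) ^ L * B * ((Real.exp 1 * √n) ^ L * ∏ i, (μ i / Real.exp 1) ^ μ i) +
          A * Real.exp (144 * T) *
            ∑ _g : Fin G, (1.95 * (200 * n)) ^ L * ∏ i, (μ i / Real.exp 1) ^ μ i := by
        refine add_le_add (mul_le_mul_of_nonneg_left (prod_factorial_le hμ hn) (by positivity))
          (mul_le_mul_of_nonneg_left (sum_le_sum fun g _ ↦ ?_) (by positivity))
        exact prod_factorial_mul_sum_exp_neg_phaseDefect_le hμ hn _
    _ = _ := by
        rw [sum_const, Finset.card_univ, Fintype.card_fin, nsmul_eq_mul, mul_pow (1.95 : ℝ)]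
        ring

theorem prod_factorial_mul_norm_coeff_le {μ : Fin L →₀ ℕ} (hμ : ∀ i, μ i ≤ n) (hn : 0 < n)
    {p : Fin L → ℝ} (hμp : ∀ i, (μ i : ℝ) = μ.degree * p i) {f : MvPolynomial (Fin L) ℂ}
    (hf : f.totalDegree < 200 * n) (hA : 0 ≤ A) (hB : 0 ≤ B) (hG : 0 < G)
    (hT : ∑ i : Fin L, (μ i : ℝ) * ((i : ℕ) + 1) ^ 2 ≤ T * G ^ 2)
    (h : ∀ ψ, ‖eval (polarPoint p ψ) f‖ ≤ B ∨ ∃ φ, ‖eval (polarPoint p ψ) f‖ ≤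
      A * Real.exp (-(0.9 * phaseDefect (fun i ↦ μ i) ψ φ))) :
    √μ.degree * ((∏ i, (μ i).factorial : ℝ) * ‖coeff μ f‖) ≤ μ.degree.factorial *
      (B * (Real.exp 1 * √n) ^ L + A * Real.exp (144 * T) * G * 1.95 ^ L) := by
  set E := B * (Real.exp 1 * √n) ^ L + A * Real.exp (144 * T) * G * 1.95 ^ L
  set P := ∏ i, ((μ i : ℝ) / Real.exp 1) ^ μ i
  have hP₀ : 0 < P := prod_pos fun i _ ↦ by
    rcases Nat.eq_zero_or_pos (μ i) with h | h
    · simp [h]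
    · positivity
  have hsplit : P = (μ.degree / Real.exp 1) ^ μ.degree * ∏ i, |p i| ^ μ i := by
    nth_rw 2 [Finsupp.degree_eq_sum]
    rw [← prod_pow_eq_pow_sum, ← prod_mul_distrib]
    refine prod_congr rfl fun i _ ↦ ?_
    rw [← mul_pow, div_mul_eq_mul_div]
    nth_rw 1 [← abs_of_nonneg (Nat.cast_nonneg (α := ℝ) (μ i)), hμp i, abs_mul, Nat.abs_cast]
  have hfourier := mul_le_mul_of_nonneg_left (pow_mul_norm_coeff_mul_prod_le hf μ p)
    (by positivity : 0 ≤ ∏ i, ((μ i).factorial : ℝ))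
  have htorus := hfourier.trans (prod_factorial_mul_sum_gridAngle_le hμ hn hA hB hG hT h)
  rw [Fintype.card_fin, Nat.cast_mul, Nat.cast_ofNat] at htorus
  have hscaled := mul_le_mul_of_nonneg_left htorus
    (by positivity : 0 ≤ (μ.degree / Real.exp 1 : ℝ) ^ μ.degree)
  have hcoeff : (∏ i, ((μ i).factorial : ℝ)) * ‖coeff μ f‖ ≤
      (μ.degree / Real.exp 1) ^ μ.degree * E := by
    refine le_of_mul_le_mul_left ?_ (by positivity : 0 < (200 * n : ℝ) ^ L * P)
    calc _ = (μ.degree / Real.exp 1) ^ μ.degree * ((∏ i, ((μ i).factorial : ℝ)) *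
          ((200 * n) ^ L * (‖coeff μ f‖ * ∏ i, |p i| ^ μ i))) := by
          rw [hsplit]
          ring
      _ ≤ _ := hscaled
      _ = _ := by ring
  calc _ ≤ √μ.degree * ((μ.degree / Real.exp 1) ^ μ.degree * E) := by gcongr
    _ = √μ.degree * (μ.degree / Real.exp 1) ^ μ.degree * E := by ring
    _ ≤ _ := by
      gcongr
      exact sqrt_mul_pow_le_factorial _

end FourierComparison

/-! ### From `n / k` cycles to one cycle -/

section PowerSums

theorem norm_sum_map_pow_le {Λ : Multiset ℂ} {b : ℝ} (h : ∀ l ∈ Λ, ‖l‖ ≤ b) (k : ℕ) :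
    ‖(Λ.map (· ^ k)).sum‖ ≤ Λ.card * b ^ k := by
  induction Λ using Multiset.induction with
  | empty => simp
  | cons a Λ ih =>
    rw [Multiset.map_cons, Multiset.sum_cons, Multiset.card_cons, Nat.cast_add_one, add_one_mul,
      add_comm]
    refine (norm_add_le _ _).trans (add_le_add (ih fun l hl ↦ h l (Multiset.mem_cons_of_mem hl)) ?_)
    rw [norm_pow]
    exact pow_le_pow_left₀ (norm_nonneg _) (h a (Multiset.mem_cons_self _ _)) k

theorem norm_add_pow_sub_pow_le (a e : ℂ) (q : ℕ) :
    ‖(a + e) ^ q - a ^ q‖ ≤ (‖a‖ + ‖e‖) ^ q - ‖a‖ ^ q := by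
  induction q with
  | zero => simp
  | succ q ih =>
    calc ‖(a + e) ^ (q + 1) - a ^ (q + 1)‖
        = ‖(a + e) ^ q * e + ((a + e) ^ q - a ^ q) * a‖ := by ring_nf
      _ ≤ ‖a + e‖ ^ q * ‖e‖ + ‖(a + e) ^ q - a ^ q‖ * ‖a‖ := by
        simpa only [norm_mul, norm_pow] using
          norm_add_le ((a + e) ^ q * e) (((a + e) ^ q - a ^ q) * a)
      _ ≤ (‖a‖ + ‖e‖) ^ q * ‖e‖ + ((‖a‖ + ‖e‖) ^ q - ‖a‖ ^ q) * ‖a‖ := by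
        gcongr
        exact norm_add_le _ _
      _ = _ := by ring

theorem norm_add_pow_sub_pow_le_of_norm_le_mul {a e : ℂ} {q : ℕ} {x : ℝ} (he : ‖e‖ ≤ x * ‖a‖)
    (hx : 0 ≤ x) (hqx : q * x ≤ 1) : ‖(a + e) ^ q - a ^ q‖ ≤ 2 * (q * x) * ‖a‖ ^ q := by
  have hexp : (1 + x) ^ q ≤ 1 + 2 * (q * x) := by
    have hqx₀ : 0 ≤ q * x := by positivity
    have habs := Real.abs_exp_sub_one_le (x := q * x) (by rwa [abs_of_nonneg hqx₀])
    rw [abs_of_nonneg hqx₀] at habs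
    calc (1 + x) ^ q ≤ Real.exp x ^ q := by
          gcongr
          linarith [Real.add_one_le_exp x]
      _ = Real.exp (q * x) := (Real.exp_nat_mul x q).symm
      _ ≤ 1 + 2 * (q * x) := by linarith [(abs_le.1 habs).2]
  calc ‖(a + e) ^ q - a ^ q‖ ≤ (‖a‖ + ‖e‖) ^ q - ‖a‖ ^ q := norm_add_pow_sub_pow_le a e q
    _ ≤ (‖a‖ * (1 + x)) ^ q - ‖a‖ ^ q := by
        gcongr
        linarith
    _ ≤ ‖a‖ ^ q * (1 + 2 * (q * x)) - ‖a‖ ^ q := by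
        rw [mul_pow]
        gcongr
    _ = 2 * (q * x) * ‖a‖ ^ q := by ring

variable {Λ : Multiset ℂ} {k n L : ℕ} {a ρ : ℝ}

theorem norm_sum_pow_pow_sub_le_of_forall_le (hkn : k ∣ n) (hn : 0 < n) (hΛ : Λ.card ≤ L)
    (ha₀ : 0 ≤ a) (ha₁ : a ≤ 1) (hL : L * a ^ k ≤ 1) (h : ∀ l ∈ Λ, ‖l‖ ≤ a ^ 2) :
    ‖(Λ.map (· ^ k)).sum ^ (n / k) - (Λ.map (· ^ n)).sum‖ ≤ 2 * a ^ n := by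
  have hsum {j : ℕ} (hj : k ≤ j) : ‖(Λ.map (· ^ j)).sum‖ ≤ a ^ j :=
    calc _ ≤ Λ.card * (a ^ 2) ^ j := norm_sum_map_pow_le h j
      _ = Λ.card * a ^ j * a ^ j := by ring
      _ ≤ L * a ^ k * a ^ j := by
        gcongr ?_ * ?_ * _
        · exact_mod_cast hΛ
        · exact pow_le_pow_of_le_one ha₀ ha₁ hj
      _ ≤ a ^ j := mul_le_of_le_one_left (by positivity) hL
  calc _ ≤ ‖(Λ.map (· ^ k)).sum‖ ^ (n / k) + ‖(Λ.map (· ^ n)).sum‖ := by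
        rw [← norm_pow]
        exact norm_sub_le _ _
    _ ≤ (a ^ k) ^ (n / k) + a ^ n := by
        gcongr
        exacts [hsum le_rfl, hsum (Nat.le_of_dvd hn hkn)]
    _ = 2 * a ^ n := by
        rw [← pow_mul, Nat.mul_div_cancel' hkn]
        ring

theorem norm_sum_pow_pow_sub_le_of_isolated (hkn : k ∣ n) (hn : 0 < n) (hΛ : Λ.card ≤ L)
    (hρ₀ : 0 ≤ ρ) (hρ₁ : ρ ≤ 1) (hx : n * (L * ρ ^ k) ≤ 1) {l₁ : ℂ} (hl₁ : l₁ ∈ Λ)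
    (h : ∀ l ∈ Λ.erase l₁, ‖l‖ ≤ ρ * ‖l₁‖) :
    ‖(Λ.map (· ^ k)).sum ^ (n / k) - (Λ.map (· ^ n)).sum‖ ≤
      3 * (n * (L * ρ ^ k)) * ‖l₁‖ ^ n := by
  have hsplit (j : ℕ) :
      (Λ.map (· ^ j)).sum = l₁ ^ j + ((Λ.erase l₁).map (· ^ j)).sum := by
    conv_lhs => rw [← Multiset.cons_erase hl₁, Multiset.map_cons, Multiset.sum_cons]
  have hrest {j : ℕ} (hj : k ≤ j) :
      ‖((Λ.erase l₁).map (· ^ j)).sum‖ ≤ L * ρ ^ k * ‖l₁ ^ j‖ :=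
    calc _ ≤ (Λ.erase l₁).card * (ρ * ‖l₁‖) ^ j := norm_sum_map_pow_le h j
      _ ≤ L * ρ ^ k * ‖l₁ ^ j‖ := by
        rw [mul_pow, ← mul_assoc, norm_pow]
        gcongr ?_ * ?_ * _
        · exact_mod_cast (Multiset.card_le_card (Multiset.erase_le _ _)).trans hΛ
        · exact pow_le_pow_of_le_one hρ₀ hρ₁ hj
  have hq : ((n / k : ℕ) : ℝ) * (L * ρ ^ k) ≤ n * (L * ρ ^ k) := by
    gcongr
    exact Nat.div_le_self n k
  have hx₀ : 0 ≤ L * ρ ^ k := by positivity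
  have hpow : (l₁ ^ k) ^ (n / k) = l₁ ^ n := by rw [← pow_mul, Nat.mul_div_cancel' hkn]
  have hmain := norm_add_pow_sub_pow_le_of_norm_le_mul (hrest le_rfl) hx₀ (hq.trans hx)
  rw [← norm_pow, hpow, norm_pow] at hmain
  have htail : ‖((Λ.erase l₁).map (· ^ n)).sum‖ ≤ n * (L * ρ ^ k) * ‖l₁‖ ^ n := by
    refine (hrest (Nat.le_of_dvd hn hkn)).trans ?_
    rw [norm_pow]
    exact mul_le_mul_of_nonneg_right (le_mul_of_one_le_left hx₀ (Nat.one_le_cast.2 hn))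
      (by positivity)
  rw [hsplit k, hsplit n, ← sub_sub]
  refine (norm_sub_le _ _).trans ?_
  linarith [mul_le_mul_of_nonneg_right hq (by positivity : 0 ≤ ‖l₁‖ ^ n)]

end PowerSums

section CycleFactorCoefficient

open MvPolynomial

variable {L k n : ℕ}

theorem le_vertexCount (μ : Fin L →₀ ℕ) (i : Fin L) : μ i ≤ vertexCount μ := by
  rw [vertexCount_eq_sum]
  exact (Nat.le_mul_of_pos_right _ i.val.succ_pos).trans
    (single_le_sum (f := fun i : Fin L ↦ μ i * ((i : ℕ) + 1)) (fun _ _ ↦ zero_le) (mem_univ i))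

theorem sum_mul_succ_eq_vertexCount_div {μ : Fin L →₀ ℕ} (hμ : μ ≠ 0) {p : Fin L → ℝ}
    (hμp : ∀ i, (μ i : ℝ) = μ.degree * p i) :
    ∑ i, p i * ((i : ℕ) + 1) = vertexCount μ / μ.degree := by
  have hdeg : (μ.degree : ℝ) ≠ 0 := Nat.cast_ne_zero.2 ((Finsupp.degree_eq_zero_iff μ).not.2 hμ)
  rw [eq_div_iff hdeg, vertexCount_eq_sum]
  push_cast
  rw [sum_mul]
  refine sum_congr rfl fun i _ ↦ ?_
  rw [hμp]
  ring

/-- The difference of the generating polynomials of the sequences of `n / k` closed walks of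
length `k` and of the closed walks of length `n`. -/
noncomputable def closedWalkPolyDiff (L k n : ℕ) : MvPolynomial (Fin L) ℂ :=
  map (Nat.castRingHom ℂ) (closedWalkPoly L k ^ (n / k)) -
    map (Nat.castRingHom ℂ) (closedWalkPoly L n)

theorem totalDegree_closedWalkPolyDiff_le (hk : 0 < k) (hkn : k ∣ n) (hn : 0 < n) :
    (closedWalkPolyDiff L k n).totalDegree ≤ n := by
  refine (totalDegree_sub _ _).trans (max_le ?_ ?_)
  · calc _ ≤ (closedWalkPoly L k ^ (n / k)).totalDegree := sup_mono (support_map_subset _ _)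
      _ ≤ n / k * (closedWalkPoly L k).totalDegree := totalDegree_pow _ _
      _ ≤ n / k * k := Nat.mul_le_mul_left _ (totalDegree_closedWalkPoly_le hk)
      _ = n := Nat.div_mul_cancel hkn
  · exact (sup_mono (support_map_subset _ _)).trans (totalDegree_closedWalkPoly_le hn)

theorem IsReciprocalRoots.eval_closedWalkPolyDiff {x : Fin L → ℂ} {Λ : Multiset ℂ}
    (h : IsReciprocalRoots x Λ) (hk : 0 < k) (hn : 0 < n) :
    eval x (closedWalkPolyDiff L k n) =
      (Λ.map (· ^ k)).sum ^ (n / k) - (Λ.map (· ^ n)).sum := by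
  have heval (j : ℕ) : eval x (map (Nat.castRingHom ℂ) (closedWalkPoly L j)) =
      (residualMatrix x ^ j).trace := by
    rw [← aeval_closedWalkPoly, eval_map, aeval_def]
    rfl
  rw [closedWalkPolyDiff, map_sub, map_pow, map_pow, heval, heval, h.trace_residualMatrix_pow hk,
    h.trace_residualMatrix_pow hn]

variable {μ : Fin L →₀ ℕ} {p : Fin L → ℝ} {a ρ T : ℝ} {G : ℕ}

theorem SpectralDichotomy.norm_eval_closedWalkPolyDiff_le
    (h : SpectralDichotomy p (a ^ 2) (ρ * a ^ 2)) (hk : 0 < k) (hkn : k ∣ n) (hn : 0 < n)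
    (ha₀ : 0 < a) (ha₁ : a ≤ 1) (hL : L * a ^ k ≤ 1) (hρ₀ : 0 ≤ ρ) (hρ₁ : ρ ≤ 1)
    (hx : n * (L * ρ ^ k) ≤ 1) (hμ : μ ≠ 0) (hμn : vertexCount μ = n)
    (hμp : ∀ i, (μ i : ℝ) = μ.degree * p i) (ψ : Fin L → ℝ) :
    ‖eval (polarPoint p ψ) (closedWalkPolyDiff L k n)‖ ≤ 2 * a ^ n ∨
      ∃ φ, ‖eval (polarPoint p ψ) (closedWalkPolyDiff L k n)‖ ≤
        3 * (n * (L * ρ ^ k)) * Real.exp (-(0.9 * phaseDefect (fun i ↦ μ i) ψ φ)) := by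
  obtain ⟨Λ, hΛ, hcard⟩ := exists_isReciprocalRoots (polarPoint p ψ)
  rw [hΛ.eval_closedWalkPolyDiff hk hn]
  rcases h ψ Λ hΛ with hfar | ⟨l₁, hl₁, hlarge, hrest, φ, hlog⟩
  · exact Or.inl (norm_sum_pow_pow_sub_le_of_forall_le hkn hn hcard ha₀.le ha₁ hL hfar)
  right
  refine ⟨φ, (norm_sum_pow_pow_sub_le_of_isolated hkn hn hcard hρ₀ hρ₁ hx hl₁ fun l hl ↦
    (hrest l hl).trans (by gcongr)).trans ?_⟩
  gcongr
  have hl₁pos : 0 < ‖l₁‖ := (by positivity : 0 < a ^ 2).trans_le hlarge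
  have hdeg : (0 : ℝ) < μ.degree :=
    Nat.cast_pos.2 (Nat.pos_of_ne_zero ((Finsupp.degree_eq_zero_iff μ).not.2 hμ))
  have hdefect : phaseDefect (fun i ↦ (μ i : ℝ)) ψ φ = μ.degree * phaseDefect p ψ φ := by
    simp only [phaseDefect, hμp, mul_sum, mul_assoc]
  rw [sum_mul_succ_eq_vertexCount_div hμ hμp, hμn, ← mul_div_assoc, div_le_iff₀ hdeg] at hlog
  rw [← Real.exp_log hl₁pos, ← Real.exp_nat_mul, Real.exp_le_exp, hdefect]
  linarith

theorem prod_factorial_mul_coeff_closedWalkPoly (hμ : μ ≠ 0) (hμn : vertexCount μ = n) :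
    (∏ i, (μ i).factorial : ℝ) * (coeff μ (closedWalkPoly L n) : ℕ) =
      μ.degree.factorial * (n / μ.degree) := by
  have hdeg : μ.degree ≠ 0 := (Finsupp.degree_eq_zero_iff μ).not.2 hμ
  have hcoeff := congrArg (Nat.cast (R := ℝ)) (coeff_closedWalkPoly_vertexCount hμ)
  rw [hμn] at hcoeff
  push_cast at hcoeff
  rw [mul_comm, hcoeff, ← Nat.mul_factorial_pred hdeg]
  push_cast
  field_simp

theorem coeff_le_coeff_add_norm_coeff_closedWalkPolyDiff (μ : Fin L →₀ ℕ) :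
    ((coeff μ (closedWalkPoly L k ^ (n / k)) : ℕ) : ℝ) ≤
      (coeff μ (closedWalkPoly L n) : ℕ) + ‖coeff μ (closedWalkPolyDiff L k n)‖ := by
  have hsub := norm_sub_norm_le ((coeff μ (closedWalkPoly L k ^ (n / k)) : ℕ) : ℂ)
    (coeff μ (closedWalkPoly L n) : ℕ)
  rw [Complex.norm_natCast, Complex.norm_natCast] at hsub
  rw [closedWalkPolyDiff, coeff_sub, coeff_map, coeff_map, eq_natCast, eq_natCast]
  linarith

theorem SpectralDichotomy.prod_factorial_mul_coeff_le
    (h : SpectralDichotomy p (a ^ 2) (ρ * a ^ 2)) (hk : 0 < k) (hkn : k ∣ n) (hn : 0 < n)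
    (ha₀ : 0 < a) (ha₁ : a ≤ 1) (hL : L * a ^ k ≤ 1) (hρ₀ : 0 ≤ ρ) (hρ₁ : ρ ≤ 1)
    (hx : n * (L * ρ ^ k) ≤ 1) (hμ : μ ≠ 0) (hμn : vertexCount μ = n)
    (hμp : ∀ i, (μ i : ℝ) = μ.degree * p i) (hG : 0 < G)
    (hT : ∑ i : Fin L, (μ i : ℝ) * ((i : ℕ) + 1) ^ 2 ≤ T * G ^ 2) :
    (∏ i, (μ i).factorial : ℝ) * (coeff μ (closedWalkPoly L k ^ (n / k)) : ℕ) ≤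
      μ.degree.factorial * (n / μ.degree + (2 * a ^ n * (Real.exp 1 * √n) ^ L +
        3 * (n * (L * ρ ^ k)) * Real.exp (144 * T) * G * 1.95 ^ L) / √μ.degree) := by
  have hdeg : (0 : ℝ) < √μ.degree := Real.sqrt_pos.2 <|
    Nat.cast_pos.2 (Nat.pos_of_ne_zero ((Finsupp.degree_eq_zero_iff μ).not.2 hμ))
  have herror := prod_factorial_mul_norm_coeff_le (fun i ↦ hμn ▸ le_vertexCount μ i) hn hμp
    ((totalDegree_closedWalkPolyDiff_le hk hkn hn).trans_lt (by lia)) (by positivity)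
    (by positivity) hG hT
    (h.norm_eval_closedWalkPolyDiff_le hk hkn hn ha₀ ha₁ hL hρ₀ hρ₁ hx hμ hμn hμp)
  rw [← le_div_iff₀' hdeg, mul_div_assoc] at herror
  calc _ ≤ (∏ i, (μ i).factorial : ℝ) * ((coeff μ (closedWalkPoly L n) : ℕ) +
        ‖coeff μ (closedWalkPolyDiff L k n)‖) := by
        gcongr
        exact coeff_le_coeff_add_norm_coeff_closedWalkPolyDiff μ
    _ ≤ _ := by
        rw [mul_add, mul_add, prod_factorial_mul_coeff_closedWalkPoly hμ hμn]
        gcongr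

end CycleFactorCoefficient

/-! ### The component profile of a graph -/

section ComponentProfile

theorem sum_lengthProfile_mul {ι : Type*} [Fintype ι] {L : ℕ} {len : ι → ℕ}
    (hpos : ∀ c, 0 < len c) (hL : ∀ c, len c ≤ L) (w : ℕ → ℕ) :
    ∑ i, lengthProfile L len i * w ((i : ℕ) + 1) = ∑ c, w (len c) := by
  classical
  let g (c : ι) : Fin L := ⟨len c - 1, by have := hpos c; have := hL c; lia⟩
  have hg (c : ι) : len c = g c + 1 := (Nat.sub_add_cancel (hpos c)).symm
  have hg_iff (c : ι) (i : Fin L) : g c = i ↔ len c = i + 1 := by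
    rw [hg, add_left_inj, Fin.ext_iff]
  rw [← sum_fiberwise univ g]
  refine sum_congr rfl fun i _ ↦ ?_
  rw [sum_congr rfl fun c hc ↦ congrArg w ((hg_iff c i).1 (mem_filter.1 hc).2), sum_const,
    smul_eq_mul, lengthProfile_apply, Nat.card_eq_fintype_card, Fintype.card_subtype]
  simp only [hg_iff]

variable {n : ℕ} {S : SimpleGraph (Fin n)}

theorem ncard_supp_pos (c : S.ConnectedComponent) : 0 < c.supp.ncard :=
  (Set.ncard_pos).2 c.nonempty_supp

theorem degree_componentProfile {L : ℕ} (hL : ∀ c : S.ConnectedComponent, c.supp.ncard ≤ L) :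
    (componentProfile L S).degree = Nat.card S.ConnectedComponent := by
  have := Fintype.ofFinite S.ConnectedComponent
  have hsum := sum_lengthProfile_mul ncard_supp_pos hL fun _ ↦ 1
  rw [Finsupp.degree_eq_sum]
  simpa [componentProfile, Nat.card_eq_fintype_card] using hsum

theorem vertexCount_componentProfile {L : ℕ}
    (hL : ∀ c : S.ConnectedComponent, c.supp.ncard ≤ L) :
    vertexCount (componentProfile L S) = n := by
  classical
  have := Fintype.ofFinite S.ConnectedComponent
  have hcard := Fintype.card_congr (Equiv.sigmaFiberEquiv S.connectedComponentMk)
  rw [Fintype.card_sigma, Fintype.card_fin] at hcard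
  rw [vertexCount_eq_sum]
  refine (sum_lengthProfile_mul ncard_supp_pos hL id).trans
    (Eq.trans (sum_congr rfl fun c _ ↦ ?_) hcard)
  rw [← Nat.card_eq_fintype_card]
  exact (Nat.card_coe_set_eq c.supp).symm

/-- The number of vertices of the largest connected component of `S`. -/
noncomputable def maxComponentCard (S : SimpleGraph (Fin n)) : ℕ :=
  ⨆ c : S.ConnectedComponent, c.supp.ncard

theorem ncard_supp_le_maxComponentCard (c : S.ConnectedComponent) :
    c.supp.ncard ≤ maxComponentCard S :=
  le_ciSup (f := fun c : S.ConnectedComponent ↦ c.supp.ncard) (Set.finite_range _).bddAbove c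

theorem exists_componentProfile_maxComponentCard_ne_zero (hn : 0 < n) :
    ∃ i : Fin (maxComponentCard S),
      (i : ℕ) + 1 = maxComponentCard S ∧ componentProfile (maxComponentCard S) S i ≠ 0 := by
  have : Nonempty S.ConnectedComponent := ⟨S.connectedComponentMk ⟨0, hn⟩⟩
  obtain ⟨c, hc⟩ := exists_eq_ciSup_of_finite (f := fun c : S.ConnectedComponent ↦ c.supp.ncard)
  change c.supp.ncard = maxComponentCard S at hc
  have hpos := ncard_supp_pos c
  refine ⟨⟨maxComponentCard S - 1, by lia⟩, by lia, ?_⟩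
  rw [componentProfile, lengthProfile_apply]
  exact (Nat.card_pos_iff.2 ⟨⟨⟨c, by lia⟩⟩, inferInstance⟩).ne'

/-- The proportion of the connected components of `S` that have `i + 1` vertices. -/
noncomputable def componentFrequency (S : SimpleGraph (Fin n)) (i : ℕ) : ℝ :=
  Nat.card {c : S.ConnectedComponent // c.supp.ncard = i + 1} / Nat.card S.ConnectedComponent

theorem componentFrequency_nonneg (i : ℕ) : 0 ≤ componentFrequency S i := by
  unfold componentFrequency
  positivity

theorem componentFrequency_eq_zero {i : ℕ} (hi : maxComponentCard S ≤ i) :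
    componentFrequency S i = 0 := by
  have : IsEmpty {c : S.ConnectedComponent // c.supp.ncard = i + 1} :=
    ⟨fun c ↦ by have := ncard_supp_le_maxComponentCard c.1; lia⟩
  rw [componentFrequency, Nat.card_of_isEmpty, Nat.cast_zero, zero_div]

theorem card_connectedComponent_pos (hn : 0 < n) : 0 < Nat.card S.ConnectedComponent :=
  Nat.card_pos_iff.2 ⟨⟨S.connectedComponentMk ⟨0, hn⟩⟩, inferInstance⟩

theorem componentProfile_eq_mul_componentFrequency (hn : 0 < n) {L : ℕ} (i : Fin L) :
    (componentProfile L S i : ℝ) = Nat.card S.ConnectedComponent * componentFrequency S i := by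
  have hcard : (Nat.card S.ConnectedComponent : ℝ) ≠ 0 :=
    Nat.cast_ne_zero.2 (card_connectedComponent_pos hn).ne'
  rw [componentFrequency, mul_div_cancel₀ _ hcard, componentProfile, lengthProfile_apply]

theorem sum_componentFrequency (hn : 0 < n) :
    ∑ i : Fin (maxComponentCard S), componentFrequency S i = 1 := by
  have hcard : (Nat.card S.ConnectedComponent : ℝ) ≠ 0 :=
    Nat.cast_ne_zero.2 (card_connectedComponent_pos hn).ne'
  refine mul_left_cancel₀ hcard ?_
  rw [mul_sum, mul_one]
  simp only [← componentProfile_eq_mul_componentFrequency hn]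
  rw [← Nat.cast_sum, ← Finsupp.degree_eq_sum,
    degree_componentProfile ncard_supp_le_maxComponentCard]

end ComponentProfile

section DeltaNormal

open Filter

/-- The majorant of the distance, weighted by `(2 - δ) ^ (i + 1)`, between the frequency of the
paths with `i + 1` vertices in a `δ`-normal collection and the geometric distribution. -/
noncomputable def normalMajorant (δ : ℝ) (i : ℕ) : ℝ :=
  1 / ((i + 1 : ℕ) : ℝ) ^ 4 + 2 * ((2 - δ) / 2) ^ (i + 1)

variable {n k m : ℕ} {S : SimpleGraph (Fin n)} {δ τ : ℝ}

theorem normalMajorant_nonneg (hδ : δ < 2) (i : ℕ) : 0 ≤ normalMajorant δ i := by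
  have : 0 < 2 - δ := sub_pos.2 hδ
  unfold normalMajorant
  positivity

theorem summable_normalMajorant (hδ₀ : 0 < δ) (hδ₂ : δ < 2) : Summable (normalMajorant δ) := by
  have hpow := (summable_nat_add_iff 1).2 (Real.summable_one_div_nat_pow.2 (by norm_num : 1 < 4))
  have hgeom := summable_geometric_of_lt_one (r := (2 - δ) / 2) (by linarith) (by linarith)
  exact hpow.add (((summable_nat_add_iff 1).2 hgeom).mul_left 2)

theorem componentFrequency_eq_card_div (hS : PathsGraph S m) (i : ℕ) :
    componentFrequency S i =
      (Nat.card {c : S.ConnectedComponent // c.supp.ncard = i + 1} : ℝ) / m := by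
  rw [componentFrequency, hS.1]

theorem GDeltaNormal.componentFrequency_zero (hS : PathsGraph S m) (h : GDeltaNormal k δ S m) :
    componentFrequency S 0 = 0 := by
  rw [componentFrequency_eq_card_div hS]
  exact h.1

theorem geometricWeight_eq_zpow {i : ℕ} (hi : i ≠ 0) :
    geometricWeight i = (2 : ℝ) ^ (1 - ((i + 1 : ℕ) : ℤ)) := by
  rw [geometricWeight, if_neg hi, Nat.cast_add_one, sub_add_cancel_right, zpow_neg, zpow_natCast,
    one_div, inv_pow]

theorem GDeltaNormal.abs_componentFrequency_sub_mul_pow_le_of_le_log (hS : PathsGraph S m)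
    (h : GDeltaNormal k δ S m) (hδ : δ < 2) {i : ℕ}
    (hi : ((i + 1 : ℕ) : ℝ) ≤ Real.log (Real.log k) / 8) :
    |componentFrequency S i - geometricWeight i| * (2 - δ) ^ (i + 1) ≤
      (Real.log k ^ (1 / 8 : ℝ))⁻¹ * normalMajorant δ i := by
  have hr : 0 < 2 - δ := sub_pos.2 hδ
  rcases eq_or_ne i 0 with rfl | hi₀
  · have := normalMajorant_nonneg hδ 0
    rw [h.componentFrequency_zero hS, geometricWeight, if_pos rfl, sub_zero, abs_zero, zero_mul]
    positivity
  have hnear := h.2.1 (i + 1) (by lia) hi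
  beta_reduce at hnear
  rw [← componentFrequency_eq_card_div hS, ← geometricWeight_eq_zpow hi₀] at hnear
  calc _ ≤ (((i + 1 : ℕ) : ℝ) ^ 4 * (2 - δ) ^ (i + 1) * Real.log k ^ (1 / 8 : ℝ))⁻¹ *
        (2 - δ) ^ (i + 1) := by gcongr
    _ = (Real.log k ^ (1 / 8 : ℝ))⁻¹ * (1 / ((i + 1 : ℕ) : ℝ) ^ 4) := by field_simp
    _ ≤ _ := by
      gcongr
      exact le_add_of_nonneg_right (by positivity)

theorem GDeltaNormal.abs_componentFrequency_sub_mul_pow_le_of_log_le (hS : PathsGraph S m)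
    (h : GDeltaNormal k δ S m) (hδ : δ < 2) {i : ℕ}
    (hi : Real.log (Real.log k) / 8 ≤ ((i + 1 : ℕ) : ℝ)) :
    |componentFrequency S i - geometricWeight i| * (2 - δ) ^ (i + 1) ≤ normalMajorant δ i := by
  have hr : 0 < 2 - δ := sub_pos.2 hδ
  have hp := h.2.2 (i + 1) hi
  beta_reduce at hp
  rw [← componentFrequency_eq_card_div hS] at hp
  have hdiff : |componentFrequency S i - geometricWeight i| ≤
      componentFrequency S i + (1 / 2) ^ i := by
    have := componentFrequency_nonneg (S := S) i
    have := geometricWeight_nonneg i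
    have := geometricWeight_le i
    exact abs_le.2 ⟨by linarith, by linarith [(by positivity : (0 : ℝ) ≤ (1 / 2) ^ i)]⟩
  calc _ ≤ ((((i + 1 : ℕ) : ℝ) ^ 4 * (2 - δ) ^ (i + 1))⁻¹ + (1 / 2) ^ i) * (2 - δ) ^ (i + 1) := by
        gcongr
        exact hdiff.trans (by gcongr)
    _ = normalMajorant δ i := by
        rw [normalMajorant, div_pow, div_pow, one_pow, pow_succ (2 : ℝ)]
        field_simp

theorem GDeltaNormal.sum_abs_componentFrequency_sub_le (hS : PathsGraph S m)
    (h : GDeltaNormal k δ S m) (hδ₀ : 0 < δ) (hδ₂ : δ < 2) {s : Finset ℕ}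
    (hs : ∀ t : Finset ℕ, Disjoint t s → ∑ i ∈ t, normalMajorant δ i ≤ τ / 2)
    (hsk : ∀ i ∈ s, ((i + 1 : ℕ) : ℝ) ≤ Real.log (Real.log k) / 8)
    (hkτ : (Real.log k ^ (1 / 8 : ℝ))⁻¹ * ∑' i, normalMajorant δ i ≤ τ / 2) (N : ℕ) :
    ∑ i ∈ range N, |componentFrequency S i - geometricWeight i| * (2 - δ) ^ (i + 1) ≤ τ := by
  rw [← sum_filter_add_sum_filter_not (range N)
    fun i ↦ ((i + 1 : ℕ) : ℝ) ≤ Real.log (Real.log k) / 8, ← add_halves τ]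
  refine add_le_add ?_ ?_
  · refine (sum_le_sum fun i hi ↦ h.abs_componentFrequency_sub_mul_pow_le_of_le_log hS hδ₂
      (mem_filter.1 hi).2).trans (le_trans ?_ hkτ)
    rw [← mul_sum]
    gcongr
    exact (summable_normalMajorant hδ₀ hδ₂).sum_le_tsum _ fun i _ ↦ normalMajorant_nonneg hδ₂ i
  · exact (sum_le_sum fun i hi ↦ h.abs_componentFrequency_sub_mul_pow_le_of_log_le hS hδ₂
      (not_le.1 (mem_filter.1 hi).2).le).trans
      (hs _ (disjoint_left.2 fun i hi his ↦ (mem_filter.1 hi).2 (hsk i his)))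

theorem eventually_isNearGeometric_componentFrequency (hδ₀ : 0 < δ) (hδ₂ : δ < 2) (hτ : 0 < τ) :
    ∀ᶠ k : ℕ in atTop, ∀ (n m : ℕ) (S : SimpleGraph (Fin n)), 0 < n → PathsGraph S m →
      GDeltaNormal k δ S m →
        IsNearGeometric (maxComponentCard S) (componentFrequency S) (2 - δ) τ := by
  have hlog : Tendsto (fun k : ℕ ↦ Real.log k) atTop atTop :=
    Real.tendsto_log_atTop.comp tendsto_natCast_atTop_atTop
  have hloglog : Tendsto (fun k : ℕ ↦ Real.log (Real.log k) / 8) atTop atTop :=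
    (Real.tendsto_log_atTop.comp hlog).atTop_div_const (by norm_num)
  have hinv : Tendsto (fun k : ℕ ↦ (Real.log k ^ (1 / 8 : ℝ))⁻¹ * ∑' i, normalMajorant δ i) atTop
      (nhds 0) := by
    simpa using (((tendsto_rpow_atTop (by norm_num)).comp hlog).inv_tendsto_atTop).mul_const _
  obtain ⟨s, hs⟩ :=
    summable_iff_vanishing_norm.1 (summable_normalMajorant hδ₀ hδ₂) (τ / 2) (half_pos hτ)
  filter_upwards [hinv.eventually (ge_mem_nhds (half_pos hτ)),
    (eventually_all_finset s).2 fun i _ ↦ hloglog.eventually_ge_atTop ((i + 1 : ℕ) : ℝ)]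
    with k hkτ hsk n m S hn hS h
  exact ⟨componentFrequency_nonneg, fun _ ↦ componentFrequency_eq_zero, sum_componentFrequency hn,
    h.sum_abs_componentFrequency_sub_le hS hδ₀ hδ₂
      (fun t ht ↦ (le_abs_self _).trans (hs t ht).le) hsk hkτ⟩

end DeltaNormal

section Moments

theorem sum_succ_mul_geometricWeight (N : ℕ) :
    ∑ i ∈ range (N + 1), ((i : ℝ) + 1) * geometricWeight i = 3 - (2 * N + 6) / 2 ^ (N + 1) := by
  induction N with
  | zero =>
    simp only [zero_add, range_one, sum_singleton, geometricWeight, if_true]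
    norm_num
  | succ N ih =>
    rw [sum_range_succ, ih, geometricWeight, if_neg N.succ_ne_zero, div_pow, one_pow,
      pow_succ (2 : ℝ) (N + 1)]
    push_cast
    field_simp
    ring

theorem sum_succ_mul_geometricWeight_le (N : ℕ) :
    ∑ i ∈ range N, ((i : ℝ) + 1) * geometricWeight i ≤ 3 := by
  cases N with
  | zero => simp
  | succ N =>
    rw [sum_succ_mul_geometricWeight]
    exact sub_le_self _ (by positivity)

variable {L : ℕ} {p : ℕ → ℝ} {r τ K : ℝ}

theorem IsNearGeometric.tolerance_nonneg (hp : IsNearGeometric L p r τ) : 0 ≤ τ := by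
  simpa using hp.dist_le 0

theorem IsNearGeometric.mono {τ' : ℝ} (hp : IsNearGeometric L p r τ) (h : τ ≤ τ') :
    IsNearGeometric L p r τ' :=
  { hp with dist_le := fun N ↦ (hp.dist_le N).trans h }

theorem IsNearGeometric.sum_mul_succ_le (hp : IsNearGeometric L p r τ) (hK₀ : 0 ≤ K)
    (hK : ∀ j : ℕ, (j : ℝ) ≤ K * r ^ j) :
    ∑ i : Fin L, p i * ((i : ℕ) + 1) ≤ 3 + K * τ := by
  rw [Fin.sum_univ_eq_sum_range fun i ↦ p i * ((i : ℝ) + 1)]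
  calc _ ≤ ∑ i ∈ range L, (((i : ℝ) + 1) * geometricWeight i +
        K * (|p i - geometricWeight i| * r ^ (i + 1))) := by
        refine sum_le_sum fun i _ ↦ ?_
        have hj := mul_le_mul_of_nonneg_left (hK (i + 1)) (abs_nonneg (p i - geometricWeight i))
        have habs := mul_le_mul_of_nonneg_left (le_abs_self (p i - geometricWeight i))
          (by positivity : (0 : ℝ) ≤ i + 1)
        push_cast at hj
        linarith
    _ ≤ 3 + K * τ := by
        rw [sum_add_distrib, ← mul_sum]
        gcongr
        exacts [sum_succ_mul_geometricWeight_le L, hp.dist_le L]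

theorem IsNearGeometric.sum_mul_sq_le (hp : IsNearGeometric L p r τ) (hr₀ : 0 ≤ r) (hr : r < 2)
    (hK₀ : 0 ≤ K) (hK : ∀ j : ℕ, (j : ℝ) ^ 2 ≤ K * r ^ j) :
    ∑ i : Fin L, p i * ((i : ℕ) + 1) ^ 2 ≤ K * (τ + 2 * r / (2 - r)) := by
  refine le_trans ?_ (mul_le_mul_of_nonneg_left (hp.sum_mul_pow_le hr₀ hr) hK₀)
  rw [mul_sum]
  refine sum_le_sum fun i _ ↦ ?_
  have := mul_le_mul_of_nonneg_left (hK (i + 1)) (hp.nonneg i)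
  push_cast at this
  linarith

end Moments

section ComponentProfileBounds

variable {n : ℕ} {S : SimpleGraph (Fin n)} {r τ : ℝ}

theorem card_connectedComponent_le : Nat.card S.ConnectedComponent ≤ n := by
  simpa using Nat.card_le_card_of_surjective S.connectedComponentMk Quot.mk_surjective

theorem componentProfile_maxComponentCard_ne_zero (hn : 0 < n) :
    componentProfile (maxComponentCard S) S ≠ 0 := by
  obtain ⟨i, -, hi⟩ := exists_componentProfile_maxComponentCard_ne_zero (S := S) hn
  exact fun h ↦ hi (by rw [h, Finsupp.coe_zero, Pi.zero_apply])

theorem sum_componentFrequency_mul_succ (hn : 0 < n) :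
    ∑ i : Fin (maxComponentCard S), componentFrequency S i * ((i : ℕ) + 1) =
      (n : ℝ) / Nat.card S.ConnectedComponent := by
  have hdeg := degree_componentProfile (S := S) ncard_supp_le_maxComponentCard
  rw [sum_mul_succ_eq_vertexCount_div (componentProfile_maxComponentCard_ne_zero hn) fun i ↦ ?_,
    vertexCount_componentProfile ncard_supp_le_maxComponentCard, hdeg]
  rw [hdeg, componentProfile_eq_mul_componentFrequency hn]

theorem sum_componentProfile_mul_le {L : ℕ} {w : Fin L → ℝ} {C : ℝ} (hn : 0 < n) (hC : 0 ≤ C)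
    (h : ∑ i : Fin L, componentFrequency S i * w i ≤ C) :
    ∑ i : Fin L, (componentProfile L S i : ℝ) * w i ≤ C * n := by
  simp only [componentProfile_eq_mul_componentFrequency hn, mul_assoc, ← mul_sum]
  calc _ ≤ (Nat.card S.ConnectedComponent : ℝ) * C := by gcongr
    _ ≤ n * C := by
      gcongr
      exact card_connectedComponent_le
    _ = C * n := mul_comm _ _

theorem exists_componentProfile_bounds (hr₁ : 1 < r) (hr₂ : r < 2) :
    ∃ K, 3 ≤ K ∧ ∀ (n : ℕ) (S : SimpleGraph (Fin n)) (τ : ℝ), 0 < n → τ ≤ 1 →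
      IsNearGeometric (maxComponentCard S) (componentFrequency S) r τ →
        (n : ℝ) / Nat.card S.ConnectedComponent ≤ 3 + K * τ ∧
        ∑ i, (componentProfile (maxComponentCard S) S i : ℝ) * ((i : ℕ) + 1) ^ 2 ≤ K * n ∧
        r ^ maxComponentCard S ≤ K * n := by
  obtain ⟨A, hA₀, hA⟩ := exists_pow_mul_pow_le 1 zero_le_one hr₁
  obtain ⟨B, hB₀, hB⟩ := exists_pow_mul_pow_le 2 zero_le_one hr₁
  simp only [pow_one, one_pow, mul_one] at hA hB
  have hr₀ : 0 ≤ r := by linarith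
  have hC₀ : 0 ≤ 2 * r / (2 - r) := div_nonneg (by linarith) (by linarith)
  set C := 1 + 2 * r / (2 - r)
  have hBC : 0 ≤ B * C := by positivity
  refine ⟨3 + A + B * C + C, by linarith, fun n S τ hn hτ hp ↦ ?_⟩
  have hτC : τ + 2 * r / (2 - r) ≤ C := by linarith
  refine ⟨?_, ?_, ?_⟩
  · rw [← sum_componentFrequency_mul_succ hn]
    refine (hp.sum_mul_succ_le hA₀.le hA).trans ?_
    have := hp.tolerance_nonneg
    gcongr
    linarith
  · refine (sum_componentProfile_mul_le hn hBC
      ((hp.sum_mul_sq_le hr₀ hr₂ hB₀.le hB).trans (mul_le_mul_of_nonneg_left hτC hB₀.le))).trans ?_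
    gcongr
    linarith
  · obtain ⟨i, hi, hi₀⟩ := exists_componentProfile_maxComponentCard_ne_zero (S := S) hn
    calc r ^ maxComponentCard S
        ≤ componentProfile (maxComponentCard S) S i * r ^ ((i : ℕ) + 1) := by
          rw [hi]
          exact le_mul_of_one_le_left (by positivity)
            (Nat.one_le_cast.2 (Nat.one_le_iff_ne_zero.2 hi₀))
      _ ≤ ∑ i, (componentProfile (maxComponentCard S) S i : ℝ) * r ^ ((i : ℕ) + 1) :=
          single_le_sum (f := fun i ↦ (componentProfile (maxComponentCard S) S i : ℝ) *
            r ^ ((i : ℕ) + 1)) (fun _ _ ↦ by positivity) (mem_univ i)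
      _ ≤ C * n := sum_componentProfile_mul_le hn (by positivity)
          ((hp.sum_mul_pow_le hr₀ hr₂).trans hτC)
      _ ≤ _ := by
          gcongr
          linarith

end ComponentProfileBounds

/-! ### Choice of the parameters -/

section Asymptotics

open Filter Topology

theorem tendsto_log_mul_mul_rpow_neg {K e : ℝ} (hK : 0 < K) (he : 0 < e) :
    Tendsto (fun n : ℕ ↦ Real.log (K * n) * (n : ℝ) ^ (-e)) atTop (𝓝 0) := by
  have hpow : Tendsto (fun x : ℝ ↦ x ^ (-e)) atTop (𝓝 0) := tendsto_rpow_neg_atTop he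
  have hlog : Tendsto (fun x : ℝ ↦ Real.log x / x ^ e) atTop (𝓝 0) :=
    (isLittleO_log_rpow_atTop he).tendsto_div_nhds_zero
  have hsum := ((hpow.const_mul (Real.log K)).add hlog).comp tendsto_natCast_atTop_atTop
  rw [mul_zero, add_zero] at hsum
  refine hsum.congr' ?_
  filter_upwards [eventually_gt_atTop 0] with n hn
  have hn' : (0 : ℝ) < n := Nat.cast_pos.2 hn
  rw [Function.comp_apply, Real.log_mul hK.ne' hn'.ne', Real.rpow_neg hn'.le]
  ring

theorem isLittleO_log_mul_sq {K : ℝ} (hK : 0 < K) :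
    (fun n : ℕ ↦ Real.log (K * n) ^ 2) =o[atTop] fun n : ℕ ↦ (n : ℝ) := by
  have hmul : Tendsto (fun n : ℕ ↦ K * n) atTop atTop :=
    tendsto_natCast_atTop_atTop.const_mul_atTop hK
  exact (Real.isLittleO_pow_log_id_atTop.comp_tendsto hmul).trans_isBigO
    ((Asymptotics.isBigO_refl _ _).const_mul_left K)

theorem tendsto_pow_mul_exp_log_sq {a K : ℝ} (C : ℝ) (ha₀ : 0 < a) (ha₁ : a < 1) (hK : 0 < K) :
    Tendsto (fun n : ℕ ↦ a ^ n * Real.exp (C * Real.log (K * n) ^ 2)) atTop (𝓝 0) := by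
  have hlog : Real.log a < 0 := Real.log_neg ha₀ ha₁
  have hsmall := ((isLittleO_log_mul_sq hK).const_mul_left C).bound (c := -Real.log a / 2)
    (by linarith)
  have hexp : Tendsto (fun n : ℕ ↦ Real.exp (Real.log a / 2 * n)) atTop (𝓝 0) :=
    Real.tendsto_exp_atBot.comp
      (tendsto_natCast_atTop_atTop.const_mul_atTop_of_neg (by linarith))
  refine squeeze_zero' (.of_forall fun n ↦ by positivity) ?_ hexp
  filter_upwards [hsmall] with n hn
  rw [Real.norm_eq_abs, Real.norm_natCast] at hn
  rw [← Real.exp_log ha₀, ← Real.exp_nat_mul, ← Real.exp_add, Real.exp_le_exp, Real.log_exp]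
  linarith [le_abs_self (C * Real.log (K * n) ^ 2)]

theorem tendsto_const_add_mul_pow {a : ℝ} (C : ℝ) (ha₀ : 0 ≤ a) (ha₁ : a < 1) :
    Tendsto (fun k : ℕ ↦ (C + k) * a ^ k) atTop (𝓝 0) := by
  have := ((tendsto_pow_atTop_nhds_zero_of_lt_one ha₀ ha₁).const_mul C).add
    (tendsto_self_mul_const_pow_of_lt_one ha₀ ha₁)
  simpa only [add_mul, mul_zero, add_zero] using this

theorem half_le_log_of_le {x : ℝ} (hx : 1.99 ≤ x) : 1 / 2 ≤ Real.log x := by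
  have hsq : Real.exp (1 / 2) ^ 2 = Real.exp 1 := by
    rw [← Real.exp_nat_mul]
    norm_num
  rw [Real.le_log_iff_exp_le (by linarith)]
  refine le_trans (abs_le_of_sq_le_sq' ?_ (by norm_num)).2 hx
  rw [hsq]
  linarith [Real.exp_one_lt_d9]

theorem le_two_mul_log_of_pow_le {x y : ℝ} {L : ℕ} (hx : 1.99 ≤ x) (h : x ^ L ≤ y) :
    L ≤ 2 * Real.log y := by
  have hlog := Real.log_le_log (by positivity) h
  rw [Real.log_pow] at hlog
  linarith [mul_le_mul_of_nonneg_left (half_le_log_of_le hx) (Nat.cast_nonneg (α := ℝ) L)]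

end Asymptotics

section CycleFactorBound

variable {n k m : ℕ} {S : SimpleGraph (Fin n)} {a ρ r K τ : ℝ}

theorem natSqrt_add_one_le_four_mul_sqrt (hn : 0 < n) (hnm : (n : ℝ) / m ≤ 4) (hm : 0 < m) :
    ((n.sqrt + 1 : ℕ) : ℝ) ≤ 4 * √m := by
  have hm' : (0 : ℝ) < m := Nat.cast_pos.2 hm
  have hn' : 1 ≤ √(n : ℝ) := Real.one_le_sqrt.2 (Nat.one_le_cast.2 hn)
  have hsqrt : √(n : ℝ) ≤ 2 * √m := by
    rw [Real.sqrt_le_left (by positivity), mul_pow, Real.sq_sqrt hm'.le]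
    linarith [(div_le_iff₀ hm').1 hnm]
  push_cast
  linarith [Real.nat_sqrt_le_real_sqrt (a := n)]

theorem NS_le_of_spectralDichotomy (hS : PathsGraph S m) (hn : 0 < n) (hk : 0 < k) (hkn : k ∣ n)
    (h : SpectralDichotomy (fun i : Fin (maxComponentCard S) ↦ componentFrequency S i)
      (a ^ 2) (ρ * a ^ 2))
    (ha₀ : 0 < a) (ha₁ : a ≤ 1) (hL : maxComponentCard S * a ^ k ≤ 1) (hρ₀ : 0 ≤ ρ) (hρ₁ : ρ ≤ 1)
    (hx : n * (maxComponentCard S * ρ ^ k) ≤ 1) (hnm : (n : ℝ) / m ≤ 4) (hK : 0 ≤ K)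
    (hT : ∑ i, (componentProfile (maxComponentCard S) S i : ℝ) * ((i : ℕ) + 1) ^ 2 ≤ K * n) :
    (NS k S : ℝ) ≤ 2 ^ m * (m.factorial * (n / m +
      (2 * a ^ n * (Real.exp 1 * √n) ^ maxComponentCard S +
        12 * Real.exp (144 * K) * (n * (maxComponentCard S * ρ ^ k)) *
          1.95 ^ maxComponentCard S))) := by
  set L := maxComponentCard S
  have hdeg : (componentProfile L S).degree = m :=
    (degree_componentProfile ncard_supp_le_maxComponentCard).trans hS.1
  have hm : 0 < m := hS.1 ▸ card_connectedComponent_pos hn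
  have hm' : 1 ≤ √(m : ℝ) := Real.one_le_sqrt.2 (Nat.one_le_cast.2 hm)
  have hG : (n : ℝ) ≤ ((n.sqrt + 1 : ℕ) : ℝ) ^ 2 := by
    exact_mod_cast (Nat.lt_succ_sqrt' n).le
  have hcoeff := h.prod_factorial_mul_coeff_le hk hkn hn ha₀ ha₁ hL hρ₀ hρ₁ hx
    (componentProfile_maxComponentCard_ne_zero hn)
    (vertexCount_componentProfile ncard_supp_le_maxComponentCard)
    (fun i ↦ by rw [hdeg, ← hS.1, componentProfile_eq_mul_componentFrequency hn])
    n.sqrt.succ_pos (hT.trans (mul_le_mul_of_nonneg_left hG hK))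
  rw [hdeg] at hcoeff
  calc (NS k S : ℝ) ≤ 2 ^ m * ((∏ i, ((componentProfile L S i).factorial : ℝ)) *
        (MvPolynomial.coeff (componentProfile L S) (closedWalkPoly L k ^ (n / k)) : ℕ)) := by
        exact_mod_cast NS_le_coeff_closedWalkPoly_pow hk hS ncard_supp_le_maxComponentCard
    _ ≤ _ := by
        refine mul_le_mul_of_nonneg_left (hcoeff.trans ?_) (by positivity)
        rw [add_div]
        gcongr ?_ * (_ + (?_ + ?_))
        · exact div_le_self (by positivity) hm'
        · rw [div_le_iff₀ (by positivity)]
          calc _ ≤ 3 * (n * (L * ρ ^ k)) * Real.exp (144 * K) * (4 * √m) * 1.95 ^ L := by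
                gcongr
                exact natSqrt_add_one_le_four_mul_sqrt hn hnm hm
            _ = _ := by ring

theorem exp_one_mul_sqrt_pow_le {L : ℕ} (hn : 0 < n) (hK : 3 ≤ K)
    (hL : L ≤ 2 * Real.log (K * n)) :
    (Real.exp 1 * √n) ^ L ≤ Real.exp (2 * Real.log (K * n) ^ 2) := by
  have hn' : (1 : ℝ) ≤ n := Nat.one_le_cast.2 hn
  have hKn : 1 ≤ K * n := by nlinarith
  have hbase : Real.exp 1 * √n ≤ K * n := by
    gcongr
    · linarith [Real.exp_one_lt_d9]
    · exact (Real.sqrt_le_left (Nat.cast_nonneg n)).2 (le_self_pow₀ hn' two_ne_zero)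
  calc (Real.exp 1 * √n) ^ L ≤ (K * n) ^ L := by gcongr
    _ = Real.exp (L * Real.log (K * n)) := by
      rw [Real.exp_nat_mul, Real.exp_log (by positivity)]
    _ ≤ _ := by
      rw [Real.exp_le_exp, sq, ← mul_assoc]
      exact mul_le_mul_of_nonneg_right hL (Real.log_nonneg hKn)

/-- The relative error, for the paths of a graph whose largest component has `O(log n)` vertices,
in replacing `n / k` cycles of length `k` by a single cycle of length `n`. -/
noncomputable def cycleFactorError (a ρ K : ℝ) (n k : ℕ) : ℝ :=
  2 * (a ^ n * Real.exp (2 * Real.log (K * n) ^ 2)) +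
    24 * Real.exp (144 * K) * K * (Real.log (K * n) * (n ^ 2 * ρ ^ k))

theorem exists_NS_le_of_isNearGeometric (hr₁ : 1.99 ≤ r) (hr₂ : r < 2) (hρ : 1 < r * ρ)
    (hρ₀ : 0 < ρ) (hρ₁ : ρ < 1) :
    ∃ a, 0 < a ∧ a < 1 ∧ ∃ K, 1 ≤ K ∧ ∃ τ₀ > 0, ∀ (n k m : ℕ) (S : SimpleGraph (Fin n)),
      0 < n → 0 < k → k ∣ n → PathsGraph S m → 2 * Real.log (K * n) * a ^ k ≤ 1 →
        2 * Real.log (K * n) * (n * ρ ^ k) ≤ 1 → ∀ τ ≤ τ₀,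
          IsNearGeometric (maxComponentCard S) (componentFrequency S) r τ →
            (NS k S : ℝ) ≤ 2 ^ m * (m.factorial * (3 + K * τ + cycleFactorError a ρ K n k)) := by
  obtain ⟨a, ha₀, ha₁, τ₁, hτ₁, hdich⟩ := exists_spectralDichotomy hr₂ hρ hρ₀ hρ₁
  obtain ⟨K, hK, hbounds⟩ := exists_componentProfile_bounds (by linarith) hr₂
  have hK₀ : 0 < K := by linarith
  refine ⟨a, ha₀, ha₁, K, by linarith, min τ₁ K⁻¹, lt_min hτ₁ (by positivity),
    fun n k m S hn hk hkn hS hak hρk τ hτ hp ↦ ?_⟩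
  have hKτ : K * τ ≤ 1 := (le_inv_mul_iff₀ hK₀).1 (by simpa using hτ.trans (min_le_right _ _))
  obtain ⟨hmean, hT, hmax⟩ := hbounds n S τ hn (by nlinarith [hp.tolerance_nonneg]) hp
  rw [hS.1] at hmean
  have hL := le_two_mul_log_of_pow_le hr₁ hmax
  refine (NS_le_of_spectralDichotomy hS hn hk hkn
    (hdich _ _ (hp.mono (hτ.trans (min_le_left _ _)))) ha₀ ha₁.le
    (le_trans (by gcongr) hak) hρ₀.le hρ₁.le (le_trans ?_ hρk) (by linarith) hK₀.le hT).trans ?_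
  · rw [mul_left_comm]
    gcongr
  have hlog : 0 ≤ Real.log (K * n) := by linarith
  have hpow : (1.95 : ℝ) ^ maxComponentCard S ≤ K * n :=
    (pow_le_pow_left₀ (by norm_num) (by linarith) _).trans hmax
  rw [cycleFactorError]
  gcongr 2 ^ m * (_ * (?_ + (?_ + ?_)))
  · rw [mul_assoc]
    gcongr
    exact exp_one_mul_sqrt_pow_le hn hK hL
  · calc _ ≤ 12 * Real.exp (144 * K) * (n * (2 * Real.log (K * n) * ρ ^ k)) * (K * n) := by gcongr
      _ = _ := by ring

end CycleFactorBound

section Parameters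

open Filter Topology

variable {a c e ε ρ K x : ℝ}

theorem rpow_neg_pow_le_of_mul_logb_le {n k : ℕ} (hn : 0 < n) (ha : 0 ≤ a)
    (hk : c * Real.logb 2 n ≤ k) : ((2 : ℝ) ^ (-a)) ^ k ≤ (n : ℝ) ^ (-(a * c)) :=
  calc ((2 : ℝ) ^ (-a)) ^ k = 2 ^ (-a * k) := by rw [Real.rpow_mul_natCast zero_le_two]
    _ ≤ 2 ^ (Real.logb 2 n * -(a * c)) := by
        refine Real.rpow_le_rpow_of_exponent_le one_le_two ?_
        linarith [mul_le_mul_of_nonneg_left hk ha]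
    _ = (n : ℝ) ^ (-(a * c)) := by
        rw [Real.rpow_mul zero_le_two,
          Real.rpow_logb two_pos (by norm_num) (Nat.cast_pos.2 hn)]

theorem exists_sq_mul_pow_le_rpow_neg (hε : 0 < ε) :
    ∃ ρ : ℝ, 1 / 2 < ρ ∧ ρ < 1 ∧ ∃ e > (0 : ℝ), ∀ n k : ℕ, 0 < n →
      (2 + ε) * Real.logb 2 n ≤ k → (n : ℝ) ^ 2 * ρ ^ k ≤ (n : ℝ) ^ (-e) := by
  set a := (2 + ε / 2) / (2 + ε) with ha
  have ha₀ : 0 < a := by positivity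
  have ha₁ : a < 1 := by
    rw [ha, div_lt_one (by positivity)]
    linarith
  have hac : a * (2 + ε) = 2 + ε / 2 := div_mul_cancel₀ _ (by positivity)
  refine ⟨(2 : ℝ) ^ (-a), ?_, Real.rpow_lt_one_of_one_lt_of_neg one_lt_two (neg_lt_zero.2 ha₀),
    ε / 2, half_pos hε, fun n k hn hk ↦ ?_⟩
  · rw [one_div, ← Real.rpow_neg_one]
    exact Real.rpow_lt_rpow_of_exponent_lt one_lt_two (neg_lt_neg ha₁)
  · calc (n : ℝ) ^ 2 * ((2 : ℝ) ^ (-a)) ^ k ≤ n ^ 2 * (n : ℝ) ^ (-(2 + ε / 2)) := by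
          rw [← hac]
          gcongr
          exact rpow_neg_pow_le_of_mul_logb_le hn ha₀.le hk
      _ = (n : ℝ) ^ (-(ε / 2)) := by
          rw [← Real.rpow_natCast, ← Real.rpow_add (Nat.cast_pos.2 hn)]
          congr 1
          push_cast
          ring

theorem exists_one_lt_two_sub_mul (hρ : 1 / 2 < ρ) (hρ₁ : ρ < 1) :
    ∃ δ > 0, δ ≤ 0.01 ∧ 1 < (2 - δ) * ρ := by
  have hδ : 0 < min 0.01 (ρ - 1 / 2) := lt_min (by norm_num) (sub_pos.2 hρ)
  refine ⟨_, hδ, min_le_left _ _, ?_⟩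
  nlinarith [min_le_right 0.01 (ρ - 1 / 2)]

theorem eventually_forall_of_mul_logb_le {P : ℕ → Prop} (hc : 0 < c)
    (h : ∀ᶠ k in atTop, P k) :
    ∀ᶠ n : ℕ in atTop, ∀ k : ℕ, c * Real.logb 2 n ≤ k → P k := by
  obtain ⟨k₀, hk₀⟩ := eventually_atTop.1 h
  have hlog : Tendsto (fun n : ℕ ↦ c * Real.logb 2 n) atTop atTop :=
    ((Real.tendsto_logb_atTop one_lt_two).comp tendsto_natCast_atTop_atTop).const_mul_atTop hc
  filter_upwards [hlog.eventually_ge_atTop (k₀ : ℝ)] with n hn k hk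
  exact hk₀ k (Nat.cast_le.1 (hn.trans hk))

theorem log_le_logb_two {y : ℝ} (hy : 1 ≤ y) : Real.log y ≤ Real.logb 2 y :=
  le_div_self (Real.log_nonneg hy) (Real.log_pos one_lt_two)
    (by linarith [Real.log_two_lt_d9])

theorem eventually_two_mul_log_mul_pow_le_one (ha₀ : 0 ≤ a) (ha₁ : a < 1) (hK : 0 < K)
    (hc : 2 ≤ c) :
    ∀ᶠ n : ℕ in atTop, ∀ k : ℕ, c * Real.logb 2 n ≤ k →
      2 * Real.log (K * n) * a ^ k ≤ 1 := by
  have hpow := (tendsto_const_add_mul_pow (2 * Real.log K) ha₀ ha₁).eventually_le_const zero_lt_one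
  filter_upwards [eventually_forall_of_mul_logb_le (by linarith) hpow, eventually_gt_atTop 0]
    with n hn hn₀ k hk
  have hn₁ : (1 : ℝ) ≤ n := Nat.one_le_cast.2 hn₀
  have hlog := log_le_logb_two hn₁
  refine le_trans ?_ (hn k hk)
  rw [Real.log_mul hK.ne' (by positivity)]
  gcongr
  nlinarith [Real.log_nonneg hn₁]

theorem eventually_two_mul_log_mul_mul_pow_le_one (hK : 1 ≤ K) (he : 0 < e) (hρ : 0 ≤ ρ) :
    ∀ᶠ n : ℕ in atTop, ∀ k : ℕ, (n : ℝ) ^ 2 * ρ ^ k ≤ (n : ℝ) ^ (-e) →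
      2 * Real.log (K * n) * (n * ρ ^ k) ≤ 1 := by
  filter_upwards [(tendsto_log_mul_mul_rpow_neg (one_pos.trans_le hK) he).eventually_le_const
    one_half_pos, eventually_gt_atTop 0] with n hn hn₀ k hk
  have hn₁ : (1 : ℝ) ≤ n := Nat.one_le_cast.2 hn₀
  have hlog : 0 ≤ Real.log (K * n) := Real.log_nonneg (by nlinarith)
  have hnk : n * ρ ^ k ≤ (n : ℝ) ^ (-e) :=
    le_trans (by gcongr; exact le_self_pow₀ hn₁ two_ne_zero) hk
  linarith [mul_le_mul_of_nonneg_left hnk hlog]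

theorem eventually_cycleFactorError_le (ha₀ : 0 < a) (ha₁ : a < 1) (hK : 1 ≤ K) (he : 0 < e)
    (hx : 0 < x) :
    ∀ᶠ n : ℕ in atTop, ∀ k : ℕ, (n : ℝ) ^ 2 * ρ ^ k ≤ (n : ℝ) ^ (-e) →
      cycleFactorError a ρ K n k ≤ x := by
  have hK₀ : 0 < K := one_pos.trans_le hK
  have hlim := ((tendsto_pow_mul_exp_log_sq 2 ha₀ ha₁ hK₀).const_mul 2).add
    ((tendsto_log_mul_mul_rpow_neg hK₀ he).const_mul (24 * Real.exp (144 * K) * K))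
  rw [mul_zero, mul_zero, add_zero] at hlim
  filter_upwards [hlim.eventually_le_const hx, eventually_gt_atTop 0] with n hn hn₀ k hk
  have hn₁ : (1 : ℝ) ≤ n := Nat.one_le_cast.2 hn₀
  have hlog : 0 ≤ Real.log (K * n) := Real.log_nonneg (by nlinarith)
  refine le_trans ?_ hn
  rw [cycleFactorError]
  gcongr

end Parameters

/-- For every `ε > 0` there is `δ ∈ (0,1)` such that for every `ε′ > 0` and all
sufficiently large `n`: for every divisor `k ≥ (2+ε)·log₂ n` of `n` and every `δ`-normal
union of `m` nontrivial paths `S` on `{1,…,n}`, one has `N(S) ≤ (3+ε′)·m!·2^m`. -/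
theorem stmt12 (ε : ℝ) (hε : 0 < ε) :
    ∃ δ : ℝ, 0 < δ ∧ δ < 1 ∧ ∀ ε' : ℝ, 0 < ε' → ∃ N : ℕ, ∀ n : ℕ, N ≤ n →
      ∀ k : ℕ, k ∣ n → (2 + ε) * Real.logb 2 n ≤ (k : ℝ) →
        ∀ (m : ℕ) (S : SimpleGraph (Fin n)), PathsGraph S m → GDeltaNormal k δ S m →
          (NS k S : ℝ) ≤ (3 + ε') * (m.factorial : ℝ) * 2 ^ m := by
  obtain ⟨ρ, hρ, hρ₁, e, he, hdecay⟩ := exists_sq_mul_pow_le_rpow_neg hε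
  obtain ⟨δ, hδ₀, hδ₁, hδρ⟩ := exists_one_lt_two_sub_mul hρ hρ₁
  refine ⟨δ, hδ₀, by linarith, fun ε' hε' ↦ Filter.eventually_atTop.1 ?_⟩
  have hρ₀ : 0 < ρ := by linarith
  obtain ⟨a, ha₀, ha₁, K, hK, τ₀, hτ₀, hNS⟩ :=
    exists_NS_le_of_isNearGeometric (by linarith) (sub_lt_self 2 hδ₀) hδρ hρ₀ hρ₁
  have hK₀ : 0 < K := one_pos.trans_le hK
  have hτ : 0 < min τ₀ (ε' / 2 / K) := lt_min hτ₀ (by positivity)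
  have hKτ : K * min τ₀ (ε' / 2 / K) ≤ ε' / 2 := (le_div_iff₀' hK₀).1 (min_le_right _ _)
  have hnormal := eventually_isNearGeometric_componentFrequency hδ₀ (by linarith) hτ
  filter_upwards [Filter.eventually_gt_atTop 0,
    eventually_forall_of_mul_logb_le (add_pos two_pos hε)
      (hnormal.and (Filter.eventually_gt_atTop 0)),
    eventually_two_mul_log_mul_pow_le_one ha₀.le ha₁ hK₀ (le_add_of_nonneg_right hε.le),
    eventually_two_mul_log_mul_mul_pow_le_one hK he hρ₀.le,
    eventually_cycleFactorError_le ha₀ ha₁ hK he (half_pos hε')]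
    with n hn hk hak hρk herror k hkn hkε m S hS hSδ
  have hdecayk := hdecay n k hn hkε
  calc (NS k S : ℝ) ≤ _ := hNS n k m S hn (hk k hkε).2 hkn hS (hak k hkε) (hρk k hdecayk)
        _ (min_le_left _ _) ((hk k hkε).1 n m S hn hS hSδ)
    _ ≤ 2 ^ m * (m.factorial * (3 + ε' / 2 + ε' / 2)) := by
        gcongr
        exact herror k hdecayk
    _ = _ := by ring
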